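/- arXiv:2312.14116 — 7 statements merged into one kernel-verified Lean document; each statement's English description precedes it below -/
import Mathlib

section
/- Let K be a field and I a nonzero ideal of K[x,y] with reduced minimal lexicographic Gröbner basis G = (g_0,…,g_s) (for x ≺ y) and associated detaching sequence (A_i). Then for every n ≥ n_0, the detaching basis (A_{n_s},…,A_n) of I in degree n is itself a (in general non-minimal) Gröbner basis of I for the lexicographic order x ≺ y. -/
noncomputable section

open Polynomial

/-- Bivariate polynomials `k[x][y]`: the inner `X` is `x`, the outer `X` is `y`. -/
abbrev Biv (k : Type*) [CommRing k] : Type _ := Polynomial (Polynomial k)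

variable {k : Type*} [CommRing k]

/-- The leading monomial of `f`, as the pair (y-exponent, x-exponent), for the
lexicographic order induced by `x ≺ y`. -/
def lmon (f : Biv k) : ℕ × ℕ := (f.natDegree, f.leadingCoeff.natDegree)

/-- Divisibility of monomials: `x^{p.2} y^{p.1}` divides `x^{q.2} y^{q.1}`. -/
def monDvd (p q : ℕ × ℕ) : Prop := p.1 ≤ q.1 ∧ p.2 ≤ q.2

/-- Lexicographic comparison of monomials, `y`-exponent first. -/
def monLt (p q : ℕ × ℕ) : Prop := p.1 < q.1 ∨ (p.1 = q.1 ∧ p.2 < q.2)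

/-- The monomial `x^{m.2} y^{m.1}` occurs in `f` (has a nonzero coefficient). -/
def occursIn (f : Biv k) (m : ℕ × ℕ) : Prop := (f.coeff m.1).coeff m.2 ≠ 0

/-- `G` is a Gröbner basis of `I` for the lexicographic order with `x ≺ y`:
its elements are nonzero elements of `I`, and the leading monomial of any nonzero
element of `I` is divisible by the leading monomial of some element of `G`. -/
def IsGB (G : List (Biv k)) (I : Ideal (Biv k)) : Prop :=
  (∀ g ∈ G, g ≠ 0 ∧ g ∈ I) ∧
  ∀ f ∈ I, f ≠ 0 → ∃ g ∈ G, monDvd (lmon g) (lmon f)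

/-- `f` is monic w.r.t. lex `x ≺ y`: the coefficient of its leading monomial is `1`. -/
def lexMonic (f : Biv k) : Prop := f.leadingCoeff.Monic

/-- `g 0, …, g s` is the reduced minimal lexicographic Gröbner basis of `I`,
listed in decreasing order of leading monomials. -/
def IsReducedGB {s : ℕ} (g : Fin (s + 1) → Biv k) (I : Ideal (Biv k)) : Prop :=
  IsGB (List.ofFn g) I ∧
  (∀ j, lexMonic (g j)) ∧
  (∀ j l, j ≠ l → ∀ m : ℕ × ℕ, occursIn (g j) m → ¬ monDvd (lmon (g l)) m) ∧
  (∀ j l : Fin (s + 1), j < l → monLt (lmon (g l)) (lmon (g j)))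

/-- Every monomial of `f` of `y`-degree `< i` is reduced w.r.t. the family `g`. -/
def reducedBelow {s : ℕ} (g : Fin (s + 1) → Biv k) (i : ℕ) (f : Biv k) : Prop :=
  ∀ m : ℕ × ℕ, m.1 < i → occursIn f m → ∀ j, ¬ monDvd (lmon (g j)) m

/-- `A` is the detaching sequence associated to the reduced Gröbner basis `g` of `I`:
`A i = 0` for `i < n_s`, `A (n_j) = g j`, and otherwise `A i` is obtained from
`y * A (i-1)` by reducing the terms of `y`-degree `< i` modulo `g`
(so `A i - y * A (i-1)` lies in `I` and has `y`-degree `< i`, and the part of `A i`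
of `y`-degree `< i` is reduced w.r.t. `g`). -/
def IsDetachingSeq {s : ℕ} (g : Fin (s + 1) → Biv k) (I : Ideal (Biv k))
    (A : ℕ → Biv k) : Prop :=
  (∀ i, i < (g (Fin.last s)).natDegree → A i = 0) ∧
  (∀ j, A ((g j).natDegree) = g j) ∧
  (∀ i, (g (Fin.last s)).natDegree ≤ i → (∀ j, (g j).natDegree ≠ i) →
    (A i - Polynomial.X * A (i - 1)) ∈ I ∧
    (A i - Polynomial.X * A (i - 1)).degree < (i : WithBot ℕ) ∧
    reducedBelow g i (A i))

/-- For a nonzero ideal `I` of `K[x,y]` with reduced minimal lexicographic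
Gröbner basis `g = (g_0, …, g_s)` (for `x ≺ y`) and associated detaching sequence `A`,
for every `n ≥ n_0` the detaching basis `(A_{n_s}, …, A_n)` of `I` in degree `n` is
itself a (in general non-minimal) Gröbner basis of `I` for lex `x ≺ y`. -/
theorem detaching_basis_isGB {K : Type*} [Field K] {s : ℕ}
    (I : Ideal (Biv K)) (hI : I ≠ ⊥)
    (g : Fin (s + 1) → Biv K) (hg : IsReducedGB g I)
    (A : ℕ → Biv K) (hA : IsDetachingSeq g I A)
    (n : ℕ) (hn : (g 0).natDegree ≤ n) :
    IsGB (List.ofFn fun j : Fin (n - (g (Fin.last s)).natDegree + 1) =>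
      A ((g (Fin.last s)).natDegree + (j : ℕ))) I := by
  obtain ⟨⟨hG1, hG2⟩, hmon, hred, hord⟩ := hg
  obtain ⟨hA0, hA1, hA2⟩ := hA
  have hlt : ∀ j l : Fin (s + 1), j ≤ l → (g l).natDegree ≤ (g j).natDegree := by
    intro j l hjl
    rcases hjl.lt_or_eq with h | h
    · rcases hord j l h with h | h
      · exact h.le
      · exact h.1.le
    · rw [h]
  have hgI : ∀ j, g j ≠ 0 ∧ g j ∈ I := fun j => hG1 (g j) (List.mem_ofFn.2 ⟨j, rfl⟩)
  have key : ∀ t : ℕ, A ((g (Fin.last s)).natDegree + t) ≠ 0 ∧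
      A ((g (Fin.last s)).natDegree + t) ∈ I ∧
      (A ((g (Fin.last s)).natDegree + t)).natDegree = (g (Fin.last s)).natDegree + t := by
    intro t
    induction t with
    | zero =>
      rw [Nat.add_zero, hA1]
      exact ⟨(hgI _).1, (hgI _).2, rfl⟩
    | succ t ih =>
      by_cases h : ∃ j, (g j).natDegree = (g (Fin.last s)).natDegree + (t + 1)
      · obtain ⟨j, hj⟩ := h
        rw [← hj, hA1]
        exact ⟨(hgI _).1, (hgI _).2, rfl⟩
      · push Not at h
        obtain ⟨h1, h2, -⟩ := hA2 _ (Nat.le_add_right _ (t + 1)) h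
        rw [← Nat.add_assoc] at h1 h2 ⊢
        rw [Nat.add_sub_cancel] at h1 h2
        generalize (g (Fin.last s)).natDegree + t = i at *
        obtain ⟨i1, i2, i3⟩ := ih
        have e : A (i + 1) = (A (i + 1) - Polynomial.X * A i) + Polynomial.X * A i := by ring
        have hd : (Polynomial.X * A i).degree = ((i + 1 : ℕ) : WithBot ℕ) := by
          rw [Polynomial.degree_eq_natDegree (mul_ne_zero Polynomial.X_ne_zero i1),
            Polynomial.natDegree_X_mul i1, i3]
        have hd' : (A (i + 1)).degree = ((i + 1 : ℕ) : WithBot ℕ) := by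
          rw [e, Polynomial.degree_add_eq_right_of_degree_lt (by rw [hd]; exact h2), hd]
        refine ⟨?_, ?_, Polynomial.natDegree_eq_of_degree_eq_some hd'⟩
        · intro h0
          rw [h0, Polynomial.degree_zero] at hd'
          exact WithBot.bot_ne_coe hd'
        · rw [e]
          exact I.add_mem h1 (I.mul_mem_left _ i2)
  refine ⟨?_, ?_⟩
  · intro f hf
    rw [List.mem_ofFn] at hf
    obtain ⟨j, rfl⟩ := hf
    exact ⟨(key j).1, (key j).2.1⟩
  · intro f hf hf0
    obtain ⟨p, hp, hd⟩ := hG2 f hf hf0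
    rw [List.mem_ofFn] at hp
    obtain ⟨j, rfl⟩ := hp
    refine ⟨g j, ?_, hd⟩
    rw [List.mem_ofFn]
    have a := hlt 0 j (Fin.zero_le j)
    have b := hlt j (Fin.last s) (Fin.le_last j)
    refine ⟨⟨(g j).natDegree - (g (Fin.last s)).natDegree, by omega⟩, ?_⟩
    simp only [Nat.add_sub_cancel' b]
    exact hA1 j
end
end

section
/- Let K be a field, g ∈ K[x] monic of positive degree, and f ∈ K[x] with deg(f) < deg(g), and let I be the ideal of K[x,y] generated by y − f(x) and g(x), whose reduced minimal lexicographic Gröbner basis (for x ≺ y) is (y − f, g). Then the associated detaching sequence satisfies A_0 = g, A_1 = y − f, and A_i = y^i − (f^i mod g) for all i ≥ 2, where f^i mod g denotes the remainder of the Euclidean division of f^i by g in K[x]. -/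
noncomputable section

open Polynomial

variable {k : Type*} [CommRing k]

/-- if `g ∈ K[x]` is monic of positive degree, `f ∈ K[x]` has degree
`< deg g`, and `I = ⟨y - f, g⟩` has `(y - f, g)` as its reduced minimal lexicographic
Gröbner basis, then the associated detaching sequence satisfies `A 0 = g`,
`A 1 = y - f` and `A i = y^i - (f^i mod g)` for all `i ≥ 2`. -/
theorem detaching_seq_of_pair {K : Type*} [Field K]
    (g f : Polynomial K) (hg : g.Monic) (hgd : 0 < g.natDegree)
    (hfd : f.degree < g.degree)
    (I : Ideal (Biv K))
    (hI : I = Ideal.span {(Polynomial.X : Biv K) - Polynomial.C f, Polynomial.C g})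
    (hGB : IsReducedGB (s := 1)
      ![(Polynomial.X : Biv K) - Polynomial.C f, Polynomial.C g] I)
    (A : ℕ → Biv K)
    (hA : IsDetachingSeq (s := 1)
      ![(Polynomial.X : Biv K) - Polynomial.C f, Polynomial.C g] I A) :
    A 0 = Polynomial.C g ∧
    A 1 = (Polynomial.X : Biv K) - Polynomial.C f ∧
    ∀ i, 2 ≤ i → A i = (Polynomial.X : Biv K) ^ i - Polynomial.C (f ^ i %ₘ g) := by
  obtain ⟨-, h2, h3⟩ := hA
  have hd1 : ((X : Biv K) - C f).natDegree = 1 := natDegree_X_sub_C f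
  have hA0 : A 0 = C g := by simpa using h2 1
  have hA1 : A 1 = (X : Biv K) - C f := by
    have := h2 0
    simpa [hd1] using this
  have hmem : ∀ p ∈ I, g ∣ p.eval f := by
    intro p hp
    rw [hI, Ideal.mem_span_pair] at hp
    obtain ⟨a, b, rfl⟩ := hp
    simp
  have key : ∀ i, 1 ≤ i → A i = (X : Biv K) ^ i - C (f ^ i %ₘ g) := by
    intro i hi
    induction i, hi using Nat.le_induction with
    | base => rw [hA1, pow_one, pow_one, (modByMonic_eq_self_iff hg).2 hfd]
    | succ i hi ih =>
      obtain ⟨hm, hdeg, hred⟩ := h3 (i + 1) (by simp) (by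
        intro j
        fin_cases j
        · simp only [Fin.zero_eta, Matrix.cons_val_zero, hd1]; omega
        · simp)
      rw [Nat.add_sub_cancel] at hm hdeg
      have hco : ∀ n, i + 1 ≤ n → (A (i + 1)).coeff n = (X * A i).coeff n := by
        intro n hn
        have := coeff_eq_zero_of_degree_lt (lt_of_lt_of_le hdeg (by exact_mod_cast hn : ((i + 1 : ℕ) : WithBot ℕ) ≤ n))
        rwa [coeff_sub, sub_eq_zero] at this
      have hform : A (i + 1) = X ^ (i + 1) + C ((A (i + 1)).coeff 0) := by
        ext1 n
        rcases Nat.eq_zero_or_pos n with rfl | hn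
        · simp
        · rw [coeff_add, coeff_C_of_ne_zero hn.ne', add_zero, coeff_X_pow]
          by_cases hni : i + 1 ≤ n
          · rw [hco n hni, ih]
            obtain ⟨m, rfl⟩ : ∃ m, n = m + 1 := ⟨n - 1, by omega⟩
            rw [coeff_X_mul, coeff_sub, coeff_X_pow, coeff_C_of_ne_zero (by omega)]
            simp
          · rw [if_neg (by omega)]
            ext1 l
            by_contra hne
            refine hred (n, l) (by simpa using hni) hne 0 ?_
            simp only [monDvd, lmon, Matrix.cons_val_zero, hd1, leadingCoeff_X_sub_C, natDegree_one]
            exact ⟨hn, Nat.zero_le _⟩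
      have hc : ((A (i + 1)).coeff 0).degree < g.degree := by
        rw [degree_eq_natDegree hg.ne_zero, degree_lt_iff_coeff_zero]
        intro l hl
        by_contra hne
        refine hred (0, l) (by simp) hne 1 ?_
        simp only [monDvd, lmon, Matrix.cons_val_one, Matrix.cons_val_zero, Matrix.cons_val_fin_one, natDegree_C, leadingCoeff_C]
        exact ⟨le_rfl, by simpa using hl⟩
      have hdv := hmem _ hm
      generalize (A (i + 1)).coeff 0 = c at hform hc
      rw [hform, ih] at hdv
      simp only [eval_sub, eval_add, eval_mul, eval_pow, eval_X, eval_C] at hdv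
      have h4 : g ∣ f ^ i - f ^ i %ₘ g := by
        refine ⟨f ^ i /ₘ g, ?_⟩
        linear_combination -(modByMonic_add_div (f ^ i) g)
      have h5 : g ∣ f ^ (i + 1) + c := by
        have := dvd_add hdv (h4.mul_left f)
        simpa using this
      have h6 := (modByMonic_eq_zero_iff_dvd hg).2 h5
      rw [add_modByMonic, (modByMonic_eq_self_iff hg).2 hc] at h6
      rw [hform, eq_neg_of_add_eq_zero_right h6, C_neg, sub_eq_add_neg]
  exact ⟨hA0, hA1, fun i hi => key i (by omega)⟩
end
end

section
/- Let K be a field and f_1,…,f_t ∈ K[x,y] (t ≥ 2), all of y-degree at most d_y, and suppose the coefficient of y^{d_y} in f_t is a nonzero element of K. Then every f in the ideal ⟨f_1,…,f_t⟩ with deg_y(f) < 2·d_y can be written as f = w_1·f_1 + … + w_t·f_t with w_1,…,w_t ∈ K[x,y] all of y-degree strictly less than d_y. -/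
noncomputable section

open Polynomial

variable {k : Type*} [CommRing k]

/-- if `f_1, …, f_t ∈ K[x,y]` (`t ≥ 2`) all have `y`-degree at most `d_y`
and the coefficient of `y^{d_y}` in `f_t` is a nonzero element of `K`, then every `f`
in `⟨f_1, …, f_t⟩` with `deg_y f < 2 d_y` can be written as `f = w_1 f_1 + … + w_t f_t`
with all `w_i` of `y`-degree `< d_y`. -/
theorem low_degree_membership {K : Type*} [Field K] {t0 : ℕ}
    (f : Fin (t0 + 2) → Biv K) (dy : ℕ)
    (hdy : ∀ i, (f i).natDegree ≤ dy)
    (hc : ∃ c : K, c ≠ 0 ∧ (f (Fin.last (t0 + 1))).coeff dy = Polynomial.C c) :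
    ∀ h ∈ Ideal.span (Set.range f), h.degree < ((2 * dy : ℕ) : WithBot ℕ) →
      ∃ w : Fin (t0 + 2) → Biv K,
        (∀ i, (w i).degree < (dy : WithBot ℕ)) ∧ h = ∑ i, w i * f i := by
  classical
  obtain ⟨c, hc0, hc⟩ := hc
  intro h hh hdeg
  obtain ⟨a, rfl⟩ := (Ideal.mem_span_range_iff_exists_fun).1 hh
  rw [Fin.sum_univ_castSucc] at hdeg ⊢
  set g := f (Fin.last (t0 + 1)) with hg
  have hcu : (C (C c⁻¹) : Biv K) * C (C c) = 1 := by
    rw [← C_mul, ← C_mul, inv_mul_cancel₀ hc0, C_1, C_1]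
  have hm : (C (C c⁻¹) * g).Monic := by
    apply monic_of_natDegree_le_of_coeff_eq_one dy
    · exact (natDegree_C_mul_le _ _).trans (hdy _)
    · rw [coeff_C_mul, hc, ← C_mul, inv_mul_cancel₀ hc0, C_1]
  have hgdeg : (C (C c⁻¹) * g).degree ≤ dy :=
    degree_le_of_natDegree_le ((natDegree_C_mul_le _ _).trans (hdy _))
  have hgdeg' : g.degree = dy := by
    apply le_antisymm (degree_le_of_natDegree_le (hdy _))
    apply le_degree_of_ne_zero
    rw [hc]
    simpa using hc0
  set m := C (C c⁻¹) * g with hmdef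
  have hwlt : ∀ i, (a i %ₘ m).degree < (dy : WithBot ℕ) := fun i =>
    (degree_modByMonic_lt _ hm).trans_le hgdeg
  set wl : Biv K := a (Fin.last (t0 + 1)) +
    ∑ i : Fin (t0 + 1), C (C c⁻¹) * (a i.castSucc /ₘ m) * f i.castSucc with hwl
  clear_value m wl g
  have key : (∑ i : Fin (t0 + 1), a i.castSucc * f i.castSucc) + a (Fin.last (t0 + 1)) * g
      = (∑ i : Fin (t0 + 1), (a i.castSucc %ₘ m) * f i.castSucc) + wl * g := by
    rw [hwl, add_mul, Finset.sum_mul, add_comm (a (Fin.last (t0 + 1)) * g), ← add_assoc,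
      ← Finset.sum_add_distrib]
    congr 1
    refine Finset.sum_congr rfl fun i _ => ?_
    have e := modByMonic_add_div (a i.castSucc) m
    generalize a i.castSucc /ₘ m = q at *
    generalize a i.castSucc %ₘ m = r at *
    rw [← e, hmdef]
    ring
  have hS : (∑ i : Fin (t0 + 1), (a i.castSucc %ₘ m) * f i.castSucc).degree
      < ((2 * dy : ℕ) : WithBot ℕ) := by
    refine (degree_sum_le _ _).trans_lt ?_
    rw [Finset.sup_lt_iff (WithBot.bot_lt_coe _)]
    intro i _
    rw [degree_mul, two_mul, Nat.cast_add]
    refine (add_le_add_right (degree_le_of_natDegree_le (hdy _)) _).trans_lt ?_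
    exact WithBot.add_lt_add_right (by simp) (hwlt _)
  have hW : (wl * g).degree < ((2 * dy : ℕ) : WithBot ℕ) := by
    have e := eq_sub_of_add_eq' key.symm
    rw [e]
    exact (degree_sub_le _ _).trans_lt (max_lt hdeg hS)
  have hwld : wl.degree < (dy : WithBot ℕ) := by
    rw [degree_mul, hgdeg', two_mul, Nat.cast_add] at hW
    exact lt_of_add_lt_add_right hW
  refine ⟨Fin.lastCases wl (fun i => a i.castSucc %ₘ m), ?_, ?_⟩
  · intro i
    refine Fin.lastCases ?_ (fun i => ?_) i
    · simpa using hwld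
    · simpa using hwlt _
  · refine key.trans ?_
    symm
    rw [Fin.sum_univ_castSucc (n := t0 + 1)]
    simp only [Fin.lastCases_castSucc, Fin.lastCases_last, hg]
end
end

section
/- Let K be a field and F = (f_1,f_2) in K[x,y] of total degree at most d ≥ 1, generating an ideal I with finitely many common zeros over an algebraic closure of K. Then Δ(F) ≤ 2d′² + d′, where d′ = max(d,3). -/
noncomputable section

open Polynomial

variable {k : Type*} [CommRing k]

/-- The total degree of a bivariate polynomial `f ∈ k[x][y]`. -/
def totDeg {k : Type*} [CommRing k] (f : Biv k) : ℕ :=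
  f.support.sup fun j => j + (f.coeff j).natDegree

/-- Evaluation of `f ∈ K[x][y]` at a point `(a, b)` of the algebraic closure of `K`
(`a` is the value of `x`, `b` the value of `y`). -/
def aEval {K : Type*} [Field K] (a b : AlgebraicClosure K) (f : Biv K) :
    AlgebraicClosure K :=
  Polynomial.eval₂
    (Polynomial.eval₂RingHom (algebraMap K (AlgebraicClosure K)) a) b f

namespace DLT

/-- polynomials of total degree `< n` -/
def TT (L : Type*) [Field L] (n : ℕ) : Submodule L (Biv L) where
  carrier := {f | ∀ i j, n ≤ i + j → (f.coeff i).coeff j = 0}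
  add_mem' := by
    intro a b ha hb i j h
    simp [ha i j h, hb i j h]
  zero_mem' := by intro i j h; simp
  smul_mem' := by
    intro c f hf i j h
    simp [hf i j h]

section
variable {L : Type*} [Field L]

theorem mem_TT {n : ℕ} {f : Biv L} :
    f ∈ TT L n ↔ ∀ i j, n ≤ i + j → (f.coeff i).coeff j = 0 := Iff.rfl

theorem TT_mono {m n : ℕ} (h : m ≤ n) : TT L m ≤ TT L n :=
  fun _ hf i j hij => hf i j (h.trans hij)

theorem TT_zero {f : Biv L} (hf : f ∈ TT L 0) : f = 0 := by
  ext i j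
  simpa using hf i j (Nat.zero_le _)

theorem TT_mul {m n : ℕ} {f g : Biv L} (hf : f ∈ TT L m) (hg : g ∈ TT L (n + 1)) :
    f * g ∈ TT L (m + n) := by
  intro i j h
  rw [coeff_mul, finsetSum_coeff]
  refine Finset.sum_eq_zero fun p hp => ?_
  rw [coeff_mul]
  refine Finset.sum_eq_zero fun q hq => ?_
  rw [Finset.HasAntidiagonal.mem_antidiagonal] at hp hq
  by_cases h1 : m ≤ p.1 + q.1
  · rw [hf _ _ h1, zero_mul]
  · rw [hg p.2 q.2 (by omega), mul_zero]

theorem TT_exists (f : Biv L) : ∃ n, f ∈ TT L n := by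
  refine ⟨f.natDegree + 1 + f.support.sup (fun i => (f.coeff i).natDegree), ?_⟩
  intro i j h
  by_cases hi : i ∈ f.support
  · have : (f.coeff i).natDegree ≤ f.support.sup (fun i => (f.coeff i).natDegree) :=
      Finset.le_sup (f := fun i => (f.coeff i).natDegree) hi
    have h2 := le_natDegree_of_mem_supp i hi
    exact coeff_eq_zero_of_natDegree_lt (by omega)
  · simp [notMem_support_iff.mp hi]

/-- embedding of polynomials in `y` -/
def io : Polynomial L →+* Biv L := mapRingHom (C : L →+* Polynomial L)

theorem io_mem {n : ℕ} {q : Polynomial L} (hq : q ∈ degreeLT L n) : io q ∈ TT L n := by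
  intro i j h
  rw [mem_degreeLT] at hq
  simp only [io, coe_mapRingHom, coeff_map, coeff_C]
  split_ifs with hj
  · subst hj
    exact coeff_eq_zero_of_degree_lt (lt_of_lt_of_le hq (by exact_mod_cast h))
  · rfl

/-- restriction to the line `x = a y + c` -/
def ev (a c : L) : Biv L →+* Polynomial L :=
  eval₂RingHom (eval₂RingHom (C : L →+* Polynomial L) (C a * X + C c)) X

/-- the line -/
def el (a c : L) : Biv L := C X - (C (C a) * X + C (C c))

theorem ev_io (a c : L) (q : Polynomial L) : ev a c (io q) = q := by
  have : (ev a c).comp io = RingHom.id _ := by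
    ext
    · simp [ev, io]
    · simp [ev, io]
  exact congrArg (fun f => f q) this

theorem ev_el (a c : L) : ev a c (el a c) = 0 := by
  simp [ev, el]

theorem el_ne (a c : L) : el a c ≠ 0 := by
  intro h
  have := congrArg (fun f => (f.coeff 0).coeff 1) h
  simp [el, coeff_C] at this

theorem CC_mem (c : L) (n : ℕ) : (C (C c) : Biv L) ∈ TT L (n + 1) := by
  intro i j h
  rw [coeff_C]
  split_ifs with hi
  · rw [coeff_C]
    split_ifs with hj
    · omega
    · rfl
  · simp

theorem Y_mem : (X : Biv L) ∈ TT L 2 := by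
  intro i j h
  rw [coeff_X]
  split_ifs with hi
  · rw [coeff_one]
    split_ifs with hj
    · omega
    · rfl
  · simp

theorem CX_mem : (C X : Biv L) ∈ TT L 2 := by
  intro i j h
  rw [coeff_C]
  split_ifs with hi
  · rw [coeff_X]
    split_ifs with hj
    · omega
    · rfl
  · simp

theorem el_mem (a c : L) : el a c ∈ TT L 2 := by
  refine Submodule.sub_mem _ CX_mem (Submodule.add_mem _ ?_ (CC_mem c 1))
  exact TT_mul (m := 1) (n := 1) (CC_mem a 0) Y_mem

theorem el_mul_mem (a c : L) {n : ℕ} {h : Biv L} (hh : h ∈ TT L n) :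
    el a c * h ∈ TT L (n + 1) := by
  rw [mul_comm]; exact TT_mul hh (el_mem a c)

theorem decomp {n : ℕ} {f : Biv L} (hf : f ∈ TT L (n + 1)) :
    ∃ (e : L) (f1 f2 : Biv L), f1 ∈ TT L n ∧ f2 ∈ TT L n ∧
      f = C (C e) + X * f1 + C X * f2 := by
  refine ⟨(f.coeff 0).coeff 0, divX f, C (divX (f.coeff 0)), ?_, ?_, ?_⟩
  · intro i j h
    rw [coeff_divX]
    exact hf _ _ (by omega)
  · intro i j h
    rw [coeff_C]
    split_ifs with hi
    · rw [coeff_divX]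
      exact hf _ _ (by omega)
    · simp
  · conv_lhs => rw [← X_mul_divX_add f]
    conv_lhs => rw [← X_mul_divX_add (f.coeff 0)]
    simp only [map_add, map_mul]
    ring

theorem X_mul_degLT {n : ℕ} {q : Polynomial L} (u v : L) (hq : q ∈ degreeLT L n) :
    (C u * X + C v) * q ∈ degreeLT L (n + 1) := by
  rw [mem_degreeLT] at *
  by_cases h0 : q = 0
  · simp only [h0, mul_zero, degree_zero]
    exact WithBot.bot_lt_coe _
  · calc _ ≤ (C u * X + C v).degree + q.degree := degree_mul_le _ _
      _ ≤ 1 + q.degree := by gcongr; exact degree_linear_le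
      _ < _ := by
        rw [degree_eq_natDegree h0] at *
        norm_cast at *
        omega

theorem division (a c : L) : ∀ (n : ℕ) (f : Biv L), f ∈ TT L (n + 1) →
    ∃ q ∈ degreeLT L (n + 1), ∃ h ∈ TT L n, f = io q + el a c * h := by
  intro n
  induction n with
  | zero =>
    intro f hf
    obtain ⟨e, f1, f2, h1, h2, rfl⟩ := decomp hf
    refine ⟨C e, ?_, 0, Submodule.zero_mem _, ?_⟩
    · rw [mem_degreeLT]
      exact lt_of_le_of_lt degree_C_le (by norm_num)
    · rw [TT_zero h1, TT_zero h2]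
      simp [io]
  | succ n ih =>
    intro f hf
    obtain ⟨e, f1, f2, h1, h2, rfl⟩ := decomp hf
    obtain ⟨q1, hq1, g1, hg1, rfl⟩ := ih f1 h1
    obtain ⟨q2, hq2, g2, hg2, rfl⟩ := ih f2 h2
    refine ⟨C e + X * q1 + (C a * X + C c) * q2, ?_, X * g1 + io q2 + C X * g2, ?_, ?_⟩
    · refine Submodule.add_mem _ (Submodule.add_mem _ ?_ ?_) (X_mul_degLT a c hq2)
      · rw [mem_degreeLT]
        exact lt_of_le_of_lt degree_C_le (by norm_cast; omega)
      · simpa using X_mul_degLT 1 0 hq1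
    · refine Submodule.add_mem _ (Submodule.add_mem _ ?_ (io_mem hq2)) ?_
      · rw [mul_comm]; exact TT_mul hg1 Y_mem
      · rw [mul_comm]; exact TT_mul hg2 CX_mem
    · simp only [io, map_add, map_mul, coe_mapRingHom, map_C, map_X, el]
      ring

theorem ev_deg (a c : L) {n : ℕ} {f : Biv L} (hf : f ∈ TT L n) : ev a c f ∈ degreeLT L n := by
  cases n with
  | zero => rw [TT_zero hf, map_zero]; exact Submodule.zero_mem _
  | succ n =>
    obtain ⟨q, hq, h, hh, rfl⟩ := division a c n f hf
    simpa [ev_io, ev_el] using hq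

theorem div_of_ev (a c : L) {n : ℕ} {f : Biv L} (hf : f ∈ TT L (n + 1)) (h0 : ev a c f = 0) :
    ∃ h ∈ TT L n, f = el a c * h := by
  obtain ⟨q, hq, h, hh, rfl⟩ := division a c n f hf
  refine ⟨h, hh, ?_⟩
  simp only [map_add, map_mul, ev_io, ev_el, zero_mul, add_zero] at h0
  simp [h0]

/-- dimension of `TT` -/
theorem finrank_TT (n : ℕ) : Module.Finite L (TT L n) ∧ Module.Free L (TT L n) ∧
    2 * Module.finrank L (TT L n) = n * (n + 1) := by
  induction n with
  | zero =>
    have : TT L 0 = ⊥ := by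
      rw [eq_bot_iff]
      intro f hf
      exact TT_zero hf
    rw [this]
    exact ⟨inferInstance, inferInstance, by simp⟩
  | succ n ih =>
    obtain ⟨i1, i3, i2⟩ := ih
    let φ : (degreeLT L (n + 1) × TT L n) →ₗ[L] TT L (n + 1) :=
      { toFun := fun p => ⟨io p.1.1 + el 0 0 * p.2.1,
          Submodule.add_mem _ (io_mem p.1.2) (el_mul_mem 0 0 p.2.2)⟩
        map_add' := by
          intro p q
          ext1
          simp only [Prod.fst_add, Prod.snd_add, Submodule.coe_add, map_add]
          ring
        map_smul' := by
          intro r p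
          ext1
          simp only [Prod.smul_fst, Prod.smul_snd, SetLike.val_smul, RingHom.id_apply, smul_add,
            mul_smul_comm]
          congr 1
          ext i
          simp [io, coeff_C]  }
    have hinj : Function.Injective φ := by
      rw [injective_iff_map_eq_zero]
      rintro ⟨⟨q, hq⟩, ⟨h, hh⟩⟩ h0
      have h1 : io q + el 0 0 * h = 0 := congrArg Subtype.val h0
      have h2 := congrArg (ev 0 0) h1
      simp only [map_add, map_mul, ev_io, ev_el, zero_mul, add_zero, map_zero] at h2
      subst h2
      simp only [map_zero, zero_add, mul_eq_zero, el_ne, false_or] at h1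
      subst h1
      rfl
    have hsurj : Function.Surjective φ := by
      rintro ⟨f, hf⟩
      obtain ⟨q, hq, h, hh, rfl⟩ := division 0 0 n f hf
      exact ⟨⟨⟨q, hq⟩, ⟨h, hh⟩⟩, rfl⟩
    let e := LinearEquiv.ofBijective φ ⟨hinj, hsurj⟩
    let e0 := degreeLTEquiv L (n + 1)
    have : Module.Free L (degreeLT L (n + 1)) := Module.Free.of_equiv e0.symm
    have : Module.Finite L (degreeLT L (n + 1)) := Module.Finite.equiv e0.symm
    refine ⟨Module.Finite.equiv e, Module.Free.of_equiv e, ?_⟩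
    rw [← e.finrank_eq, Module.finrank_prod, e0.finrank_eq]
    simp only [Module.finrank_fin_fun]
    nlinarith

end

section
variable {L : Type*} [Field L]

/-- combinations with cofactors of total degree `< m` -/
def VV (F G : Biv L) (m : ℕ) : Submodule L (Biv L) where
  carrier := {P | ∃ u ∈ TT L m, ∃ v ∈ TT L m, P = u * F + v * G}
  add_mem' := by
    rintro _ _ ⟨u, hu, v, hv, rfl⟩ ⟨u', hu', v', hv', rfl⟩
    exact ⟨u + u', Submodule.add_mem _ hu hu', v + v', Submodule.add_mem _ hv hv', by ring⟩
  zero_mem' := ⟨0, Submodule.zero_mem _, 0, Submodule.zero_mem _, by ring⟩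
  smul_mem' := by
    rintro r _ ⟨u, hu, v, hv, rfl⟩
    exact ⟨r • u, Submodule.smul_mem _ r hu, r • v, Submodule.smul_mem _ r hv, by
      simp only [smul_add, smul_mul_assoc]⟩

theorem mem_VV {F G : Biv L} {m : ℕ} {P : Biv L} :
    P ∈ VV F G m ↔ ∃ u ∈ TT L m, ∃ v ∈ TT L m, P = u * F + v * G := Iff.rfl

theorem VV_mono {F G : Biv L} {m n : ℕ} (h : m ≤ n) : VV F G m ≤ VV F G n := by
  rintro _ ⟨u, hu, v, hv, rfl⟩
  exact ⟨u, TT_mono h hu, v, TT_mono h hv, rfl⟩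

variable {F G : Biv L} {d : ℕ} {a c : L}

theorem el_mul_VV {m : ℕ} {P : Biv L} (hP : P ∈ VV F G m) : el a c * P ∈ VV F G (m + 1) := by
  obtain ⟨u, hu, v, hv, rfl⟩ := hP
  exact ⟨_, el_mul_mem a c hu, _, el_mul_mem a c hv, by ring⟩

theorem el_pow_mul_VV {m : ℕ} {P : Biv L} (hP : P ∈ VV F G m) (r : ℕ) :
    el a c ^ r * P ∈ VV F G (m + r) := by
  induction r with
  | zero => simpa using hP
  | succ r ih =>
    have := el_mul_VV (a := a) (c := c) ih
    rw [pow_succ', mul_assoc]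
    exact this

theorem el_pow_mul_TT {m : ℕ} {P : Biv L} (hP : P ∈ TT L m) (r : ℕ) :
    el a c ^ r * P ∈ TT L (m + r) := by
  induction r with
  | zero => simpa using hP
  | succ r ih =>
    have := el_mul_mem a c ih
    rw [pow_succ', mul_assoc]
    exact this

/-- key: quotient of a pair with vanishing combination on the line -/
theorem key (hF : F ∈ TT L (d + 1)) (hG : G ∈ TT L (d + 1))
    (hd : (ev a c F).natDegree = d) (h0 : ev a c F ≠ 0)
    (hco : IsCoprime (ev a c F) (ev a c G)) {m : ℕ} {u v : Biv L}
    (hu : u ∈ TT L (m + 1)) (hv : v ∈ TT L (m + 1)) (h : ev a c (u * F + v * G) = 0) :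
    ∃ q : Polynomial L, (m < d → q = 0) ∧ ∃ u' ∈ TT L m, ∃ v' ∈ TT L m,
      u = - io q * G + el a c * u' ∧ v = io q * F + el a c * v' := by
  rw [map_add, map_mul, map_mul] at h
  have hdvd : ev a c F ∣ ev a c v := by
    apply hco.dvd_of_dvd_mul_right
    exact ⟨- ev a c u, by linear_combination h⟩
  obtain ⟨q, hq⟩ := hdvd
  have hu2 : ev a c u = - q * ev a c G := by
    apply mul_right_cancel₀ h0
    rw [hq] at h
    linear_combination h
  have hqd : q = 0 ∨ q ≠ 0 ∧ d + q.natDegree ≤ m := by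
    by_cases hq0 : q = 0
    · exact Or.inl hq0
    · right
      refine ⟨hq0, ?_⟩
      have h1 := ev_deg a c hv
      rw [mem_degreeLT, hq, degree_eq_natDegree (mul_ne_zero h0 hq0), natDegree_mul h0 hq0, hd] at h1
      have : d + q.natDegree < m + 1 := by exact_mod_cast h1
      omega
  have hmem : ∀ H ∈ TT L (d + 1), io q * H ∈ TT L (m + 1) := by
    intro H hH
    rcases hqd with rfl | ⟨hq0, hq1⟩
    · simp
    · have : io q ∈ TT L (q.natDegree + 1) := by
        apply io_mem
        rw [mem_degreeLT]
        exact lt_of_le_of_lt degree_le_natDegree (by norm_cast; omega)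
      exact TT_mono (by omega) (TT_mul this hH)
  obtain ⟨u', hu', e1⟩ := div_of_ev a c (f := u + io q * G)
    (Submodule.add_mem _ hu (hmem G hG)) (by
      rw [map_add, map_mul, ev_io, hu2]; ring)
  obtain ⟨v', hv', e2⟩ := div_of_ev a c (f := v - io q * F)
    (Submodule.sub_mem _ hv (hmem F hF)) (by
      rw [map_sub, map_mul, ev_io, hq]; ring)
  refine ⟨q, ?_, u', hu', v', hv', by linear_combination e1, by linear_combination e2⟩
  intro hm
  rcases hqd with h | h
  · exact h
  · omega

theorem cancel (hF : F ∈ TT L (d + 1)) (hG : G ∈ TT L (d + 1))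
    (hd : (ev a c F).natDegree = d) (h0 : ev a c F ≠ 0)
    (hco : IsCoprime (ev a c F) (ev a c G)) {m : ℕ} {P : Biv L}
    (hP : el a c * P ∈ VV F G (m + 1)) : P ∈ VV F G m := by
  obtain ⟨u, hu, v, hv, e⟩ := hP
  obtain ⟨q, -, u', hu', v', hv', rfl, rfl⟩ := key hF hG hd h0 hco hu hv (by
    rw [← e, map_mul, ev_el, zero_mul])
  refine ⟨u', hu', v', hv', ?_⟩
  apply mul_left_cancel₀ (el_ne a c)
  rw [e]; ring

theorem cancel_pow (hF : F ∈ TT L (d + 1)) (hG : G ∈ TT L (d + 1))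
    (hd : (ev a c F).natDegree = d) (h0 : ev a c F ≠ 0)
    (hco : IsCoprime (ev a c F) (ev a c G)) {m : ℕ} {P : Biv L} (r : ℕ)
    (hP : el a c ^ r * P ∈ VV F G (m + r)) : P ∈ VV F G m := by
  induction r with
  | zero => simpa using hP
  | succ r ih =>
    apply ih
    apply cancel hF hG hd h0 hco
    rw [← mul_assoc, ← pow_succ']
    exact hP

theorem no_syz (hF : F ∈ TT L (d + 1)) (hG : G ∈ TT L (d + 1))
    (hd : (ev a c F).natDegree = d) (h0 : ev a c F ≠ 0)
    (hco : IsCoprime (ev a c F) (ev a c G)) : ∀ (m : ℕ), m ≤ d → ∀ u ∈ TT L m, ∀ v ∈ TT L m,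
    u * F + v * G = 0 → u = 0 ∧ v = 0 := by
  intro m
  induction m with
  | zero => intro _ u hu v hv _; exact ⟨TT_zero hu, TT_zero hv⟩
  | succ m ih =>
    intro hm u hu v hv h
    obtain ⟨q, hq, u', hu', v', hv', rfl, rfl⟩ := key hF hG hd h0 hco hu hv (by rw [h, map_zero])
    rw [hq (by omega)] at h ⊢
    have := ih (by omega) u' hu' v' hv' (by
      apply mul_left_cancel₀ (el_ne a c)
      simp only [map_zero] at h
      linear_combination h)
    simp [this.1, this.2]

theorem VV_le (hF : F ∈ TT L (d + 1)) (hG : G ∈ TT L (d + 1)) (m : ℕ) :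
    VV F G m ≤ TT L (m + d) := by
  rintro _ ⟨u, hu, v, hv, rfl⟩
  exact Submodule.add_mem _ (TT_mul hu hF) (TT_mul hv hG)

theorem finrank_VV (hF : F ∈ TT L (d + 1)) (hG : G ∈ TT L (d + 1))
    (hd : (ev a c F).natDegree = d) (h0 : ev a c F ≠ 0)
    (hco : IsCoprime (ev a c F) (ev a c G)) (m : ℕ) (hm : m ≤ d) :
    Module.finrank L (VV F G m) = m * (m + 1) := by
  let φ : (TT L m × TT L m) →ₗ[L] VV F G m :=
    { toFun := fun p => ⟨p.1.1 * F + p.2.1 * G, p.1.1, p.1.2, p.2.1, p.2.2, rfl⟩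
      map_add' := by
        intro p q
        ext1
        simp only [Prod.fst_add, Prod.snd_add, Submodule.coe_add]
        ring
      map_smul' := by
        intro r p
        ext1
        simp only [Prod.smul_fst, Prod.smul_snd, SetLike.val_smul, RingHom.id_apply, smul_add,
            smul_mul_assoc] }
  have hinj : Function.Injective φ := by
    rw [injective_iff_map_eq_zero]
    rintro ⟨⟨u, hu⟩, ⟨v, hv⟩⟩ h
    have h1 : u * F + v * G = 0 := congrArg Subtype.val h
    obtain ⟨rfl, rfl⟩ := no_syz hF hG hd h0 hco m hm u hu v hv h1
    rfl
  have hsurj : Function.Surjective φ := by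
    rintro ⟨f, u, hu, v, hv, rfl⟩
    exact ⟨⟨⟨u, hu⟩, ⟨v, hv⟩⟩, rfl⟩
  let e := LinearEquiv.ofBijective φ ⟨hinj, hsurj⟩
  obtain ⟨i1, i3, i2⟩ := finrank_TT (L := L) m
  rw [← e.finrank_eq, Module.finrank_prod]
  omega

theorem base (hF : F ∈ TT L (d + 1)) (hG : G ∈ TT L (d + 1))
    (hd : (ev a c F).natDegree = d) (h0 : ev a c F ≠ 0)
    (hco : IsCoprime (ev a c F) (ev a c G)) :
    ∃ W : Submodule L (Biv L), Module.Finite L W ∧ Module.finrank L W ≤ d ^ 2 ∧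
      TT L (d - 1 + d) ≤ VV F G (d - 1) ⊔ W := by
  obtain ⟨W, hW1, hW2⟩ := IsModularLattice.exists_disjoint_and_sup_eq
    (VV_le hF hG (d - 1))
  have hle : W ≤ TT L (d - 1 + d) := hW2 ▸ le_sup_right
  obtain ⟨i1, i3, i2⟩ := finrank_TT (L := L) (d - 1 + d)
  have hf : Module.Finite L W := Submodule.finiteDimensional_of_le hle
  have hfV : Module.Finite L (VV F G (d - 1)) := Submodule.finiteDimensional_of_le
    (VV_le hF hG (d - 1))
  refine ⟨W, hf, ?_, hW2.ge⟩
  have h1 := Submodule.finrank_sup_add_finrank_inf_eq (VV F G (d - 1)) W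
  rw [hW2, hW1.eq_bot, finrank_bot, finrank_VV hF hG hd h0 hco _ (Nat.sub_le _ _)] at h1
  rcases d with _ | d
  · simp only [Nat.zero_sub, Nat.zero_add, Nat.add_zero] at *
    omega
  · simp only [Nat.add_sub_cancel] at *
    nlinarith

theorem step (hF : F ∈ TT L (d + 1)) (hG : G ∈ TT L (d + 1))
    (hd : (ev a c F).natDegree = d) (h0 : ev a c F ≠ 0)
    (hco : IsCoprime (ev a c F) (ev a c G)) {m : ℕ} (hm : d ≤ m + 1) {h : Biv L}
    (hh : h ∈ TT L (m + d + 1)) : ∃ p ∈ VV F G (m + 1), ∃ h' ∈ TT L (m + d),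
      h = p + el a c * h' := by
  have hdeg := ev_deg a c hh
  -- Bezout on the line
  obtain ⟨r, t, hrt⟩ := hco
  set f := ev a c F with hf
  set g := ev a c G with hg
  set p := ev a c h with hp
  set v := (p * t) % f with hv
  set u := p * r + (p * t) / f * g with hu
  have e1 : u * f + v * g = p := by
    have := EuclideanDomain.div_add_mod (p * t) f
    rw [← hv] at this
    rw [hu]
    linear_combination p * hrt + g * this
  have hvd : v.degree < d := by
    rw [← hd, ← degree_eq_natDegree h0]
    exact EuclideanDomain.mod_lt _ h0
  have hvm : v ∈ degreeLT L (m + 1) := by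
    rw [mem_degreeLT]
    exact lt_of_lt_of_le hvd (by exact_mod_cast hm)
  have hgd : g.degree < (d + 1 : ℕ) := by
    have := ev_deg a c hG
    rwa [mem_degreeLT] at this
  have hud : u ∈ degreeLT L (m + 1) := by
    rw [mem_degreeLT]
    by_cases hu0 : u = 0
    · rw [hu0, degree_zero]; exact WithBot.bot_lt_coe _
    have h2 : (u * f).degree < (m + d + 1 : ℕ) := by
      rw [eq_sub_of_add_eq e1]
      refine lt_of_le_of_lt (degree_sub_le _ _) (max_lt ?_ ?_)
      · rwa [mem_degreeLT] at hdeg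
      · by_cases hvg : v * g = 0
        · rw [hvg, degree_zero]; exact WithBot.bot_lt_coe _
        · have hv0 := left_ne_zero_of_mul hvg
          have hg0 := right_ne_zero_of_mul hvg
          rw [degree_eq_natDegree hv0] at hvd
          rw [degree_eq_natDegree hg0] at hgd
          rw [degree_eq_natDegree hvg, natDegree_mul hv0 hg0]
          norm_cast at *
          omega
    rw [degree_eq_natDegree (mul_ne_zero hu0 h0), natDegree_mul hu0 h0, hd] at h2
    rw [degree_eq_natDegree hu0]
    norm_cast at *
    omega
  have hV : io u * F + io v * G ∈ VV F G (m + 1) :=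
    ⟨io u, io_mem hud, io v, io_mem hvm, rfl⟩
  have hV2 := VV_le hF hG _ hV
  obtain ⟨h', hh', e⟩ := div_of_ev a c (f := h - (io u * F + io v * G)) (n := m + d)
    (Submodule.sub_mem _ hh (TT_mono (by omega) hV2)) (by
      rw [map_sub, map_add, map_mul, map_mul, ev_io, ev_io, e1, sub_self])
  exact ⟨_, hV, h', hh', by linear_combination e⟩

theorem allW (hF : F ∈ TT L (d + 1)) (hG : G ∈ TT L (d + 1))
    (hd : (ev a c F).natDegree = d) (h0 : ev a c F ≠ 0)
    (hco : IsCoprime (ev a c F) (ev a c G)) (m : ℕ) (hm : d - 1 ≤ m) :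
    ∃ W : Submodule L (Biv L), Module.Finite L W ∧ Module.finrank L W ≤ d ^ 2 ∧
      TT L (m + d) ≤ VV F G m ⊔ W := by
  induction m, hm using Nat.le_induction with
  | base => exact base hF hG hd h0 hco
  | succ m hm ih =>
    obtain ⟨W, h1, h2, h3⟩ := ih
    refine ⟨W.map (LinearMap.mulLeft L (el a c)), inferInstance,
      (Submodule.finrank_map_le _ _).trans h2, ?_⟩
    intro h hh
    rw [add_right_comm] at hh
    obtain ⟨p, hp, h', hh', rfl⟩ := step hF hG hd h0 hco (by omega) hh
    obtain ⟨x, hx, w, hw, rfl⟩ := Submodule.mem_sup.mp (h3 hh')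
    rw [mul_add, ← add_assoc]
    refine Submodule.add_mem_sup (Submodule.add_mem _ hp (el_mul_VV hx)) ?_
    exact ⟨w, hw, rfl⟩

theorem card_le (hF : F ∈ TT L (d + 1)) (hG : G ∈ TT L (d + 1))
    (hd : (ev a c F).natDegree = d) (h0 : ev a c F ≠ 0)
    (hco : IsCoprime (ev a c F) (ev a c G)) (m : ℕ) (hm : d - 1 ≤ m)
    {ι : Type*} [Fintype ι] (v : ι → Biv L) (hv : ∀ i, v i ∈ TT L (m + d))
    (hli : ∀ b : ι → L, ∑ i, b i • v i ∈ VV F G m → ∀ i, b i = 0) :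
    Fintype.card ι ≤ d ^ 2 := by
  obtain ⟨W, h1, h2, h3⟩ := allW hF hG hd h0 hco m hm
  have hl : LinearIndependent L (fun i => (VV F G m).mkQ (v i)) := by
    rw [Fintype.linearIndependent_iff]
    intro b hb
    apply hli
    rw [← Submodule.Quotient.mk_eq_zero, ← Submodule.mkQ_apply, map_sum]
    simpa using hb
  have hs : Submodule.span L (Set.range fun i => (VV F G m).mkQ (v i)) ≤ W.map (VV F G m).mkQ := by
    rw [Submodule.span_le]
    rintro _ ⟨i, rfl⟩
    obtain ⟨x, hx, w, hw, e⟩ := Submodule.mem_sup.mp (h3 (hv i))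
    refine ⟨w, hw, ?_⟩
    simp only [← e, map_add]
    have : (VV F G m).mkQ x = 0 := by simpa using hx
    rw [this, zero_add]
  calc _ = _ := (finrank_span_eq_card hl).symm
    _ ≤ _ := Submodule.finrank_mono hs
    _ ≤ _ := Submodule.finrank_map_le _ _
    _ ≤ _ := h2

theorem bound (hF : F ∈ TT L (d + 1)) (hG : G ∈ TT L (d + 1))
    (hd : (ev a c F).natDegree = d) (h0 : ev a c F ≠ 0)
    (hco : IsCoprime (ev a c F) (ev a c G)) (n : ℕ) (P : Biv L) (hP : P ∈ TT L (n + d))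
    (hI : ∃ M, P ∈ VV F G M) : P ∈ VV F G (n + d ^ 2) := by
  classical
  have hex : ∃ E, P ∈ VV F G (n + E) := by
    obtain ⟨M, hM⟩ := hI
    exact ⟨M, VV_mono (by omega) hM⟩
  obtain ⟨E, hE, hmin⟩ : ∃ E, P ∈ VV F G (n + E) ∧ ∀ E' < E, P ∉ VV F G (n + E') :=
    ⟨Nat.find hex, Nat.find_spec hex, fun _ h => Nat.find_min hex h⟩
  by_contra hcon
  have hlt : d ^ 2 < E := by
    by_contra h
    exact hcon (VV_mono (by omega) hE)
  have hdd : d ≤ d ^ 2 := Nat.le_self_pow (by norm_num) d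
  obtain ⟨k, rfl⟩ : ∃ k, E = k + 1 := ⟨E - 1, by omega⟩
  have := card_le hF hG hd h0 hco (n + k) (by omega) (ι := Fin (k + 1))
    (fun i => el a c ^ (i : ℕ) * P) (fun i => TT_mono (by have := i.2; omega)
      (el_pow_mul_TT (a := a) (c := c) hP i)) ?_
  · simp at this; omega
  intro b hb
  by_contra hne
  push Not at hne
  obtain ⟨i0, hi0⟩ := hne
  obtain ⟨i1, hi1, hmax⟩ := Finset.exists_max_image (Finset.univ.filter fun i => b i ≠ 0) id
    ⟨i0, by simp [hi0]⟩
  simp only [Finset.mem_filter, Finset.mem_univ, true_and, id] at hi1 hmax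
  rw [← Finset.add_sum_erase _ _ (Finset.mem_univ i1)] at hb
  have hrest : ∑ i ∈ Finset.univ.erase i1, b i • (el a c ^ (i : ℕ) * P) ∈ VV F G (n + k + i1) := by
    refine Submodule.sum_mem _ fun i hi => ?_
    by_cases hbi : b i = 0
    · rw [hbi, zero_smul]; exact Submodule.zero_mem _
    · have h1 : i ≤ i1 := hmax i hbi
      have h2 : i ≠ i1 := (Finset.mem_erase.mp hi).1
      have h3 : (i : ℕ) < i1 := lt_of_le_of_ne h1 (fun h => h2 (Fin.ext h))
      exact Submodule.smul_mem _ _ (VV_mono (by omega) (el_pow_mul_VV (a := a) (c := c) hE i))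
  have hb' := VV_mono (F := F) (G := G) (show n + k ≤ n + k + i1 by omega) hb
  have h4 := (Submodule.add_mem_iff_left _ hrest).mp hb'
  have h5 := (Submodule.smul_mem_iff _ hi1).mp h4
  exact hmin k (by omega) (cancel_pow hF hG hd h0 hco i1 h5)

end

section
variable {L : Type*} [Field L]

theorem coeff_lin (a c : L) (n : ℕ) (p : Polynomial L) (hp : p.natDegree ≤ n) :
    (eval₂ (C : L →+* Polynomial L) (C a * X + C c) p).coeff n = p.coeff n * a ^ n := by
  have hlin : (C a * X + C c).natDegree ≤ 1 := natDegree_linear_le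
  rw [eval₂_eq_sum_range' _ (Nat.lt_succ_of_le hp), Finset.sum_range_succ, coeff_add,
    finsetSum_coeff, Finset.sum_eq_zero, zero_add, coeff_C_mul]
  · congr 1
    have := coeff_pow_of_natDegree_le (m := n) hlin
    simpa using this
  · intro j hj
    rw [Finset.mem_range] at hj
    have : ((C a * X + C c) ^ j).natDegree < n :=
      calc _ ≤ j * 1 := natDegree_pow_le_of_le j hlin
        _ < n := by omega
    rw [coeff_C_mul, coeff_eq_zero_of_natDegree_lt this, mul_zero]

theorem coeff_ev (a c : L) (d : ℕ) (F : Biv L) (hF : F ∈ TT L (d + 1)) :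
    (ev a c F).coeff d = ∑ i ∈ Finset.range (d + 1), (F.coeff i).coeff (d - i) * a ^ (d - i) := by
  have hn : F.natDegree < d + 1 := by
    rw [Nat.lt_succ_iff, natDegree_le_iff_coeff_eq_zero]
    intro N hN
    ext j
    rw [hF N j (by omega), coeff_zero]
  simp only [ev, coe_eval₂RingHom]
  rw [eval₂_eq_sum_range' _ hn, finsetSum_coeff]
  refine Finset.sum_congr rfl fun i hi => ?_
  rw [Finset.mem_range] at hi
  rw [coeff_mul_X_pow', if_pos (by omega), coe_eval₂RingHom, coeff_lin]
  rw [natDegree_le_iff_coeff_eq_zero]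
  intro N hN
  exact hF _ _ (by omega)

theorem exists_a [Infinite L] (d : ℕ) (F : Biv L) (hF : F ∈ TT L (d + 1)) (i j : ℕ) (hij : i + j = d)
    (h0 : (F.coeff i).coeff j ≠ 0) : ∃ a : L, ∀ c, (ev a c F).coeff d ≠ 0 := by
  let Q : Polynomial L := ∑ i ∈ Finset.range (d + 1), monomial (d - i) ((F.coeff i).coeff (d - i))
  have hQ : Q ≠ 0 := by
    intro h
    apply h0
    have h1 := congrArg (fun p => p.coeff j) h
    simp only [Q, finsetSum_coeff, coeff_monomial, coeff_zero] at h1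
    rw [Finset.sum_eq_single i] at h1
    · rw [if_pos (by omega)] at h1
      rwa [show d - i = j by omega] at h1
    · intro b hb hbi
      rw [Finset.mem_range] at hb
      rw [if_neg (by omega)]
    · intro hi
      exact absurd (Finset.mem_range.mpr (by omega)) hi
  obtain ⟨a, ha⟩ : ∃ a, Q.eval a ≠ 0 := by
    by_contra h
    push Not at h
    exact hQ (Polynomial.zero_of_eval_zero Q h)
  refine ⟨a, fun c => ?_⟩
  rw [coeff_ev a c d F hF]
  simpa [Q, eval_finsetSum] using ha

/-- coefficientwise application of an additive map -/
def cm {A B : Type*} [CommRing A] [CommRing B] (r : A →+ B) (p : Polynomial A) : Polynomial B :=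
  p.sum fun n a => monomial n (r a)

theorem coeff_cm {A B : Type*} [CommRing A] [CommRing B] (r : A →+ B) (p : Polynomial A) (n : ℕ) :
    (cm r p).coeff n = r (p.coeff n) := by
  rw [cm, sum_def, finsetSum_coeff]
  simp only [coeff_monomial]
  rw [Finset.sum_ite_eq' p.support n]
  split_ifs with h
  · rfl
  · rw [notMem_support_iff.mp h, map_zero]

/-- additive version -/
def cmHom {A B : Type*} [CommRing A] [CommRing B] (r : A →+ B) : Polynomial A →+ Polynomial B where
  toFun := cm r
  map_zero' := by ext n; simp [coeff_cm]
  map_add' := by intro p q; ext n; simp [coeff_cm]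

theorem coeff_cmHom {A B : Type*} [CommRing A] [CommRing B] (r : A →+ B) (p : Polynomial A) (n : ℕ) :
    (cmHom r p).coeff n = r (p.coeff n) := coeff_cm r p n

theorem cmHom_mul {A B : Type*} [CommRing A] [CommRing B] (r : A →+ B) (φ : B →+* A)
    (hr : ∀ x y, r (x * φ y) = r x * y) (p : Polynomial A) (q : Polynomial B) :
    cmHom r (p * q.map φ) = cmHom r p * q := by
  ext n
  simp only [coeff_cmHom, coeff_mul, coeff_map, map_sum, hr]

variable {K : Type*} [Field K] [Algebra K L]

/-- base change -/
def mp (K L : Type*) [Field K] [Field L] [Algebra K L] : Biv K →+* Biv L :=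
  mapRingHom (mapRingHom (algebraMap K L))

theorem coeff_mp (f : Biv K) (i j : ℕ) :
    ((mp K L f).coeff i).coeff j = algebraMap K L ((f.coeff i).coeff j) := by
  simp [mp]

theorem mp_mem {n : ℕ} {f : Biv K} (hf : f ∈ TT K n) : mp K L f ∈ TT L n := by
  intro i j h
  rw [coeff_mp, hf i j h, map_zero]

theorem exists_retr (K L : Type*) [Field K] [Field L] [Algebra K L] :
    ∃ R : Biv L →+ Biv K, (∀ w f, R (w * mp K L f) = R w * f) ∧ R 1 = 1 ∧
      (∀ n, ∀ w ∈ TT L n, R w ∈ TT K n) ∧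
      (∀ w i j, ((R w).coeff i).coeff j ≠ 0 → (w.coeff i).coeff j ≠ 0) ∧
      (∀ w i j, (w.coeff i).coeff j = 1 → ((R w).coeff i).coeff j = 1) := by
  obtain ⟨ρ, hρ⟩ := LinearMap.exists_leftInverse_of_injective (Algebra.linearMap K L)
    (LinearMap.ker_eq_bot.mpr (algebraMap K L).injective)
  have h1 : ρ 1 = 1 := by
    have := congrArg (fun f => f 1) hρ
    simpa using this
  have hc : ∀ w i j, ((cmHom (cmHom ρ.toAddMonoidHom) w).coeff i).coeff j = ρ ((w.coeff i).coeff j) := by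
    intro w i j
    rw [coeff_cmHom, coeff_cmHom]; rfl
  refine ⟨cmHom (cmHom ρ.toAddMonoidHom), ?_, ?_, ?_, ?_, ?_⟩
  · intro w f
    apply cmHom_mul
    intro x y
    apply cmHom_mul
    intro x y
    change ρ _ = ρ _ * _
    rw [mul_comm, ← Algebra.smul_def, map_smul, smul_eq_mul, mul_comm]
  · ext i j
    rw [hc, coeff_one, coeff_one]
    split_ifs
    · rw [coeff_one, coeff_one]
      split_ifs
      · exact h1
      · simp
    · simp
  · intro n w hw i j h
    rw [hc, hw i j h, map_zero]
  · intro w i j h h0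
    rw [hc, h0, map_zero] at h
    exact h rfl
  · intro w i j h
    rw [hc, h, h1]

theorem eval_ev {K : Type*} [Field K] (a c b : AlgebraicClosure K) (f : Biv K) :
    (ev a c (mp K (AlgebraicClosure K) f)).eval b = aEval (a * b + c) b f := by
  have : (evalRingHom b).comp ((ev a c).comp (mp K (AlgebraicClosure K))) =
      eval₂RingHom (eval₂RingHom (algebraMap K (AlgebraicClosure K)) (a * b + c)) b := by
    ext
    · simp [ev, mp]
    · simp [ev, mp]
    · simp [ev, mp]
  exact congrArg (fun φ => φ f) this

/-- standard monomial -/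
def Std {s : ℕ} (g : Fin (s + 1) → Biv K) (m : ℕ × ℕ) : Prop := ∀ j, ¬ monDvd (lmon (g j)) m

theorem occ_lmon {f : Biv K} (hf : f ≠ 0) : occursIn f (lmon f) := by
  simp only [occursIn, lmon, coeff_natDegree]
  rw [Ne, leadingCoeff_eq_zero, leadingCoeff_eq_zero]
  exact hf

theorem occ_le {f : Biv K} {m : ℕ × ℕ} (h : occursIn f m) (hd : monDvd (lmon f) m) : m = lmon f := by
  have h1 : m.1 ≤ f.natDegree := by
    apply le_natDegree_of_ne_zero
    intro h0
    apply h
    rw [h0, coeff_zero]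
  have h2 : m.1 = f.natDegree := le_antisymm h1 hd.1
  have h3 : m.2 ≤ f.leadingCoeff.natDegree := by
    apply le_natDegree_of_ne_zero
    intro h0
    apply h
    rw [h2]
    exact h0
  exact Prod.ext h2 (le_antisymm h3 hd.2)

theorem gb_dvd {s : ℕ} {g : Fin (s + 1) → Biv K} {I : Ideal (Biv K)} (hg : IsReducedGB g I)
    {f : Biv K} (hf : f ∈ I) (h0 : f ≠ 0) : ∃ j, monDvd (lmon (g j)) (lmon f) := by
  obtain ⟨x, hx, h⟩ := hg.1.2 f hf h0
  rw [List.mem_ofFn] at hx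
  obtain ⟨j, rfl⟩ := hx
  exact ⟨j, h⟩

theorem g_mem {s : ℕ} {g : Fin (s + 1) → Biv K} {I : Ideal (Biv K)} (hg : IsReducedGB g I) (j) :
    g j ≠ 0 ∧ g j ∈ I := hg.1.1 (g j) (by rw [List.mem_ofFn]; exact ⟨j, rfl⟩)

theorem std_card {s : ℕ} {g : Fin (s + 1) → Biv K} {I : Ideal (Biv K)} (hg : IsReducedGB g I)
    {d : ℕ} {a c : L} {f0 f1 : Biv K} (h0I : f0 ∈ I) (h1I : f1 ∈ I)
    (hF : mp K L f0 ∈ TT L (d + 1)) (hG : mp K L f1 ∈ TT L (d + 1))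
    (hd : (ev a c (mp K L f0)).natDegree = d) (h0 : ev a c (mp K L f0) ≠ 0)
    (hco : IsCoprime (ev a c (mp K L f0)) (ev a c (mp K L f1)))
    (M : Finset (ℕ × ℕ)) (hM : ∀ m ∈ M, Std g m) : M.card ≤ d ^ 2 := by
  classical
  obtain ⟨R, R1, R2, R3, R4, R5⟩ := exists_retr K L
  have key := card_le hF hG hd h0 hco (d + M.sup (fun m => m.1 + m.2) + 1) (by omega) (ι := M)
    (fun m => monomial m.1.1 (monomial m.1.2 1)) ?_ ?_
  · simpa using key
  · intro m i j h
    have : m.1.1 + m.1.2 ≤ M.sup (fun m => m.1 + m.2) :=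
      Finset.le_sup (f := fun m : ℕ × ℕ => m.1 + m.2) m.2
    rw [coeff_monomial]
    split_ifs with hi
    · rw [coeff_monomial, if_neg (by omega)]
    · simp
  · intro b hb i0
    by_contra hne
    set S := ∑ i : M, b i • (monomial i.1.1 (monomial i.1.2 1) : Biv L) with hS
    have hcoef : ∀ p q, (S.coeff p).coeff q = ∑ i : M, if i.1 = (p, q) then b i else 0 := by
      intro p q
      rw [hS, finsetSum_coeff, finsetSum_coeff]
      refine Finset.sum_congr rfl fun i _ => ?_
      rw [coeff_smul, coeff_smul, coeff_monomial]
      by_cases h1 : i.1.1 = p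
      · by_cases h2 : i.1.2 = q
        · rw [if_pos h1, coeff_monomial, if_pos h2, if_pos (Prod.ext h1 h2)]; simp
        · rw [if_pos h1, coeff_monomial, if_neg h2, if_neg (fun h => h2 (by rw [h]))]; simp
      · rw [if_neg h1, if_neg (fun h => h1 (by rw [h]))]; simp
    obtain ⟨u, -, v, -, e⟩ := hb
    let P := R (C (C (b i0)⁻¹) * S)
    have hPI : P ∈ I := by
      have : P = R (C (C (b i0)⁻¹) * u) * f0 + R (C (C (b i0)⁻¹) * v) * f1 := by
        rw [← R1, ← R1, ← map_add]
        simp only [P]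
        rw [e]
        congr 1
        ring
      rw [this]
      exact I.add_mem (I.mul_mem_left _ h0I) (I.mul_mem_left _ h1I)
    have hPc : (P.coeff i0.1.1).coeff i0.1.2 = 1 := by
      apply R5
      rw [coeff_C_mul, coeff_C_mul, hcoef, Finset.sum_eq_single i0]
      · simp [hne]
      · intro i _ hi
        rw [if_neg]
        intro h
        exact hi (Subtype.ext h)
      · simp
    have hP0 : P ≠ 0 := by
      intro h
      rw [h] at hPc
      simp at hPc
    obtain ⟨j, hj⟩ := gb_dvd hg hPI hP0
    have hocc := R4 _ _ _ (occ_lmon hP0)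
    rw [coeff_C_mul, coeff_C_mul, hcoef] at hocc
    obtain ⟨i, _, hi⟩ := Finset.exists_ne_zero_of_sum_ne_zero (right_ne_zero_of_mul hocc)
    have hi' : i.1 = lmon P := by
      by_contra h
      rw [if_neg h] at hi
      exact hi rfl
    exact hM _ i.2 j (hi' ▸ hj)

theorem std_sum {s : ℕ} {g : Fin (s + 1) → Biv K} {B : ℕ}
    (H : ∀ M : Finset (ℕ × ℕ), (∀ m ∈ M, Std g m) → M.card ≤ B) {p q : ℕ} (hm : Std g (p, q)) :
    p + q + 1 ≤ B := by
  have := H (Finset.range (p + 1) ×ˢ Finset.range (q + 1)) (by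
    rintro ⟨p', q'⟩ h j hj
    simp only [Finset.mem_product, Finset.mem_range] at h
    exact hm j ⟨hj.1.trans (by simp only; omega), hj.2.trans (by simp only; omega)⟩)
  rw [Finset.card_product, Finset.card_range, Finset.card_range] at this
  nlinarith

theorem lm_sum {s : ℕ} {g : Fin (s + 1) → Biv K} {I : Ideal (Biv K)} (hg : IsReducedGB g I) {B : ℕ}
    (H : ∀ M : Finset (ℕ × ℕ), (∀ m ∈ M, Std g m) → M.card ≤ B) (j) :
    (g j).natDegree + (g j).leadingCoeff.natDegree ≤ B := by
  have hred := hg.2.2.1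
  have hocc := occ_lmon (g_mem hg j).1
  rcases Nat.eq_zero_or_pos (g j).leadingCoeff.natDegree with h | h
  · rcases Nat.eq_zero_or_pos (g j).natDegree with h' | h'
    · omega
    · have := std_sum H (p := (g j).natDegree - 1) (q := (g j).leadingCoeff.natDegree) (by
        intro l hl
        by_cases hlj : j = l
        · subst hlj
          have := hl.1
          simp only [lmon] at this
          omega
        · exact hred j l hlj _ hocc ⟨hl.1.trans (Nat.sub_le _ _), hl.2⟩)
      omega
  · have := std_sum H (p := (g j).natDegree) (q := (g j).leadingCoeff.natDegree - 1) (by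
        intro l hl
        by_cases hlj : j = l
        · subst hlj
          have := hl.2
          simp only [lmon] at this
          omega
        · exact hred j l hlj _ hocc ⟨hl.1, hl.2.trans (Nat.sub_le _ _)⟩)
    omega

theorem A_struct {s : ℕ} {g : Fin (s + 1) → Biv K} {I : Ideal (Biv K)} (hg : IsReducedGB g I)
    {A : ℕ → Biv K} (hA : IsDetachingSeq g I A) (i : ℕ) (hi : (g (Fin.last s)).natDegree ≤ i) :
    A i ∈ I ∧ (∀ p, i < p → (A i).coeff p = 0) ∧
      (∀ p q, p < i → ((A i).coeff p).coeff q ≠ 0 → Std g (p, q)) ∧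
      ∃ k, (A i).coeff i = (g k).leadingCoeff ∧ (g k).natDegree ≤ i ∧
        ∀ j, (g j).natDegree ≤ i → (g j).natDegree ≤ (g k).natDegree := by
  have hcase : ∀ j, A ((g j).natDegree) ∈ I ∧
      (∀ p, (g j).natDegree < p → (A ((g j).natDegree)).coeff p = 0) ∧
      (∀ p q, p < (g j).natDegree → ((A ((g j).natDegree)).coeff p).coeff q ≠ 0 → Std g (p, q)) ∧
      ∃ k, (A ((g j).natDegree)).coeff ((g j).natDegree) = (g k).leadingCoeff ∧
        (g k).natDegree ≤ (g j).natDegree ∧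
        ∀ l, (g l).natDegree ≤ (g j).natDegree → (g l).natDegree ≤ (g k).natDegree := by
    intro j
    rw [hA.2.1 j]
    refine ⟨(g_mem hg j).2, fun p hp => coeff_eq_zero_of_natDegree_lt hp, ?_, j, rfl, le_rfl,
      fun l hl => hl⟩
    intro p q hp hpq l hl
    by_cases hlj : j = l
    · subst hlj
      have := occ_le (m := (p, q)) hpq hl
      have := congrArg Prod.fst this
      simp only [lmon] at this
      omega
    · exact hg.2.2.1 j l hlj (p, q) hpq hl
  induction i, hi using Nat.le_induction with
  | base => exact hcase _
  | succ i hi ih =>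
    by_cases hex : ∃ j, (g j).natDegree = i + 1
    · obtain ⟨j, hj⟩ := hex
      rw [← hj]
      exact hcase j
    · push Not at hex
      obtain ⟨c1, c2, c3⟩ := hA.2.2 (i + 1) (by omega) hex
      rw [Nat.add_sub_cancel] at c1 c2
      obtain ⟨e1, e2, e3, k, e4, e5, e6⟩ := ih
      have hcf : ∀ p, i + 1 ≤ p → (A (i + 1)).coeff p = (X * A i).coeff p := by
        intro p hp
        have : (A (i + 1) - X * A i).coeff p = 0 :=
          coeff_eq_zero_of_degree_lt (lt_of_lt_of_le c2 (by exact_mod_cast hp))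
        rw [coeff_sub] at this
        exact sub_eq_zero.mp this
      refine ⟨?_, ?_, ?_, k, ?_, by omega, ?_⟩
      · have := I.add_mem c1 (I.mul_mem_left X e1)
        simpa using this
      · intro p hp
        rw [hcf p (by omega)]
        obtain ⟨p', rfl⟩ : ∃ p', p = p' + 1 := ⟨p - 1, by omega⟩
        rw [coeff_X_mul]
        exact e2 _ (by omega)
      · intro p q hp hpq
        exact c3 (p, q) hp hpq
      · rw [hcf _ le_rfl, coeff_X_mul, e4]
      · intro j hj
        have := hex j
        exact e6 j (by omega)

theorem A_deg {s : ℕ} {g : Fin (s + 1) → Biv K} {I : Ideal (Biv K)} (hg : IsReducedGB g I) {B : ℕ}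
    (H : ∀ M : Finset (ℕ × ℕ), (∀ m ∈ M, Std g m) → M.card ≤ B)
    {A : ℕ → Biv K} (hA : IsDetachingSeq g I A) (i : ℕ) (hi : (g (Fin.last s)).natDegree ≤ i)
    (hi0 : i ≤ (g 0).natDegree) : A i ∈ TT K (B + 1) := by
  obtain ⟨-, e2, e3, k, e4, e5, e6⟩ := A_struct hg hA i hi
  have hB : i + (g k).leadingCoeff.natDegree ≤ B := by
    rcases Nat.eq_zero_or_pos (g k).leadingCoeff.natDegree with h | h
    · have := lm_sum hg H 0
      omega
    · have := std_sum H (p := i) (q := (g k).leadingCoeff.natDegree - 1) (by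
        intro l hl
        have h1 := e6 l hl.1
        have h2 := hl.2
        simp only [lmon] at h2
        by_cases hlk : k = l
        · subst hlk; omega
        · exact hg.2.2.1 k l hlk _ (occ_lmon (g_mem hg k).1) ⟨h1, by simp only [lmon]; omega⟩)
      omega
  intro p q hpq
  rcases lt_trichotomy p i with h | h | h
  · by_contra hne
    have := std_sum H (e3 p q h hne)
    omega
  · subst h
    rw [e4]
    exact coeff_eq_zero_of_natDegree_lt (by omega)
  · rw [e2 p h, coeff_zero]

theorem main2 {K : Type*} [Field K] {s : ℕ} (f0 f1 : Biv K) (d : ℕ) (h0 : f0 ∈ TT K (d + 1))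
    (h1 : f1 ∈ TT K (d + 1)) (i0 j0 : ℕ) (hij : i0 + j0 = d) (hne : (f0.coeff i0).coeff j0 ≠ 0)
    (hfin : {p : AlgebraicClosure K × AlgebraicClosure K |
      aEval p.1 p.2 f0 = 0 ∧ aEval p.1 p.2 f1 = 0}.Finite)
    (I : Ideal (Biv K)) (hI : I = Ideal.span {f0, f1})
    (g : Fin (s + 1) → Biv K) (hg : IsReducedGB g I)
    (A : ℕ → Biv K) (hA : IsDetachingSeq g I A) (i : ℕ)
    (hi : (g (Fin.last s)).natDegree ≤ i) (hi0 : i ≤ (g 0).natDegree) :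
    ∃ u ∈ TT K (d ^ 2 + 1 - d + d ^ 2), ∃ v ∈ TT K (d ^ 2 + 1 - d + d ^ 2),
      A i = u * f0 + v * f1 := by
  let L := AlgebraicClosure K
  have : Infinite L := IsAlgClosed.instInfinite
  have hF : mp K L f0 ∈ TT L (d + 1) := mp_mem h0
  have hG : mp K L f1 ∈ TT L (d + 1) := mp_mem h1
  obtain ⟨a, ha⟩ := exists_a d (mp K L f0) hF i0 j0 hij (by
    rw [coeff_mp]
    exact (_root_.map_ne_zero _).mpr hne)
  obtain ⟨c, hc⟩ := (hfin.image (fun p => p.1 - a * p.2)).exists_notMem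
  have hz : ev a c (mp K L f0) ≠ 0 := by
    intro h
    apply ha c
    rw [h, coeff_zero]
  have hd : (ev a c (mp K L f0)).natDegree = d := by
    apply le_antisymm
    · have := ev_deg a c hF
      rw [mem_degreeLT, degree_eq_natDegree hz] at this
      norm_cast at this
      omega
    · exact le_natDegree_of_ne_zero (ha c)
  have hco : IsCoprime (ev a c (mp K L f0)) (ev a c (mp K L f1)) := by
    rw [isCoprime_iff_aeval_ne_zero_of_isAlgClosed L L]
    intro b
    by_contra hb
    push Not at hb
    rw [coe_aeval_eq_eval, eval_ev, eval_ev] at hb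
    exact hc ⟨(a * b + c, b), hb, by simp⟩
  have hf0 : f0 ∈ I := hI ▸ Ideal.subset_span (by simp)
  have hf1 : f1 ∈ I := hI ▸ Ideal.subset_span (by simp)
  have H := std_card hg hf0 hf1 hF hG hd hz hco
  have hAd := A_deg hg H hA i hi hi0
  have hAI := (A_struct hg hA i hi).1
  rw [hI, Ideal.mem_span_pair] at hAI
  obtain ⟨x, y, hxy⟩ := hAI
  have hdd : d ≤ d ^ 2 := Nat.le_self_pow (by norm_num) d
  have hb := bound hF hG hd hz hco (d ^ 2 + 1 - d) (mp K L (A i)) (by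
    rw [Nat.sub_add_cancel (by omega)]
    exact mp_mem hAd) (by
      obtain ⟨m, hm⟩ := TT_exists x
      obtain ⟨n, hn⟩ := TT_exists y
      refine ⟨max m n, mp K L x, mp_mem (TT_mono (le_max_left _ _) hm), mp K L y,
        mp_mem (TT_mono (le_max_right _ _) hn), ?_⟩
      rw [← hxy, map_add, map_mul, map_mul])
  obtain ⟨u, hu, v, hv, e⟩ := hb
  obtain ⟨R, R1, R2, R3, R4, R5⟩ := exists_retr K L
  refine ⟨R u, R3 _ _ hu, R v, R3 _ _ hv, ?_⟩
  rw [← R1, ← R1, ← map_add, ← e, ← one_mul (mp K L (A i)), R1, R2, one_mul]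

theorem totDeg_mem {f : Biv K} {d : ℕ} (h : totDeg f ≤ d) : f ∈ TT K (d + 1) := by
  intro i j hij
  by_cases hi : i ∈ f.support
  · have : i + (f.coeff i).natDegree ≤ totDeg f :=
      Finset.le_sup (f := fun j => j + (f.coeff j).natDegree) hi
    exact coeff_eq_zero_of_natDegree_lt (by omega)
  · simp [notMem_support_iff.mp hi]

theorem totDeg_att {f : Biv K} (h : f ≠ 0) :
    ∃ i j, i + j = totDeg f ∧ (f.coeff i).coeff j ≠ 0 := by
  obtain ⟨i, hi, e⟩ := Finset.exists_mem_eq_sup f.support (nonempty_support_iff.mpr h)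
    (fun j => j + (f.coeff j).natDegree)
  refine ⟨i, (f.coeff i).natDegree, e.symm, ?_⟩
  rw [coeff_natDegree, Ne, leadingCoeff_eq_zero]
  exact mem_support_iff.mp hi

theorem deg_lt {w : Biv K} {n N : ℕ} (hw : w ∈ TT K n) (h : n ≤ N) : w.degree < (N : WithBot ℕ) := by
  rw [degree_lt_iff_coeff_zero]
  intro m hm
  ext j
  rw [hw m j (by omega), coeff_zero]

theorem arith {e d : ℕ} (h : e ≤ d) : e ^ 2 + 1 - e + e ^ 2 ≤ 2 * (max d 3) ^ 2 + max d 3 := by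
  have h1 : e ≤ max d 3 := h.trans (le_max_left _ _)
  have h2 : 3 ≤ max d 3 := le_max_right _ _
  have h3 : e ^ 2 ≤ (max d 3) ^ 2 := Nat.pow_le_pow_left h1 2
  omega

end

end DLT

/-- if `F = (f_1, f_2)` have total degree at most `d ≥ 1` and generate an
ideal `I` with finitely many common zeros over an algebraic closure of `K`, then
`Δ(F) ≤ 2 d′² + d′` with `d′ = max(d,3)`: every element `A i` (`n_s ≤ i ≤ n_0`) of the
detaching basis of `I` is a combination of `f_1, f_2` with cofactors of `y`-degree
`< 2 d′² + d′`. -/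
theorem Delta_le_two_gens {K : Type*} [Field K] {s : ℕ}
    (f : Fin 2 → Biv K) (d : ℕ) (hd : 1 ≤ d)
    (htot : ∀ i, totDeg (f i) ≤ d)
    (hfin : {p : AlgebraicClosure K × AlgebraicClosure K |
      ∀ i, aEval p.1 p.2 (f i) = 0}.Finite)
    (I : Ideal (Biv K)) (hI : I = Ideal.span (Set.range f))
    (g : Fin (s + 1) → Biv K) (hg : IsReducedGB g I)
    (A : ℕ → Biv K) (hA : IsDetachingSeq g I A) :
    ∀ i, (g (Fin.last s)).natDegree ≤ i → i ≤ (g 0).natDegree →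
      ∃ w : Fin 2 → Biv K,
        (∀ j, (w j).degree < ((2 * (max d 3) ^ 2 + max d 3 : ℕ) : WithBot ℕ)) ∧
        A i = ∑ j, w j * f j := by
  intro i hi hi0
  have hrange : Set.range f = {f 0, f 1} := by
    ext x
    simp [Fin.exists_fin_two, eq_comm]
  have hnz : f 0 ≠ 0 ∨ f 1 ≠ 0 := by
    by_contra h
    push Not at h
    rw [hrange, h.1, h.2] at hI
    have := DLT.g_mem hg 0
    rw [hI] at this
    exact this.1 (by simpa using this.2)
  have hA0 : ∃ j l : Fin 2, j ≠ l ∧ f j ≠ 0 ∧ totDeg (f l) ≤ totDeg (f j) := by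
    rcases le_total (totDeg (f 1)) (totDeg (f 0)) with h | h
    · by_cases h0 : f 0 = 0
      · refine ⟨1, 0, by decide, by tauto, ?_⟩
        rw [h0]; simp [totDeg]
      · exact ⟨0, 1, by decide, h0, h⟩
    · by_cases h0 : f 1 = 0
      · refine ⟨0, 1, by decide, by tauto, ?_⟩
        rw [h0]; simp [totDeg]
      · exact ⟨1, 0, by decide, h0, h⟩
  obtain ⟨j, l, hjl, hj0, hle⟩ := hA0
  have hall : ∀ P : Fin 2 → Prop, (∀ i, P i) ↔ P j ∧ P l := by
    intro P
    rw [Fin.forall_fin_two]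
    fin_cases j <;> fin_cases l <;> simp at hjl ⊢
    exact and_comm
  have hsum : ∀ φ : Fin 2 → Biv K, ∑ i, φ i = φ j + φ l := by
    intro φ
    rw [Fin.sum_univ_two]
    fin_cases j <;> fin_cases l <;> simp at hjl ⊢
    exact add_comm _ _
  have hrange2 : Set.range f = {f j, f l} := by
    rw [hrange]
    fin_cases j <;> fin_cases l <;> simp at hjl ⊢
    exact Set.pair_comm _ _
  obtain ⟨i0, j0, hij, hne⟩ := DLT.totDeg_att hj0
  obtain ⟨u, hu, v, hv, e⟩ := DLT.main2 (f j) (f l) (totDeg (f j)) (DLT.totDeg_mem le_rfl)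
    (DLT.totDeg_mem hle) i0 j0 hij hne (by
      convert hfin using 3 with p
      exact (hall fun i => aEval p.1 p.2 (f i) = 0).symm) I (by rw [hI, hrange2]) g hg A hA i hi hi0
  refine ⟨fun r => if r = j then u else v, ?_, ?_⟩
  · intro r
    have ha := DLT.arith (htot j)
    simp only
    split_ifs
    · exact DLT.deg_lt hu ha
    · exact DLT.deg_lt hv ha
  · rw [hsum]
    simp only [if_true, if_neg hjl.symm]
    exact e
end
end

section
/- Let K be a field and F = (f_1,…,f_t) in K[x,y] (t ≥ 2) of total degree at most d ≥ 1, generating an ideal I with finitely many common zeros over an algebraic closure of K. Then Δ(F) ≤ 16d′⁴ + 2d′² + 2d′, where d′ = max(d,3). -/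
noncomputable section

open Polynomial

variable {k : Type*} [CommRing k]

theorem det_deg {K : Type*} [Field K] {n d : ℕ} (M : Matrix (Fin n) (Fin n) K[X])
    (h : ∀ i j, (M i j).natDegree ≤ d) : M.det.natDegree ≤ n * d := by
  rw [Matrix.det_apply]
  refine natDegree_sum_le_of_forall_le _ _ fun σ _ => ?_
  refine (natDegree_smul_le _ _).trans ?_
  refine (natDegree_prod_le _ _).trans ?_
  refine (Finset.sum_le_card_nsmul _ _ d fun i _ => h _ _).trans ?_
  simp

theorem sum_subtype_aux {R α : Type*} [CommSemiring R] [Fintype α] {n : ℕ} (T' : Set α)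
    (σ : Fin n ≃ T') (a W : α → R) (ha : ∀ p, p ∉ T' → a p = 0) :
    ∑ p, a p * W p = ∑ k, a (σ k) * W (σ k) := by
  classical
  rw [σ.sum_comp (fun p : T' => a p * W p)]
  rw [← Finset.sum_subset (Finset.subset_univ (Set.toFinset T'))]
  · rw [← Finset.sum_coe_sort]
    exact Fintype.sum_equiv (Equiv.subtypeEquivRight (by simp)) _ _ (fun _ => rfl)
  · intro p _ hp
    rw [ha p (by simpa using hp), zero_mul]

theorem cramer_bound {K L : Type*} [Field K] [Field L] [Algebra K[X] L]
    (hinj : Function.Injective (algebraMap K[X] L))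
    {ι : Type*} [Fintype ι] {n d : ℕ} (v : ι → Fin n → K[X]) (e : Fin n → K[X])
    (hv : ∀ i r, (v i r).natDegree ≤ d) (he : ∀ r, (e r).natDegree ≤ d)
    (c : ι → L) (hc : ∀ r, algebraMap K[X] L (e r) = ∑ i, c i * algebraMap K[X] L (v i r)) :
    ∃ R : K[X], R ≠ 0 ∧ R.natDegree ≤ n * d ∧ ∃ c' : ι → K[X],
      (∀ i, (c' i).natDegree ≤ n * d) ∧ ∀ r, R * e r = ∑ i, c' i * v i r := by
  classical
  let V : ι ⊕ Fin n → Fin n → K[X] := Sum.elim v (fun r => Pi.single r 1)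
  have hV : ∀ p r, (V p r).natDegree ≤ d := by
    rintro (i | i) r
    · exact hv i r
    · simp only [V, Sum.elim_inr, Pi.single_apply]
      split_ifs <;> simp
  let VL : ι ⊕ Fin n → Fin n → L := fun p r => algebraMap K[X] L (V p r)
  obtain ⟨T, hT1, -, hT3, hT4⟩ := exists_linearIndepOn_extension (K := L) (v := VL)
    (s := ∅) (t := Set.range Sum.inl) (linearIndepOn_empty _ _) (Set.empty_subset _)
  obtain ⟨T', -, hT2', hT3', hT4'⟩ := exists_linearIndepOn_extension (K := L) (v := VL)
    (s := T) (t := Set.univ) hT4 (Set.subset_univ _)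
  have htop : ⊤ ≤ Submodule.span L (Set.range fun p : T' => VL p) := by
    have h1 : (Set.range fun p : T' => VL p) = VL '' T' := by
      rw [Set.image_eq_range]
    rw [h1, ← (Pi.basisFun L (Fin n)).span_eq, Submodule.span_le]
    refine Set.Subset.trans ?_ hT3'
    rintro _ ⟨r, rfl⟩
    refine ⟨Sum.inr r, trivial, ?_⟩
    ext q
    simp [VL, V, Pi.single_apply, apply_ite]
  let B : Module.Basis T' L (Fin n → L) := Module.Basis.mk hT4' htop
  let σ : Fin n ≃ T' := (Pi.basisFun L (Fin n)).indexEquiv B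
  let M : Matrix (Fin n) (Fin n) K[X] := Matrix.of fun r k => V (σ k) r
  have hcols : LinearIndependent L (fun k : Fin n => VL (σ k)) :=
    LinearIndependent.comp hT4' σ σ.injective
  have hdet : M.det ≠ 0 := by
    have h1 : IsUnit (M.map (algebraMap K[X] L)) := by
      rw [← Matrix.linearIndependent_cols_iff_isUnit]
      exact hcols
    rw [Matrix.isUnit_iff_isUnit_det] at h1
    intro h0
    have : (M.map (algebraMap K[X] L)).det = algebraMap K[X] L M.det := by
      rw [RingHom.map_det]; rfl
    rw [this, h0, map_zero] at h1
    exact not_isUnit_zero h1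
  let c2 : Fin n → K[X] := M.cramer e
  have hc2 : ∀ r, ∑ k, c2 k * V (σ k) r = M.det * e r := by
    intro r
    have := congrFun (Matrix.mulVec_cramer M e) r
    simp only [Matrix.mulVec, dotProduct, Pi.smul_apply, smul_eq_mul] at this
    rw [← this]
    exact Finset.sum_congr rfl fun k _ => mul_comm _ _
  have hspan : (fun r => algebraMap K[X] L (e r)) ∈ Submodule.span L (VL '' T) := by
    have h1 : (fun r => algebraMap K[X] L (e r)) = ∑ i, c i • VL (Sum.inl i) := by
      ext r
      simp [hc r, VL, V]
    rw [h1]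
    refine Submodule.sum_mem _ fun i _ => Submodule.smul_mem _ _ (hT3 ⟨Sum.inl i, ⟨i, rfl⟩, rfl⟩)
  rw [Finsupp.mem_span_image_iff_linearCombination] at hspan
  obtain ⟨l, hl, hle⟩ := hspan
  have hl0 : ∀ p, p ∉ T → l p = 0 := fun p hp => by
    by_contra h
    exact hp (hl (Finsupp.mem_support_iff.2 h))
  have hL : ∀ k, algebraMap K[X] L (c2 k) = algebraMap K[X] L M.det * l (σ k) := by
    have key : ∑ k, (algebraMap K[X] L (c2 k) - algebraMap K[X] L M.det * l (σ k)) • VL (σ k) = 0 := by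
      ext r
      have h1 := congrArg (algebraMap K[X] L) (hc2 r)
      have h2 := congrFun hle r
      rw [Finsupp.linearCombination_apply, Finsupp.sum_fintype _ _ (by simp)] at h2
      simp only [Finset.sum_apply, Pi.smul_apply, smul_eq_mul] at h2
      rw [sum_subtype_aux T' σ l (fun p => VL p r) (fun p hp => hl0 p fun h => hp (hT2' h))] at h2
      simp only [map_sum, map_mul] at h1
      simp only [Finset.sum_apply, Pi.smul_apply, smul_eq_mul, sub_mul, Finset.sum_sub_distrib,
        mul_assoc, ← Finset.mul_sum, Pi.zero_apply]
      rw [h2, ← h1]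
      simp [VL]
    intro k
    exact sub_eq_zero.1 (Fintype.linearIndependent_iff.1 hcols _ key k)
  let C' : ι ⊕ Fin n → K[X] := fun p => if h : p ∈ T' then c2 (σ.symm ⟨p, h⟩) else 0
  have hCT' : ∀ p, p ∉ T' → C' p = 0 := fun p hp => by simp [C', hp]
  have hCσ : ∀ k, C' (σ k) = c2 k := fun k => by simp [C']
  have hCT : ∀ p, p ∉ T → C' p = 0 := fun p hp => by
    by_cases h : p ∈ T'
    · have := hL (σ.symm ⟨p, h⟩)
      rw [Equiv.apply_symm_apply, hl0 p hp, mul_zero] at this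
      simp only [C', h, dif_pos]
      exact hinj (by rw [this, map_zero])
    · exact hCT' p h
  refine ⟨M.det, hdet, det_deg M (fun i j => hV _ _), fun i => C' (Sum.inl i), fun i => ?_, fun r => ?_⟩
  · simp only [C']
    split_ifs
    · simp only [c2, Matrix.cramer_apply]
      refine det_deg _ fun i j => ?_
      rw [Matrix.updateCol_apply]
      split_ifs
      · exact he _
      · exact hV _ _
    · simp
  · rw [← hc2 r]
    have h1 := sum_subtype_aux T' σ C' (fun p => V p r) hCT'
    simp only [hCσ] at h1
    rw [← h1, Fintype.sum_sum_type]
    have h2 : ∀ i : Fin n, C' (Sum.inr i) = 0 := fun i => hCT _ fun h => by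
      obtain ⟨a, ha⟩ := hT1 h
      simp at ha
    simp [h2, V]


theorem bezout_bound {L : Type*} [Field L] {t d : ℕ} (F : Fin t → L[X]) (hd : 1 ≤ d)
    (hF : ∀ j, (F j).natDegree ≤ d) (w : Fin t → L[X]) (hw : ∑ j, w j * F j = 1) :
    ∃ w' : Fin t → L[X], (∀ j, (w' j).degree < (d : WithBot ℕ)) ∧ ∑ j, w' j * F j = 1 := by
  classical
  obtain ⟨j0, hj0⟩ : ∃ j, F j ≠ 0 := by
    by_contra! h
    simp [h] at hw
  have hFd : ∀ j, (F j).degree ≤ (d : WithBot ℕ) := fun j => degree_le_of_natDegree_le (hF j)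
  let u : L[X] := w j0 + ∑ j ∈ Finset.univ.erase j0, (w j / F j0) * F j
  have hmod : ∀ j, (w j % F j0).degree < (F j0).degree := fun j => EuclideanDomain.mod_lt _ hj0
  have hsum : u * F j0 + ∑ j ∈ Finset.univ.erase j0, (w j % F j0) * F j = 1 := by
    rw [← hw, ← Finset.add_sum_erase _ _ (Finset.mem_univ j0)]
    simp only [u, add_mul, Finset.sum_mul, add_assoc, ← Finset.sum_add_distrib]
    congr 1
    refine Finset.sum_congr rfl fun j _ => ?_
    have := EuclideanDomain.div_add_mod (w j) (F j0)
    conv_rhs => rw [← this]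
    ring
  have hu : u.degree < (d : WithBot ℕ) := by
    have h1 : u * F j0 = 1 - ∑ j ∈ Finset.univ.erase j0, (w j % F j0) * F j := by
      rw [← hsum]; ring
    have hb : ((d + (F j0).natDegree : ℕ) : WithBot ℕ) ≠ ⊥ := WithBot.coe_ne_bot
    have h2 : (u * F j0).degree < ((d + (F j0).natDegree : ℕ) : WithBot ℕ) := by
      rw [h1]
      refine (degree_sub_le _ _).trans_lt (max_lt ?_ ?_)
      · rw [degree_one]; exact_mod_cast (by omega : 0 < d + (F j0).natDegree)
      · refine (degree_sum_le _ _).trans_lt ?_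
        rw [Finset.sup_lt_iff (bot_lt_iff_ne_bot.2 hb)]
        intro j _
        by_cases hz : w j % F j0 * F j = 0
        · rw [hz, degree_zero]; exact bot_lt_iff_ne_bot.2 hb
        have hz1 : w j % F j0 ≠ 0 := left_ne_zero_of_mul hz
        have hz2 := natDegree_lt_natDegree hz1 (hmod j)
        rw [degree_eq_natDegree hz]
        have := natDegree_mul_le (p := w j % F j0) (q := F j)
        have := hF j
        exact_mod_cast (by omega)
    by_cases hz : u = 0
    · rw [hz, degree_zero]; exact WithBot.bot_lt_coe _
    rw [degree_eq_natDegree (mul_ne_zero hz hj0), natDegree_mul hz hj0] at h2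
    rw [degree_eq_natDegree hz]
    have h3 : u.natDegree + (F j0).natDegree < d + (F j0).natDegree := by exact_mod_cast h2
    exact_mod_cast (by omega)
  refine ⟨fun j => if j = j0 then u else w j % F j0, fun j => ?_, ?_⟩
  · dsimp only
    split_ifs
    · exact hu
    · exact (hmod j).trans_le (hFd j0)
  · rw [← hsum, ← Finset.add_sum_erase _ _ (Finset.mem_univ j0)]
    simp only [if_true]
    congr 1
    refine Finset.sum_congr rfl fun j hj => ?_
    rw [if_neg (Finset.ne_of_mem_erase hj)]

theorem elim_bound {K : Type*} [Field K] {t d : ℕ} (F : Fin t → K[X][X]) (hd : 1 ≤ d)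
    (hF : ∀ j, (F j).natDegree ≤ d) (hFc : ∀ j r, ((F j).coeff r).natDegree ≤ d)
    (p : K[X]) (hp : p ≠ 0) (hmem : C p ∈ Ideal.span (Set.range F)) :
    ∃ R : K[X], R ≠ 0 ∧ R.natDegree ≤ 2 * d * d ∧ ∃ u : Fin t → K[X][X],
      (∀ j r, ((u j).coeff r).natDegree ≤ 2 * d * d) ∧ C R = ∑ j, u j * F j := by
  classical
  let L := FractionRing K[X]
  have hinj : Function.Injective (algebraMap K[X] L) := IsFractionRing.injective _ _
  obtain ⟨w0, hw0⟩ := (Ideal.mem_span_range_iff_exists_fun).1 hmem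
  let φ : K[X][X] →+* L[X] := mapRingHom (algebraMap K[X] L)
  have hpL : algebraMap K[X] L p ≠ 0 := fun h => hp (hinj (by rw [h, map_zero]))
  obtain ⟨w, hw, hw1⟩ := bezout_bound (fun j => φ (F j)) hd
    (fun j => (natDegree_map_le).trans (hF j))
    (fun j => C (algebraMap K[X] L p)⁻¹ * φ (w0 j)) (by
      simp only [mul_assoc, ← Finset.mul_sum, ← map_mul, ← map_sum, hw0]
      simp only [φ, coe_mapRingHom, map_C, ← C_mul]
      rw [inv_mul_cancel₀ hpL, C_1])
  have hwd : ∀ j, w j = ∑ a : Fin d, C ((w j).coeff a) * X ^ (a : ℕ) := fun j => by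
    rw [Fin.sum_univ_eq_sum_range (fun a => C ((w j).coeff a) * X ^ a) d]
    exact as_sum_range_C_mul_X_pow' _ (by
      by_cases hz : w j = 0
      · rw [hz, natDegree_zero]; omega
      · exact (natDegree_lt_iff_degree_lt hz).2 (hw j))
  let v : Fin t × Fin d → Fin (2 * d) → K[X] := fun q r => (X ^ (q.2 : ℕ) * F q.1).coeff r
  let e : Fin (2 * d) → K[X] := fun r => (1 : K[X][X]).coeff r
  obtain ⟨R, hR0, hR, c, hc, hcs⟩ := cramer_bound hinj (d := d) v e
    (fun q r => by
      simp only [v, coeff_X_pow_mul']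
      split_ifs
      · exact hFc _ _
      · simp)
    (fun r => by
      simp only [e, coeff_one]
      split_ifs <;> simp)
    (fun q => (w q.1).coeff q.2)
    (fun r => by
      have h1 := congrArg (fun q : L[X] => q.coeff r) hw1
      have h2 : algebraMap K[X] L (e r) = (1 : L[X]).coeff r := by
        simp only [e, coeff_one]
        split_ifs <;> simp
      rw [h2]
      refine h1.symm.trans ?_
      simp only [finsetSum_coeff]
      rw [Fintype.sum_prod_type]
      refine Finset.sum_congr rfl fun j _ => ?_
      conv_lhs => rw [hwd j]
      rw [Finset.sum_mul, finsetSum_coeff]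
      refine Finset.sum_congr rfl fun a _ => ?_
      rw [mul_assoc, coeff_C_mul]
      congr 1
      have : (X ^ (a : ℕ) * φ (F j) : L[X]) = φ (X ^ (a : ℕ) * F j) := by
        simp [φ]
      rw [this]
      simp only [φ, coe_mapRingHom, coeff_map, v])
  refine ⟨R, hR0, hR, fun j => ∑ a : Fin d, C (c (j, a)) * X ^ (a : ℕ), fun j r => ?_, ?_⟩
  · rw [finsetSum_coeff]
    refine natDegree_sum_le_of_forall_le _ _ fun a _ => ?_
    rw [coeff_C_mul_X_pow]
    split_ifs
    · exact hc _
    · simp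
  · ext1 r
    have hrhs : (∑ j, (∑ a : Fin d, C (c (j, a)) * X ^ (a : ℕ)) * F j).coeff r =
        ∑ q : Fin t × Fin d, c q * (X ^ (q.2 : ℕ) * F q.1).coeff r := by
      rw [Fintype.sum_prod_type, finsetSum_coeff]
      refine Finset.sum_congr rfl fun j _ => ?_
      rw [Finset.sum_mul, finsetSum_coeff]
      refine Finset.sum_congr rfl fun a _ => ?_
      rw [mul_assoc, coeff_C_mul]
    rw [hrhs]
    by_cases hr : r < 2 * d
    · have := hcs ⟨r, hr⟩
      simp only [v, e] at this
      rw [← this, coeff_C, coeff_one]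
      split_ifs <;> simp
    · rw [coeff_C, if_neg (by omega)]
      symm
      refine Finset.sum_eq_zero fun q _ => ?_
      rw [coeff_X_pow_mul']
      have h1 := q.2.2
      have h2 := hF q.1
      rw [if_pos (by omega), coeff_eq_zero_of_natDegree_lt (by omega), mul_zero]

theorem swap_coeff_coeff {K : Type*} [Field K] (p : K[X][X]) (a b : ℕ) :
    ((Bivariate.swap p).coeff a).coeff b = (p.coeff b).coeff a := by
  induction p using Polynomial.induction_on' with
  | add p q hp hq => simp [hp, hq]
  | monomial n f =>
    induction f using Polynomial.induction_on' with
    | add p q hp hq => simp only [map_add, coeff_add, hp, hq]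
    | monomial m r =>
      rw [Bivariate.swap_monomial_monomial]
      simp only [coeff_monomial]
      by_cases h1 : m = a <;> by_cases h2 : n = b <;> simp [h1, h2, coeff_monomial]

theorem exists_elim {K : Type*} [Field K] {t : ℕ} (f : Fin t → Biv K)
    (hfin : {p : AlgebraicClosure K × AlgebraicClosure K |
      ∀ i, aEval p.1 p.2 (f i) = 0}.Finite) :
    ∃ p : K[X], p ≠ 0 ∧ (p.map C : Biv K) ∈ Ideal.span (Set.range f) := by
  classical
  let φ : MvPolynomial (Fin 2) K →ₐ[K] Biv K := MvPolynomial.aeval ![C X, X]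
  have hφ0 : φ (MvPolynomial.X 0) = C X := by simp [φ]
  have hφ1 : φ (MvPolynomial.X 1) = X := by simp [φ]
  have hsurj : Function.Surjective φ := by
    rw [← AlgHom.range_eq_top, eq_top_iff]
    rintro q -
    induction q using Polynomial.induction_on' with
    | add p q hp hq => exact add_mem hp hq
    | monomial n f =>
      rw [← C_mul_X_pow_eq_monomial]
      refine mul_mem ?_ (pow_mem (hφ1 ▸ φ.mem_range_self _) _)
      induction f using Polynomial.induction_on' with
      | add p q hp hq => rw [C_add]; exact add_mem hp hq
      | monomial m r =>
        rw [← C_mul_X_pow_eq_monomial, C_mul, C_pow]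
        refine mul_mem ?_ (pow_mem (hφ0 ▸ φ.mem_range_self _) _)
        exact Subalgebra.algebraMap_mem _ r
  have hev : ∀ (z : Fin 2 → AlgebraicClosure K) (q : MvPolynomial (Fin 2) K),
      aEval (z 0) (z 1) (φ q) = MvPolynomial.aeval z q := by
    intro z q
    induction q using MvPolynomial.induction_on with
    | C a =>
      have : φ (MvPolynomial.C a) = C (C a) := MvPolynomial.aeval_C _ _
      rw [this, MvPolynomial.aeval_C]
      simp [aEval]
    | add p q hp hq =>
      simp only [map_add, ← hp, ← hq]
      simp [aEval, eval₂_add]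
    | mul_X p i hp =>
      simp only [map_mul, ← hp, MvPolynomial.aeval_X]
      have : aEval (z 0) (z 1) (φ (MvPolynomial.X i)) = z i := by
        fin_cases i
        · simp [hφ0, aEval]
        · simp [hφ1, aEval]
      rw [← this]
      simp [aEval, eval₂_mul]
  let S : Finset (AlgebraicClosure K × AlgebraicClosure K) := hfin.toFinset
  let p : K[X] := ∏ z ∈ S, minpoly K z.2
  have hp0 : p ≠ 0 := Finset.prod_ne_zero_iff.2 fun z _ =>
    minpoly.ne_zero (Algebra.IsIntegral.isIntegral z.2)
  let I' : Ideal (MvPolynomial (Fin 2) K) := (Ideal.span (Set.range f)).comap φ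
  let P : MvPolynomial (Fin 2) K := Polynomial.aeval (MvPolynomial.X 1) p
  have hP : P ∈ MvPolynomial.vanishingIdeal K (MvPolynomial.zeroLocus (AlgebraicClosure K) I') := by
    intro z hz
    have hzS : (z 0, z 1) ∈ S := by
      simp only [S, Set.Finite.mem_toFinset, Set.mem_ofPred_eq]
      intro i
      obtain ⟨q, hq⟩ := hsurj (f i)
      rw [← hq, hev]
      refine hz q (Ideal.mem_comap.2 ?_)
      rw [hq]
      exact Ideal.subset_span ⟨i, rfl⟩
    have h1 : MvPolynomial.aeval z P = Polynomial.aeval (z 1) p := by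
      simp only [P]
      rw [← Polynomial.aeval_algHom_apply, MvPolynomial.aeval_X]
    rw [h1, map_prod]
    exact Finset.prod_eq_zero hzS (minpoly.aeval K (z 1))
  rw [MvPolynomial.vanishingIdeal_zeroLocus_eq_radical] at hP
  obtain ⟨N, hN⟩ := hP
  refine ⟨p ^ N, pow_ne_zero _ hp0, ?_⟩
  have h2 : φ (P ^ N) ∈ Ideal.span (Set.range f) := hN
  have h3 : φ P = p.map C := by
    simp only [P]
    rw [← Polynomial.aeval_algHom_apply, hφ1, Polynomial.aeval_def, Polynomial.map]
    rfl
  rwa [map_pow, h3, ← Polynomial.map_pow] at h2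

theorem exists_monic {K : Type*} [Field K] {t d : ℕ} (hd : 1 ≤ d) (f : Fin t → Biv K)
    (htot : ∀ i, totDeg (f i) ≤ d)
    (hfin : {p : AlgebraicClosure K × AlgebraicClosure K |
      ∀ i, aEval p.1 p.2 (f i) = 0}.Finite) :
    ∃ R : Biv K, R.Monic ∧ R.natDegree ≤ 2 * d * d ∧ ∃ u : Fin t → Biv K,
      (∀ j, (u j).natDegree ≤ 2 * d * d) ∧ R = ∑ j, u j * f j := by
  classical
  have hco : ∀ j a b, ((f j).coeff b).coeff a ≠ 0 → a + b ≤ d := by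
    intro j a b h
    have h1 : b ∈ (f j).support := by
      rw [mem_support_iff]; intro h0; simp [h0] at h
    have h2 := (Finset.le_sup (f := fun i => i + ((f j).coeff i).natDegree) h1).trans (htot j)
    have h3 := le_natDegree_of_ne_zero h
    omega
  obtain ⟨p, hp, hpm⟩ := exists_elim f hfin
  obtain ⟨R, hR0, hR, u, hu, hs⟩ := elim_bound (fun j => Bivariate.swap (f j)) hd
    (fun j => by
      rw [natDegree_le_iff_coeff_eq_zero]
      intro a ha
      ext b
      rw [swap_coeff_coeff, coeff_zero]
      by_contra h
      have := hco j a b h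
      omega)
    (fun j a => by
      rw [natDegree_le_iff_coeff_eq_zero]
      intro b hb
      rw [swap_coeff_coeff]
      by_contra h
      have := hco j a b h
      omega) p hp (by
      obtain ⟨w, hw⟩ := (Ideal.mem_span_range_iff_exists_fun).1 hpm
      refine (Ideal.mem_span_range_iff_exists_fun).2 ⟨fun j => Bivariate.swap (w j), ?_⟩
      simp only [← map_mul, ← map_sum, hw, Bivariate.swap_map_C])
  have hs' := congrArg (Bivariate.swap (R := K)) hs
  simp only [Bivariate.swap_C, map_sum, map_mul, Bivariate.swap_swap_apply] at hs'
  have hlc : R.leadingCoeff ≠ 0 := leadingCoeff_ne_zero.2 hR0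
  have hmon : (R * C R.leadingCoeff⁻¹).Monic := monic_mul_leadingCoeff_inv hR0
  refine ⟨(R * C R.leadingCoeff⁻¹).map C, hmon.map _, ?_,
    fun j => C (C R.leadingCoeff⁻¹) * Bivariate.swap (u j), fun j => ?_, ?_⟩
  · refine natDegree_map_le.trans ?_
    refine natDegree_mul_le.trans ?_
    simpa using hR
  · refine natDegree_mul_le.trans ?_
    rw [natDegree_C, zero_add, natDegree_le_iff_coeff_eq_zero]
    intro b hb
    ext a
    rw [swap_coeff_coeff, coeff_zero]
    exact coeff_eq_zero_of_natDegree_lt ((hu j a).trans_lt hb)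
  · rw [Polynomial.map_mul, hs', map_C, mul_comm, Finset.mul_sum]
    simp only [mul_assoc]

theorem detach_deg {K : Type*} [Field K] {s : ℕ} (I : Ideal (Biv K))
    (g : Fin (s + 1) → Biv K) (hgI : ∀ j, g j ∈ I)
    (A : ℕ → Biv K) (hA : IsDetachingSeq g I A) :
    ∀ i, (g (Fin.last s)).natDegree ≤ i → A i ∈ I ∧ (A i).natDegree ≤ i := by
  intro i
  induction i with
  | zero =>
    intro h
    have h0 : (g (Fin.last s)).natDegree = 0 := by omega
    have := hA.2.1 (Fin.last s)
    rw [h0] at this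
    rw [this]
    exact ⟨hgI _, h0.le⟩
  | succ i ih =>
    intro h
    by_cases hj : ∃ j, (g j).natDegree = i + 1
    · obtain ⟨j, hj⟩ := hj
      have := hA.2.1 j
      rw [hj] at this
      rw [this]
      exact ⟨hgI _, hj.le⟩
    · push Not at hj
      have hne := hj (Fin.last s)
      obtain ⟨h1, h2, -⟩ := hA.2.2 (i + 1) h hj
      obtain ⟨h3, h4⟩ := ih (by omega)
      rw [Nat.add_sub_cancel] at h1 h2
      have heq : A (i + 1) = (A (i + 1) - X * A i) + X * A i := by ring
      rw [heq]
      refine ⟨add_mem h1 (I.mul_mem_left _ h3), ?_⟩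
      refine (natDegree_add_le _ _).trans (max_le (natDegree_le_of_degree_le h2.le) ?_)
      refine natDegree_mul_le.trans ?_
      rw [natDegree_X]
      omega

theorem n0_le {K : Type*} [Field K] {s : ℕ} (I : Ideal (Biv K))
    (g : Fin (s + 1) → Biv K) (hg : IsReducedGB g I) (R : Biv K) (hR : R.Monic) (hRI : R ∈ I) :
    (g 0).natDegree ≤ R.natDegree := by
  obtain ⟨h1, h2, h3, h4⟩ := hg
  obtain ⟨q, hq, hd1, hd2⟩ := h1.2 R hRI hR.ne_zero
  obtain ⟨j, rfl⟩ := (List.mem_ofFn' _ _).1 hq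
  by_cases hj : j = 0
  · subst hj; exact hd1
  · exfalso
    have hlt := h4 0 j (Fin.pos_of_ne_zero hj)
    refine h3 0 j (Ne.symm hj) (lmon (g 0)) ?_ ⟨?_, ?_⟩
    · change (g 0).leadingCoeff.leadingCoeff ≠ 0
      rw [(h2 0).leadingCoeff]; exact one_ne_zero
    · rcases hlt with h | h
      · exact h.le
      · exact h.1.le
    · have : (lmon R).2 = 0 := by simp [lmon, hR.leadingCoeff]
      omega

/-- if `F = (f_1, …, f_t)` (`t ≥ 2`) have total degree at most `d ≥ 1` and
generate an ideal `I` with finitely many common zeros over an algebraic closure of `K`,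
then `Δ(F) ≤ 16 d′⁴ + 2 d′² + 2 d′` with `d′ = max(d,3)`: every element `A i`
(`n_s ≤ i ≤ n_0`) of the detaching basis of `I` is a combination of the `f_j` with
cofactors of `y`-degree `< 16 d′⁴ + 2 d′² + 2 d′`. -/
theorem Delta_le_general {K : Type*} [Field K] {t s : ℕ} (ht : 2 ≤ t)
    (f : Fin t → Biv K) (d : ℕ) (hd : 1 ≤ d)
    (htot : ∀ i, totDeg (f i) ≤ d)
    (hfin : {p : AlgebraicClosure K × AlgebraicClosure K |
      ∀ i, aEval p.1 p.2 (f i) = 0}.Finite)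
    (I : Ideal (Biv K)) (hI : I = Ideal.span (Set.range f))
    (g : Fin (s + 1) → Biv K) (hg : IsReducedGB g I)
    (A : ℕ → Biv K) (hA : IsDetachingSeq g I A) :
    ∀ i, (g (Fin.last s)).natDegree ≤ i → i ≤ (g 0).natDegree →
      ∃ w : Fin t → Biv K,
        (∀ j, (w j).degree <
          ((16 * (max d 3) ^ 4 + 2 * (max d 3) ^ 2 + 2 * max d 3 : ℕ) : WithBot ℕ)) ∧
        A i = ∑ j, w j * f j := by
  have hgI : ∀ j, g j ∈ I := fun j => (hg.1.1 (g j) ((List.mem_ofFn' _ _).2 ⟨j, rfl⟩)).2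
  obtain ⟨R, hRm, hRd, u, hu, hRs⟩ := exists_monic hd f htot hfin
  have hRI : R ∈ I := by
    rw [hI, hRs]
    exact Ideal.mem_span_range_iff_exists_fun.2 ⟨u, rfl⟩
  have hn0 := n0_le I g hg R hRm hRI
  intro i hi hi0
  obtain ⟨hAI, hAd⟩ := detach_deg I g hgI A hA i hi
  rw [hI] at hAI
  obtain ⟨w, hw⟩ := Ideal.mem_span_range_iff_exists_fun.1 hAI
  have hfd : ∀ j, (f j).natDegree ≤ d := by
    intro j
    by_cases h0 : f j = 0
    · simp [h0]
    have h2 := (Finset.le_sup (f := fun i => i + ((f j).coeff i).natDegree)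
      (natDegree_mem_support_of_nonzero h0)).trans (htot j)
    omega
  let Q : Biv K := ∑ j, (w j /ₘ R) * f j
  have hmod : ∀ j, (w j %ₘ R).natDegree ≤ R.natDegree := fun j => natDegree_modByMonic_le _ hRm
  have hdec : R * Q = A i - ∑ j, (w j %ₘ R) * f j := by
    rw [← hw, ← Finset.sum_sub_distrib, Finset.mul_sum]
    refine Finset.sum_congr rfl fun j _ => ?_
    have := modByMonic_add_div (w j) R
    conv_rhs => rw [← this]
    rw [modByMonic_add_div]
    linear_combination (f j) * this
  have hQd : Q.natDegree ≤ d := by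
    have h1 : (R * Q).natDegree ≤ R.natDegree + d := by
      rw [hdec]
      refine (natDegree_sub_le _ _).trans (max_le (by omega) ?_)
      refine natDegree_sum_le_of_forall_le _ _ fun j _ => ?_
      refine natDegree_mul_le.trans ?_
      have := hmod j
      have := hfd j
      omega
    by_cases hQ : Q = 0
    · simp [hQ]
    rw [natDegree_mul hRm.ne_zero hQ] at h1
    omega
  refine ⟨fun j => (w j %ₘ R) + Q * u j, fun j => ?_, ?_⟩
  · refine degree_le_natDegree.trans_lt ?_
    have h1 : ((w j %ₘ R) + Q * u j).natDegree ≤ 2 * d * d + d := by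
      refine (natDegree_add_le _ _).trans (max_le ?_ ?_)
      · have := hmod j
        omega
      · refine natDegree_mul_le.trans ?_
        have := hu j
        omega
    have h2 : 2 * d * d + d < 16 * (max d 3) ^ 4 + 2 * (max d 3) ^ 2 + 2 * max d 3 := by
      have hD : d ≤ max d 3 := le_max_left _ _
      generalize max d 3 = D at hD
      have : d * d ≤ D * D := Nat.mul_le_mul hD hD
      have h4 : 0 ≤ D ^ 4 := Nat.zero_le _
      nlinarith
    exact_mod_cast h1.trans_lt h2
  · have h1 : ∑ j, ((w j %ₘ R) + Q * u j) * f j = ∑ j, (w j %ₘ R) * f j + Q * ∑ j, u j * f j := by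
      rw [Finset.mul_sum, ← Finset.sum_add_distrib]
      refine Finset.sum_congr rfl fun j _ => by ring
    rw [h1, ← hRs]
    linear_combination -hdec
end
end

section
/- Let K be a field and F = (f_1,…,f_t) in K[x,y] (t ≥ 2), of y-degree at most d_y, generating a zero-dimensional ideal I. Let D ≥ max(1, Δ(F)), let S ∈ K[x]^{(d_y+D)×tD} be the extended Sylvester matrix of F in degree D, let H be a Hermite normal form of S, and let c_1,…,c_K be the nonzero columns of H. Then there exists K′ ≤ K such that π_{d_y+D}^{-1}(c_{K′}) is monic in y, and, taking K′ to be the largest such index, the sequence π_{d_y+D}^{-1}(c_K), π_{d_y+D}^{-1}(c_{K−1}), …, π_{d_y+D}^{-1}(c_{K′}) equals the detaching basis (A_0, A_1, …, A_{n_0}) of I in degree n_0. -/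
noncomputable section

open Polynomial

variable {k : Type*} [CommRing k]

/-- The inverse of the `K[x]`-module isomorphism `π_n`: it sends the vector
`[f_{n-1}, …, f_1, f_0]ᵀ` to the polynomial `f_0 + f_1 y + … + f_{n-1} y^{n-1}`. -/
def invPi {k : Type*} [CommRing k] {n : ℕ} (v : Fin n → Polynomial k) : Biv k :=
  ∑ i : Fin n, Polynomial.C (v i) * Polynomial.X ^ (n - 1 - (i : ℕ))

/-- The extended Sylvester matrix of `(f_1, …, f_t)` in degree `D`: the block matrix
`[S_1 … S_t]`, where `S_i` is the matrix, in the bases given by `π_D` and `π_{d_y+D}`,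
of the map `w ↦ w * f_i` from polynomials of `y`-degree `< D` to polynomials of
`y`-degree `< d_y + D`. Column `c` belongs to block `c / D` and represents
`y^{D - 1 - (c % D)} * f_{c/D}`; row `r` corresponds to the coefficient of
`y^{d_y + D - 1 - r}`. -/
def sylvester {k : Type*} [CommRing k] {t : ℕ} (f : Fin t → Biv k) (dy D : ℕ) :
    Matrix (Fin (dy + D)) (Fin (t * D)) (Polynomial k) :=
  fun r c =>
    if h : (c : ℕ) / D < t then
      (Polynomial.X ^ (D - 1 - (c : ℕ) % D) * f ⟨(c : ℕ) / D, h⟩).coeff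
        (dy + D - 1 - (r : ℕ))
    else 0

/-- Column `c` of the matrix `H` is nonzero. -/
def colNZ {α : Type*} [Zero α] {n m : ℕ} (H : Matrix (Fin n) (Fin m) α)
    (c : Fin m) : Prop :=
  ∃ r, H r c ≠ 0

/-- `H` is a (column-style, lower triangular) Hermite normal form of `M` over `K[x]`:
`H = M U` for an invertible `U`; the nonzero columns of `H` come first; the row indices
of the pivots (first nonzero entries of the nonzero columns) are strictly increasing;
the pivots are monic; and in each pivot row the entries in earlier columns have
`x`-degree strictly smaller than that of the pivot. -/
def IsHermiteForm {K : Type*} [Field K] {n m : ℕ}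
    (M H : Matrix (Fin n) (Fin m) (Polynomial K)) : Prop :=
  (∃ U : Matrix (Fin m) (Fin m) (Polynomial K), IsUnit U.det ∧ H = M * U) ∧
  (∀ c c' : Fin m, c ≤ c' → colNZ H c' → colNZ H c) ∧
  ∃ piv : Fin m → Fin n,
    (∀ c, colNZ H c →
      H (piv c) c ≠ 0 ∧ (∀ r, r < piv c → H r c = 0) ∧ (H (piv c) c).Monic) ∧
    (∀ c c', c < c' → colNZ H c' → piv c < piv c') ∧
    (∀ c c', c' < c → colNZ H c → (H (piv c) c').degree < (H (piv c) c).degree)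

theorem hd_invPi_coeff {K : Type*} [Field K] {n : ℕ} (v : Fin n → Polynomial K) (r : Fin n) :
    (invPi v).coeff (n - 1 - (r : ℕ)) = v r := by
  unfold invPi
  rw [Polynomial.finsetSum_coeff, Finset.sum_eq_single r]
  · simp
  · intro b _ hb
    rw [Polynomial.coeff_C_mul_X_pow, if_neg]
    intro h
    apply hb
    ext
    have := b.2
    have := r.2
    omega
  · simp

theorem hd_invPi_coeff_ge {K : Type*} [Field K] {n : ℕ} (v : Fin n → Polynomial K) (m : ℕ)
    (hm : n ≤ m) : (invPi v).coeff m = 0 := by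
  unfold invPi
  rw [Polynomial.finsetSum_coeff]
  apply Finset.sum_eq_zero
  intro b _
  rw [Polynomial.coeff_C_mul_X_pow, if_neg]
  have := b.2
  omega

/-- the coefficient vector map -/
def hdPi (K : Type*) [Field K] (n : ℕ) : Biv K →ₗ[Polynomial K] (Fin n → Polynomial K) where
  toFun p := fun r => p.coeff (n - 1 - (r : ℕ))
  map_add' p q := by ext; simp
  map_smul' a p := by ext; simp

theorem hd_invPi_pi {K : Type*} [Field K] {n : ℕ} (p : Biv K) (hp : p.degree < (n : WithBot ℕ)) :
    invPi (hdPi K n p) = p := by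
  ext1 m
  by_cases hm : m < n
  · have h := hd_invPi_coeff (hdPi K n p) ⟨n - 1 - m, by omega⟩
    have e : n - 1 - (n - 1 - m) = m := by omega
    simpa [hdPi, e] using h
  · rw [hd_invPi_coeff_ge _ _ (by omega), Polynomial.coeff_eq_zero_of_degree_lt]
    exact lt_of_lt_of_le hp (by exact_mod_cast (not_lt.mp hm))

theorem hd_sylv_col {K : Type*} [Field K] {t : ℕ} (f : Fin t → Biv K) (dy D : ℕ)
    (hD : 1 ≤ D) (c : Fin (t * D)) : ∃ (j : Fin t) (e : ℕ), e < D ∧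
      (fun r => sylvester f dy D r c) = hdPi K (dy + D) (Polynomial.X ^ e * f j) := by
  have h : (c : ℕ) / D < t := by
    rw [Nat.div_lt_iff_lt_mul (by omega)]; exact c.2
  refine ⟨⟨_, h⟩, D - 1 - (c : ℕ) % D, by omega, ?_⟩
  ext1 r
  simp only [_root_.sylvester, dif_pos h, hdPi, LinearMap.coe_mk, AddHom.coe_mk]

theorem hd_sylv_col' {K : Type*} [Field K] {t : ℕ} (f : Fin t → Biv K) (dy D : ℕ)
    (j : Fin t) (e : ℕ) (he : e < D) : ∃ c : Fin (t * D),
      (fun r => sylvester f dy D r c) = hdPi K (dy + D) (Polynomial.X ^ e * f j) := by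
  have hlt : D - 1 - e + D * (j : ℕ) < t * D := by
    have := j.2
    calc D - 1 - e + D * (j : ℕ) < D + D * j := by omega
      _ = (j + 1) * D := by ring
      _ ≤ t * D := Nat.mul_le_mul_right _ this
  have h1 : (D - 1 - e + D * (j : ℕ)) / D = j := by
    rw [Nat.add_mul_div_left _ _ (by omega), Nat.div_eq_of_lt (by omega)]; simp
  have h2 : (D - 1 - e + D * (j : ℕ)) % D = D - 1 - e := by
    rw [Nat.add_mul_mod_self_left, Nat.mod_eq_of_lt (by omega)]
  refine ⟨⟨_, hlt⟩, ?_⟩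
  ext1 r
  have e1 : D - 1 - (D - 1 - e) = e := by omega
  simp only [_root_.sylvester, hdPi, LinearMap.coe_mk, AddHom.coe_mk, h1, h2, e1, Fin.is_lt, dif_pos]

theorem hd_mem_range {K : Type*} [Field K] {t : ℕ} (f : Fin t → Biv K) (dy D : ℕ)
    (hD : 1 ≤ D) (w : Fin t → Biv K) (hw : ∀ j, (w j).degree < (D : WithBot ℕ)) :
    ∃ u, (sylvester f dy D).mulVec u = hdPi K (dy + D) (∑ j, w j * f j) := by
  suffices h : hdPi K (dy + D) (∑ j, w j * f j) ∈
      LinearMap.range (sylvester f dy D).mulVecLin by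
    obtain ⟨u, hu⟩ := h
    exact ⟨u, by simpa using hu⟩
  rw [map_sum]
  refine Submodule.sum_mem _ fun j _ => ?_
  have e : w j * f j = ∑ i ∈ Finset.range D, (w j).coeff i • (Polynomial.X ^ i * f j) := by
    have hlt : (w j).natDegree < D := by
      by_cases h0 : w j = 0
      · rw [h0, Polynomial.natDegree_zero]; omega
      · exact (Polynomial.natDegree_lt_iff_degree_lt h0).2 (hw j)
    conv_lhs => rw [Polynomial.as_sum_range' (w j) D hlt]
    rw [Finset.sum_mul]
    refine Finset.sum_congr rfl fun i _ => ?_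
    rw [← Polynomial.C_mul_X_pow_eq_monomial, Polynomial.smul_eq_C_mul, mul_assoc]
  rw [e, map_sum]
  refine Submodule.sum_mem _ fun i hi => ?_
  rw [map_smul]
  refine Submodule.smul_mem _ _ ?_
  obtain ⟨c, hc⟩ := hd_sylv_col' f dy D j i (Finset.mem_range.1 hi)
  refine ⟨Pi.single c 1, ?_⟩
  rw [← hc]
  ext1 r
  simp [Matrix.col]

theorem hd_pi_add {K : Type*} [Field K] {n : ℕ} {ι : Type*} (s : Finset ι)
    (a : ι → Polynomial K) (v : ι → Fin n → Polynomial K) :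
    invPi (fun r => ∑ i ∈ s, a i * v i r) = ∑ i ∈ s, Polynomial.C (a i) * invPi (v i) := by
  unfold invPi
  simp only [map_sum, Finset.sum_mul, Finset.mul_sum, map_mul]
  rw [Finset.sum_comm]
  simp only [mul_assoc]

theorem hd_col_mem {K : Type*} [Field K] {t : ℕ} (f : Fin t → Biv K) (dy D : ℕ)
    (hdy : ∀ i, (f i).natDegree ≤ dy) (hD : 1 ≤ D)
    (U : Matrix (Fin (t * D)) (Fin (t * D)) (Polynomial K)) (c : Fin (t * D)) :
    invPi (fun r => (sylvester f dy D * U) r c) ∈ Ideal.span (Set.range f) := by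
  have : (fun r => (sylvester f dy D * U) r c) =
      fun r => ∑ i, U i c * sylvester f dy D r i := by
    ext1 r
    rw [Matrix.mul_apply]
    exact Finset.sum_congr rfl fun i _ => mul_comm _ _
  rw [this, hd_pi_add Finset.univ (fun i => U i c) (fun i r => sylvester f dy D r i)]
  refine Ideal.sum_mem _ fun i _ => Ideal.mul_mem_left _ _ ?_
  obtain ⟨j, e, he, h⟩ := hd_sylv_col f dy D hD i
  rw [h, hd_invPi_pi]
  · exact Ideal.mul_mem_left _ _ (Ideal.subset_span ⟨j, rfl⟩)
  · refine lt_of_le_of_lt Polynomial.degree_le_natDegree ?_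
    have h1 : (Polynomial.X ^ e * f j).natDegree ≤ e + dy := by
      refine Polynomial.natDegree_mul_le.trans ?_
      have := Polynomial.natDegree_X_pow_le (R := Polynomial K) e
      have := hdy j
      omega
    exact_mod_cast (by omega : (Polynomial.X ^ e * f j).natDegree < dy + D)

/-- Echelon structure: a nonzero vector in the column span has its first nonzero row at a pivot. -/
theorem hd_echelon {K : Type*} [Field K] {n m : ℕ} (H : Matrix (Fin n) (Fin m) (Polynomial K))
    (piv : Fin m → Fin n)
    (h1 : ∀ c, colNZ H c →
      H (piv c) c ≠ 0 ∧ (∀ r, r < piv c → H r c = 0) ∧ (H (piv c) c).Monic)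
    (h2 : ∀ c c', c < c' → colNZ H c' → piv c < piv c')
    (u : Fin m → Polynomial K) (r₀ : Fin n) (hr : H.mulVec u r₀ ≠ 0)
    (hlt : ∀ r, r < r₀ → H.mulVec u r = 0) :
    ∃ c, colNZ H c ∧ piv c = r₀ ∧ (H r₀ c).natDegree ≤ (H.mulVec u r₀).natDegree := by
  classical
  have hex : (Finset.univ.filter fun c => colNZ H c ∧ u c ≠ 0).Nonempty := by
    by_contra hne
    rw [Finset.not_nonempty_iff_eq_empty] at hne
    apply hr
    rw [Matrix.mulVec, dotProduct]
    refine Finset.sum_eq_zero fun c _ => ?_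
    by_contra hc
    have : c ∈ (Finset.univ.filter fun c => colNZ H c ∧ u c ≠ 0) := by
      simp only [Finset.mem_filter, Finset.mem_univ, true_and]
      exact ⟨⟨r₀, left_ne_zero_of_mul hc⟩, right_ne_zero_of_mul hc⟩
    rw [hne] at this
    simp at this
  set T := (Finset.univ.filter fun c => colNZ H c ∧ u c ≠ 0) with hT
  have hmem := T.min'_mem hex
  set c := T.min' hex with hc
  simp only [hT, Finset.mem_filter, Finset.mem_univ, true_and] at hmem
  obtain ⟨hcn, hcu⟩ := hmem
  have key : ∀ r, r ≤ piv c → H.mulVec u r = H r c * u c := by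
    intro r hrc
    rw [Matrix.mulVec, dotProduct]
    refine Finset.sum_eq_single c ?_ (by simp)
    intro b _ hb
    by_contra hne
    have hbn : colNZ H b := ⟨r, left_ne_zero_of_mul hne⟩
    have hbT : b ∈ T := by
      simp only [hT, Finset.mem_filter, Finset.mem_univ, true_and]
      exact ⟨hbn, right_ne_zero_of_mul hne⟩
    have hle : c ≤ b := T.min'_le b hbT
    have hcb : c < b := lt_of_le_of_ne hle (Ne.symm hb)
    exact left_ne_zero_of_mul hne ((h1 b hbn).2.1 r (lt_of_le_of_lt hrc (h2 c b hcb hbn)))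
  have hp : piv c = r₀ := by
    rcases lt_trichotomy (piv c) r₀ with h | h | h
    · have := hlt _ h
      rw [key _ le_rfl] at this
      exact absurd this (mul_ne_zero (h1 c hcn).1 hcu)
    · exact h
    · rw [key _ h.le, (h1 c hcn).2.1 _ h, zero_mul] at hr
      exact absurd rfl hr
  refine ⟨c, hcn, hp, ?_⟩
  rw [key _ hp.ge]
  refine Polynomial.natDegree_le_of_dvd (Dvd.intro _ rfl) ?_
  rw [← hp]
  exact mul_ne_zero (h1 c hcn).1 hcu

theorem hd_exists_x {K : Type*} [Field K] (I : Ideal (Biv K))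
    (hdim : FiniteDimensional K (Biv K ⧸ I)) :
    ∃ p : Polynomial K, p ≠ 0 ∧ (Polynomial.C p : Biv K) ∈ I := by
  obtain ⟨p, hp, h⟩ := IsIntegral.of_finite K (Ideal.Quotient.mk I (Polynomial.C Polynomial.X))
  refine ⟨p, hp.ne_zero, ?_⟩
  rw [← Ideal.Quotient.eq_zero_iff_mem, ← h]
  have : (algebraMap K (Biv K ⧸ I)) = (Ideal.Quotient.mk I).comp
      ((Polynomial.C : Polynomial K →+* Biv K).comp Polynomial.C) := rfl
  rw [this, ← Polynomial.hom_eval₂, ← Polynomial.hom_eval₂, Polynomial.eval₂_C_X]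

theorem hd_exists_y {K : Type*} [Field K] (I : Ideal (Biv K))
    (hdim : FiniteDimensional K (Biv K ⧸ I)) :
    ∃ p : Biv K, p.Monic ∧ p ∈ I := by
  obtain ⟨p, hp, h⟩ := IsIntegral.of_finite K (Ideal.Quotient.mk I (Polynomial.X))
  refine ⟨p.map Polynomial.C, hp.map _, ?_⟩
  rw [← Ideal.Quotient.eq_zero_iff_mem, ← h]
  have : (algebraMap K (Biv K ⧸ I)) = (Ideal.Quotient.mk I).comp
      ((Polynomial.C : Polynomial K →+* Biv K).comp Polynomial.C) := rfl
  rw [this, ← Polynomial.hom_eval₂, ← Polynomial.eval₂_map, Polynomial.eval₂_C_X]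

theorem hd_occ {K : Type*} [Field K] (p : Biv K) (hp : p ≠ 0) : occursIn p (lmon p) := by
  simp [occursIn, lmon, hp]

section
variable {K : Type*} [Field K] {s : ℕ} {I : Ideal (Biv K)} {g : Fin (s + 1) → Biv K}

theorem hd_gb (hg : IsReducedGB g I) (p : Biv K) (hp : p ∈ I) (h0 : p ≠ 0) :
    ∃ j, monDvd (lmon (g j)) (lmon p) := by
  obtain ⟨q, hq, h⟩ := hg.1.2 p hp h0
  rw [List.mem_ofFn] at hq
  obtain ⟨j, rfl⟩ := hq
  exact ⟨j, h⟩

theorem hd_g_mem (hg : IsReducedGB g I) (j) : g j ≠ 0 ∧ g j ∈ I :=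
  hg.1.1 _ (by rw [List.mem_ofFn]; exact ⟨j, rfl⟩)

theorem hd_not_dvd (hg : IsReducedGB g I) (j l) (h : j ≠ l) : ¬ monDvd (lmon (g l)) (lmon (g j)) :=
  hg.2.2.1 j l h _ (hd_occ _ (hd_g_mem hg j).1)

theorem hd_deg_le (hg : IsReducedGB g I) {j l : Fin (s + 1)} (h : j ≤ l) :
    (g l).natDegree ≤ (g j).natDegree := by
  rcases h.lt_or_eq with h | rfl
  · have := hg.2.2.2 j l h
    simp only [monLt, lmon] at this
    omega
  · rfl

theorem hd_last (hg : IsReducedGB g I) (hdim : FiniteDimensional K (Biv K ⧸ I)) :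
    (g (Fin.last s)).natDegree = 0 := by
  obtain ⟨p, hp, hpI⟩ := hd_exists_x I hdim
  obtain ⟨j, hj⟩ := hd_gb hg _ hpI (by simpa using hp)
  have := hd_deg_le hg (Fin.le_last j)
  have h1 := hj.1
  simp [lmon] at h1
  omega

theorem hd_first (hg : IsReducedGB g I) (hdim : FiniteDimensional K (Biv K ⧸ I)) :
    (g 0).Monic := by
  obtain ⟨p, hp, hpI⟩ := hd_exists_y I hdim
  obtain ⟨j, hj⟩ := hd_gb hg _ hpI hp.ne_zero
  have h2 := hj.2
  simp only [lmon, hp.leadingCoeff, Polynomial.natDegree_one, Nat.le_zero] at h2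
  by_cases h0 : j = 0
  · subst h0
    exact (Polynomial.Monic.natDegree_eq_zero (hg.2.1 0)).1 h2
  · exfalso
    refine hd_not_dvd hg 0 j (Ne.symm h0) ⟨hd_deg_le hg (Fin.zero_le j), ?_⟩
    simp [lmon, h2]

/-- main properties of the detaching sequence -/
theorem hd_A (hg : IsReducedGB g I) (hdim : FiniteDimensional K (Biv K ⧸ I))
    {A : ℕ → Biv K} (hA : IsDetachingSeq g I A) (i : ℕ) :
    A i ≠ 0 ∧ A i ∈ I ∧ (A i).natDegree = i ∧ (A i).leadingCoeff.Monic ∧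
    (∀ j, (g j).natDegree ≤ i → (A i).leadingCoeff.natDegree ≤ (g j).leadingCoeff.natDegree) ∧
    reducedBelow g i (A i) := by
  have hl := hd_last hg hdim
  induction i with
  | zero =>
    have := hA.2.1 (Fin.last s)
    rw [hl] at this
    rw [this]
    refine ⟨(hd_g_mem hg _).1, (hd_g_mem hg _).2, hl, hg.2.1 _, ?_, ?_⟩
    · intro j hj
      by_cases h : Fin.last s = j
      · rw [h]
      · have := hd_not_dvd hg (Fin.last s) j h
        simp only [monDvd, lmon] at this
        omega
    · intro m hm; omega
  | succ i ih =>
    by_cases h : ∃ l, (g l).natDegree = i + 1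
    · obtain ⟨l, h⟩ := h
      have := hA.2.1 l
      rw [h] at this
      rw [this]
      refine ⟨(hd_g_mem hg _).1, (hd_g_mem hg _).2, h, hg.2.1 _, ?_, ?_⟩
      · intro j hj
        by_cases hlj : l = j
        · rw [hlj]
        · have := hd_not_dvd hg l j hlj
          simp only [monDvd, lmon] at this
          omega
      · intro m hm hocc j
        by_cases hlj : l = j
        · subst hlj
          intro hd
          have := hd.1
          simp only [lmon] at this
          omega
        · exact hg.2.2.1 l j hlj m hocc
    · push Not at h
      obtain ⟨h1, h2, h3⟩ := hA.2.2 (i + 1) (by omega) h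
      rw [Nat.add_sub_cancel] at h1 h2
      obtain ⟨i0, i1, i2, i3, i4, i5⟩ := ih
      have hdeg : (Polynomial.X * A i).degree = ((i + 1 : ℕ) : WithBot ℕ) := by
        rw [Polynomial.degree_mul, Polynomial.degree_X, Polynomial.degree_eq_natDegree i0, i2]
        push_cast; ring
      have hlc : (A (i + 1)).leadingCoeff = (A i).leadingCoeff := by
        have := Polynomial.leadingCoeff_add_of_degree_lt (h2.trans_eq hdeg.symm)
        rw [sub_add_cancel] at this
        rw [this, Polynomial.leadingCoeff_mul, Polynomial.leadingCoeff_X, one_mul]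
      have hd' : (A (i + 1)).degree = ((i + 1 : ℕ) : WithBot ℕ) := by
        have := Polynomial.degree_add_eq_right_of_degree_lt (h2.trans_eq hdeg.symm)
        rwa [sub_add_cancel, hdeg] at this
      refine ⟨?_, ?_, Polynomial.natDegree_eq_of_degree_eq_some hd', ?_, ?_, h3⟩
      · intro h; rw [h, Polynomial.degree_zero] at hd'; exact WithBot.bot_ne_coe hd'
      · have := I.add_mem h1 (I.mul_mem_left Polynomial.X i1)
        rwa [sub_add_cancel] at this
      · rwa [hlc]
      · intro j hj
        rw [hlc]
        have := h j
        exact i4 j (by omega)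

theorem hd_A_min (hg : IsReducedGB g I) (hdim : FiniteDimensional K (Biv K ⧸ I))
    {A : ℕ → Biv K} (hA : IsDetachingSeq g I A) (p : Biv K) (hp : p ∈ I) (h0 : p ≠ 0) :
    (A p.natDegree).leadingCoeff.natDegree ≤ p.leadingCoeff.natDegree := by
  obtain ⟨j, hj⟩ := hd_gb hg p hp h0
  exact ((hd_A hg hdim hA p.natDegree).2.2.2.2.1 j hj.1).trans hj.2

theorem hd_A_red (hg : IsReducedGB g I) (hdim : FiniteDimensional K (Biv K ⧸ I))
    {A : ℕ → Biv K} (hA : IsDetachingSeq g I A) (i j : ℕ) (hj : j < i) :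
    ((A i).coeff j).degree < (A j).leadingCoeff.degree := by
  by_contra hc
  push Not at hc
  obtain ⟨a0, a1, a2, -⟩ := hd_A hg hdim hA j
  have hne : (A i).coeff j ≠ 0 := by
    intro h
    rw [h] at hc
    simp at hc
    exact a0 hc
  obtain ⟨l, hl⟩ := hd_gb hg _ a1 a0
  refine (hd_A hg hdim hA i).2.2.2.2.2 (j, ((A i).coeff j).natDegree) hj ?_ l ?_
  · simp [occursIn, hne]
  · refine ⟨hl.1.trans a2.le, hl.2.trans (Polynomial.natDegree_le_natDegree hc)⟩

theorem hd_unique (hg : IsReducedGB g I) (hdim : FiniteDimensional K (Biv K ⧸ I))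
    {A : ℕ → Biv K} (hA : IsDetachingSeq g I A) (i : ℕ) (h : Biv K) (hI : h ∈ I)
    (hdeg : h.natDegree = i) (hm : h.leadingCoeff.Monic)
    (hle : h.leadingCoeff.natDegree ≤ (A i).leadingCoeff.natDegree)
    (hred : ∀ j < i, (h.coeff j).degree < (A j).leadingCoeff.degree) : h = A i := by
  by_contra hne
  have hd0 : h - A i ≠ 0 := sub_ne_zero.2 hne
  obtain ⟨a0, a1, a2, a3, -⟩ := hd_A hg hdim hA i
  have hmin := hd_A_min hg hdim hA (h - A i) (I.sub_mem hI a1) hd0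
  have hh0 : h ≠ 0 := by rintro rfl; simp at hm
  have hmin' := hd_A_min hg hdim hA h hI hh0
  rw [hdeg] at hmin'
  have hji : (h - A i).natDegree ≤ i := by
    refine (Polynomial.natDegree_sub_le _ _).trans ?_
    simp [hdeg, a2]
  have hlt : (h - A i).leadingCoeff.degree < (A (h - A i).natDegree).leadingCoeff.degree := by
    rcases hji.lt_or_eq with hj | hj
    · rw [Polynomial.leadingCoeff, Polynomial.coeff_sub]
      exact lt_of_le_of_lt (Polynomial.degree_sub_le _ _)
        (max_lt (hred _ hj) (hd_A_red hg hdim hA i _ hj))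
    · have e : (h - A i).leadingCoeff = h.leadingCoeff - (A i).leadingCoeff := by
        rw [Polynomial.leadingCoeff, Polynomial.coeff_sub, hj]
        simp only [Polynomial.leadingCoeff, hdeg, a2]
      have e2 : h.leadingCoeff.degree = (A i).leadingCoeff.degree := by
        rw [Polynomial.degree_eq_natDegree hm.ne_zero, Polynomial.degree_eq_natDegree a3.ne_zero,
          le_antisymm hle hmin']
      rw [e, hj, ← e2]
      refine Polynomial.degree_sub_lt_left e2 hm.ne_zero ?_
      rw [hm.leadingCoeff, a3.leadingCoeff]
  have hl0 : (h - A i).leadingCoeff ≠ 0 := by simpa using hd0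
  have := Polynomial.natDegree_lt_natDegree hl0 hlt
  omega
end

/-- let `F = (f_1, …, f_t)` (`t ≥ 2`), of `y`-degree at most `d_y`,
generate a zero-dimensional ideal `I`, let `D ≥ max(1, Δ(F))`, let `S` be the extended
Sylvester matrix of `F` in degree `D` and `H` a Hermite normal form of `S`. Then, among
the nonzero columns `c_1, …, c_K` of `H`, there is a largest `K' ≤ K` with
`π⁻¹(c_{K'})` monic in `y`, and `π⁻¹(c_K), π⁻¹(c_{K-1}), …, π⁻¹(c_{K'})` equals the
detaching basis `(A_0, A_1, …, A_{n_0})` of `I` in degree `n_0` (so `K' = K - n_0`).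
Columns are 0-indexed here: the nonzero columns are those of index `< Kn`, and column
`Kn - 1 - i` gives `A i` for `0 ≤ i ≤ n_0`. -/
theorem hermite_detaching {K : Type*} [Field K] {t s : ℕ} (ht : 2 ≤ t)
    (f : Fin t → Biv K) (dy D : ℕ)
    (hdy : ∀ i, (f i).natDegree ≤ dy) (hD : 1 ≤ D)
    (I : Ideal (Biv K)) (hI : I = Ideal.span (Set.range f))
    (hdim : FiniteDimensional K (Biv K ⧸ I))
    (g : Fin (s + 1) → Biv K) (hg : IsReducedGB g I)
    (A : ℕ → Biv K) (hA : IsDetachingSeq g I A)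
    (hDelta : ∀ i, (g (Fin.last s)).natDegree ≤ i → i ≤ (g 0).natDegree →
      ∃ w : Fin t → Biv K,
        (∀ j, (w j).degree < (D : WithBot ℕ)) ∧ A i = ∑ j, w j * f j)
    (H : Matrix (Fin (dy + D)) (Fin (t * D)) (Polynomial K))
    (hH : IsHermiteForm (sylvester f dy D) H) :
    ∃ Kn, Kn ≤ t * D ∧ (∀ c : Fin (t * D), colNZ H c ↔ (c : ℕ) < Kn) ∧
      (g 0).natDegree < Kn ∧
      (∀ c : Fin (t * D), (c : ℕ) = Kn - 1 - (g 0).natDegree →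
        (invPi fun r => H r c).Monic) ∧
      (∀ c : Fin (t * D), Kn - 1 - (g 0).natDegree < (c : ℕ) → (c : ℕ) < Kn →
        ¬ (invPi fun r => H r c).Monic) ∧
      (∀ i ≤ (g 0).natDegree, ∀ c : Fin (t * D), (c : ℕ) = Kn - 1 - i →
        (invPi fun r => H r c) = A i) := by
  classical
  have hlast := hd_last hg hdim
  have hfirst := hd_first hg hdim
  obtain ⟨⟨U, hU, hHU⟩, hfst, piv, hp1, hp2, hp3⟩ := hH
  -- the columns lie in `I`
  have hcolI : ∀ c, invPi (fun r => H r c) ∈ I := by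
    intro c
    rw [hI, hHU]
    exact hd_col_mem f dy D hdy hD U c
  -- column for each i
  have hcol : ∀ i ≤ (g 0).natDegree, ∃ c, colNZ H c ∧ (piv c : ℕ) + i = dy + D - 1 ∧
      (H (piv c) c).natDegree ≤ (A i).leadingCoeff.natDegree := by
    intro i hi
    obtain ⟨w, hw, hAw⟩ := hDelta i (by omega) hi
    obtain ⟨a0, a1, a2, a3, -⟩ := hd_A hg hdim hA i
    have hin : i < dy + D := by
      by_contra hc
      have h1 : (A i).degree < ((dy + D : ℕ) : WithBot ℕ) := by
        rw [hAw]
        refine lt_of_le_of_lt (Polynomial.degree_sum_le _ _) ?_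
        rw [Finset.sup_lt_iff (WithBot.bot_lt_coe _)]
        intro j _
        by_cases hwj : w j = 0
        · simp [hwj, WithBot.bot_lt_coe]
        · have h2 := (Polynomial.natDegree_lt_iff_degree_lt hwj).2 (hw j)
          refine lt_of_le_of_lt Polynomial.degree_le_natDegree ?_
          have h3 := Polynomial.natDegree_mul_le (p := w j) (q := f j)
          have h4 := hdy j
          exact_mod_cast (by omega : (w j * f j).natDegree < dy + D)
      have := (Polynomial.natDegree_lt_iff_degree_lt a0).2 h1
      omega
    obtain ⟨u, hu⟩ := hd_mem_range f dy D hD w hw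
    rw [← hAw] at hu
    have hu' : H.mulVec (U⁻¹.mulVec u) = hdPi K (dy + D) (A i) := by
      rw [Matrix.mulVec_mulVec, hHU, Matrix.mul_assoc, Matrix.mul_nonsing_inv _ hU, Matrix.mul_one, hu]
    have hri : dy + D - 1 - i < dy + D := by omega
    have hrr : dy + D - 1 - (dy + D - 1 - i) = i := by omega
    have hval : H.mulVec (U⁻¹.mulVec u) ⟨dy + D - 1 - i, hri⟩ = (A i).leadingCoeff := by
      rw [hu']
      simp only [hdPi, LinearMap.coe_mk, AddHom.coe_mk, hrr, Polynomial.leadingCoeff, a2]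
    obtain ⟨c, hc1, hc2, hc3⟩ := hd_echelon H piv hp1 hp2 (U⁻¹.mulVec u) ⟨dy + D - 1 - i, hri⟩
      (by rw [hval]; exact a3.ne_zero)
      (by
        intro r hr
        rw [hu']
        simp only [hdPi, LinearMap.coe_mk, AddHom.coe_mk]
        apply Polynomial.coeff_eq_zero_of_natDegree_lt
        have : (r : ℕ) < dy + D - 1 - i := hr
        omega)
    refine ⟨c, hc1, ?_, ?_⟩
    · rw [hc2]; simp only; omega
    · rw [hc2, ← hval]; exact hc3
  haveI : Nonempty (Fin (t * D)) := ⟨⟨0, Nat.mul_pos (by omega) (by omega)⟩⟩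
  choose! cc hcc1 hcc2 hcc3 using hcol
  -- indices
  have hmono : ∀ c c', colNZ H c → colNZ H c' → (piv c < piv c' ↔ c < c') := by
    intro c c' h h'
    constructor
    · intro hlt
      by_contra hn
      rcases (not_lt.1 hn).lt_or_eq with h2 | h2
      · exact absurd (hp2 _ _ h2 h) (not_lt.2 hlt.le)
      · rw [h2] at hlt; exact lt_irrefl _ hlt
    · intro hlt; exact hp2 _ _ hlt h'
  have hnz : ∀ c, colNZ H c ↔ c ≤ cc 0 := by
    intro c
    constructor
    · intro h
      by_contra hn
      have h1 := hp2 _ _ (not_le.1 hn) h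
      have h2 := hcc2 0 (Nat.zero_le _)
      have h3 : (piv (cc 0) : ℕ) < piv c := h1
      have := (piv c).2
      omega
    · intro h; exact hfst _ _ h (hcc1 0 (Nat.zero_le _))
  have hidx : ∀ i ≤ (g 0).natDegree, (cc i : ℕ) + i = cc 0 := by
    intro i
    induction i with
    | zero => intro _; rfl
    | succ i ih =>
      intro hi
      have ih := ih (by omega)
      have e1 := hcc2 i (by omega)
      have e2 := hcc2 (i + 1) hi
      have hlt : cc (i + 1) < cc i := by
        rw [← hmono _ _ (hcc1 _ hi) (hcc1 i (by omega))]
        show (piv (cc (i + 1)) : ℕ) < piv (cc i)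
        omega
      have hlt' : (cc (i + 1) : ℕ) < cc i := hlt
      by_contra hne
      have hb : (cc (i + 1) : ℕ) + 1 < cc i := by omega
      have hbt := (cc i).2
      have hle : (⟨cc (i + 1) + 1, by omega⟩ : Fin (t * D)) ≤ cc 0 := by
        show (cc (i + 1) : ℕ) + 1 ≤ cc 0
        omega
      have q1 := hp2 (cc (i + 1)) ⟨cc (i + 1) + 1, by omega⟩
        (by show (cc (i + 1) : ℕ) < cc (i + 1) + 1; omega) ((hnz _).2 hle)
      have q2 := hp2 ⟨cc (i + 1) + 1, by omega⟩ (cc i) hb (hcc1 i (by omega))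
      rw [Fin.lt_def] at q1 q2
      omega
  -- shape of the columns
  have hshape : ∀ i ≤ (g 0).natDegree, (invPi fun r => H r (cc i)).natDegree = i ∧
      (invPi fun r => H r (cc i)).leadingCoeff = H (piv (cc i)) (cc i) := by
    intro i hi
    obtain ⟨b1, b2, b3⟩ := hp1 _ (hcc1 i hi)
    have e := hcc2 i hi
    have hcoef := hd_invPi_coeff (fun r => H r (cc i)) (piv (cc i))
    have hrr : dy + D - 1 - (piv (cc i) : ℕ) = i := by omega
    rw [hrr] at hcoef
    have hnd : (invPi fun r => H r (cc i)).natDegree = i := by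
      apply le_antisymm
      · rw [Polynomial.natDegree_le_iff_coeff_eq_zero]
        intro N hN
        by_cases hNn : dy + D ≤ N
        · exact hd_invPi_coeff_ge _ _ hNn
        · have := hd_invPi_coeff (fun r => H r (cc i)) ⟨dy + D - 1 - N, by omega⟩
          have e2 : dy + D - 1 - (dy + D - 1 - N) = N := by omega
          simp only [e2] at this
          rw [this]
          apply b2
          rw [Fin.lt_def]
          simp only
          omega
      · apply Polynomial.le_natDegree_of_ne_zero
        rw [hcoef]; exact b1
    refine ⟨hnd, ?_⟩
    rw [Polynomial.leadingCoeff, hnd, hcoef]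
  have hdegeq : ∀ i ≤ (g 0).natDegree,
      (H (piv (cc i)) (cc i)).degree = (A i).leadingCoeff.degree := by
    intro i hi
    obtain ⟨s1, s2⟩ := hshape i hi
    obtain ⟨b1, b2, b3⟩ := hp1 _ (hcc1 i hi)
    obtain ⟨a0, a1, a2, a3, -⟩ := hd_A hg hdim hA i
    have hm := hd_A_min hg hdim hA _ (hcolI (cc i))
      (by rw [← Polynomial.leadingCoeff_ne_zero, s2]; exact b1)
    rw [s1, s2] at hm
    rw [Polynomial.degree_eq_natDegree b1, Polynomial.degree_eq_natDegree a3.ne_zero,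
      le_antisymm hm (hcc3 i hi)]
  have hmain : ∀ i ≤ (g 0).natDegree, (invPi fun r => H r (cc i)) = A i := by
    intro i hi
    obtain ⟨s1, s2⟩ := hshape i hi
    obtain ⟨b1, b2, b3⟩ := hp1 _ (hcc1 i hi)
    refine hd_unique hg hdim hA i _ (hcolI _) s1 (by rw [s2]; exact b3)
      (by rw [s2]; exact hcc3 i hi) ?_
    intro j hj
    have hj' : j ≤ (g 0).natDegree := by omega
    have hcoef := hd_invPi_coeff (fun r => H r (cc i)) (piv (cc j))
    have e := hcc2 j hj'
    have hrr : dy + D - 1 - (piv (cc j) : ℕ) = j := by omega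
    rw [hrr] at hcoef
    rw [hcoef, ← hdegeq j hj']
    refine hp3 _ _ ?_ (hcc1 j hj')
    have := hidx i hi
    have := hidx j hj'
    rw [Fin.lt_def]
    omega
  have hfin : ∀ i ≤ (g 0).natDegree, ∀ c : Fin (t * D), (c : ℕ) = (cc 0 : ℕ) + 1 - 1 - i →
      (invPi fun r => H r c) = A i := by
    intro i hi c hc
    have := hidx i hi
    have : c = cc i := by ext; omega
    rw [this]
    exact hmain i hi
  have hn0 := hidx _ le_rfl
  refine ⟨(cc 0 : ℕ) + 1, (cc 0).2, ?_, by omega, ?_, ?_, hfin⟩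
  · intro c
    rw [hnz, Fin.le_def]; omega
  · intro c hc
    rw [hfin _ le_rfl c hc, hA.2.1 0]
    exact hfirst
  · intro c hc1 hc2 hmon
    have hi : (cc 0 : ℕ) - c < (g 0).natDegree := by omega
    rw [hfin ((cc 0 : ℕ) - c) hi.le c (by omega)] at hmon
    obtain ⟨a0, a1, a2, -⟩ := hd_A hg hdim hA ((cc 0 : ℕ) - c)
    obtain ⟨l, hl⟩ := hd_gb hg _ a1 a0
    have h1 := hl.1
    have h2 := hl.2
    simp only [lmon, hmon.leadingCoeff, Polynomial.natDegree_one, Nat.le_zero, a2] at h1 h2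
    have hl0 : (0 : Fin (s + 1)) ≠ l := by
      rintro rfl
      omega
    refine hd_not_dvd hg 0 l hl0 ⟨?_, ?_⟩
    · simp only [lmon]; omega
    · simp only [lmon, h2]; omega
end
end

section
/- Let K be a field, f_1,…,f_t ∈ K[x,y] (t ≥ 2) of y-degree at most d_y generating a zero-dimensional ideal, let k be a positive integer, A = K[x]/⟨x^k⟩, and let D ≥ max(1, Δ(f_1,…,f_t,x^k)). Let B ∈ A^{(d_y+D)×tD} be the Howell normal form of S mod x^k, where S is the extended Sylvester matrix of (f_1,…,f_t) in degree D, and let B_lift ∈ K[x]^{(d_y+D)×tD} be its canonical lift. Let h_1,…,h_L be the nonzero columns of B_lift, let r be the row index of the first nonzero entry of h_L, set L″ = L + d_y + D − r, and for i = L+1,…,L″ let h_i ∈ K[x]^{d_y+D} be the column vector with entry x^k at index r+i−L and zeros elsewhere. Then there exists L′ ≤ L such that π_{d_y+D}^{-1}(h_{L′}) is monic in y, and, taking L′ to be the largest such index, the sequence π_{d_y+D}^{-1}(h_{L″}), …, π_{d_y+D}^{-1}(h_{L′}) equals the detaching basis of the ideal ⟨f_1,…,f_t,x^k⟩ in degree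 equal to the largest y-degree of its reduced minimal lexicographic Gröbner basis. -/
noncomputable section

open Polynomial

variable {k : Type*} [CommRing k]

/-- `H` is the Howell normal form of `M` over `A = K[x]/⟨x^k⟩` (column operations):
`H = M U` for an invertible `U`; the nonzero columns of `H` come first; the row indices
of the pivots (first nonzero entries of the nonzero columns) are strictly increasing;
each pivot is (the class of) a power of `x`; for each pivot, the entries of the pivot
row lying in earlier columns have canonical lifts of `x`-degree strictly smaller than
the exponent of the pivot; and every `A`-linear combination of the columns whose
entries vanish up to (and including) the pivot row of a nonzero column `c0` is an
`A`-linear combination of the columns of index `> c0`. -/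
def IsHowellForm {K : Type*} [Field K] {n m : ℕ} (k : ℕ)
    (M H : Matrix (Fin n) (Fin m)
      (Polynomial K ⧸ Ideal.span {(Polynomial.X : Polynomial K) ^ k})) : Prop :=
  (∃ U, IsUnit U.det ∧ H = M * U) ∧
  (∀ c c' : Fin m, c ≤ c' → colNZ H c' → colNZ H c) ∧
  ∃ (piv : Fin m → Fin n) (pexp : Fin m → ℕ),
    (∀ c, colNZ H c →
      H (piv c) c ≠ 0 ∧ (∀ r, r < piv c → H r c = 0) ∧
      H (piv c) c =
        Ideal.Quotient.mk (Ideal.span {(Polynomial.X : Polynomial K) ^ k})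
          (Polynomial.X ^ pexp c)) ∧
    (∀ c c', c < c' → colNZ H c' → piv c < piv c') ∧
    (∀ c c', c' < c → colNZ H c →
      ∃ u : Polynomial K,
        Ideal.Quotient.mk (Ideal.span {(Polynomial.X : Polynomial K) ^ k}) u =
          H (piv c) c' ∧
        u.degree < (pexp c : WithBot ℕ)) ∧
    (∀ c0, colNZ H c0 →
      ∀ v : Fin m → Polynomial K ⧸ Ideal.span {(Polynomial.X : Polynomial K) ^ k},
        (∀ r : Fin n, (r : ℕ) ≤ (piv c0 : ℕ) → H.mulVec v r = 0) →
        ∃ v', H.mulVec v' = H.mulVec v ∧ ∀ c : Fin m, (c : ℕ) ≤ (c0 : ℕ) → v' c = 0)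

/-- The extended family of columns `h_1, …, h_{L''}` of the paper (1-indexed): for
`1 ≤ i ≤ L`, `h_i` is column `i - 1` of `B`; for `i > L`, `h_i` is the vector with
`x^k` at (1-based) index `r + i - L` and zeros elsewhere. The value returned is
`π⁻¹(h_i) ∈ K[x][y]`. -/
def extSeq {K : Type*} [Field K] {n m : ℕ}
    (B : Matrix (Fin n) (Fin m) (Polynomial K)) (L r k : ℕ) (i : ℕ) : Biv K :=
  if h : i ≤ L ∧ i - 1 < m then invPi (fun rr => B rr ⟨i - 1, h.2⟩)
  else invPi (fun rr : Fin n =>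
    if (rr : ℕ) + 1 = r + i - L then Polynomial.X ^ k else 0)

theorem lex_coeff_of {K : Type*} [Field K] {f : Biv K} {i : ℕ} (h1 : f.natDegree ≤ i)
    (h2 : f.coeff i ≠ 0) : f.natDegree = i := le_antisymm h1 (le_natDegree_of_ne_zero h2)

theorem occ_lead {K : Type*} [Field K] {f : Biv K} (h : f ≠ 0) : occursIn f (lmon f) := by
  unfold occursIn lmon
  show (f.leadingCoeff).leadingCoeff ≠ 0
  simpa using h

theorem det_facts {K : Type*} [Field K] {σ : ℕ} {J : Ideal (Biv K)} {Γ : Fin (σ + 1) → Biv K}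
    (hΓ : IsReducedGB Γ J) {A : ℕ → Biv K} (hA : IsDetachingSeq Γ J A)
    (h0 : (Γ (Fin.last σ)).natDegree = 0) (i : ℕ) :
    A i ∈ J ∧ (A i).natDegree = i ∧ (A i).leadingCoeff.Monic ∧
    ∀ j, (Γ j).natDegree ≤ i → (A i).leadingCoeff.natDegree ≤ (Γ j).leadingCoeff.natDegree := by
  obtain ⟨⟨hG1, hG2⟩, hmon, hred, hord⟩ := hΓ
  obtain ⟨hA1, hA2, hA3⟩ := hA
  have key : ∀ l, A ((Γ l).natDegree) ∈ J ∧ (A ((Γ l).natDegree)).natDegree = (Γ l).natDegree ∧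
      (A ((Γ l).natDegree)).leadingCoeff.Monic ∧
      ∀ j, (Γ j).natDegree ≤ (Γ l).natDegree →
        (A ((Γ l).natDegree)).leadingCoeff.natDegree ≤ (Γ j).leadingCoeff.natDegree := by
    intro l
    have hm : Γ l ∈ List.ofFn Γ := List.mem_ofFn.mpr ⟨l, rfl⟩
    rw [hA2 l]
    refine ⟨(hG1 _ hm).2, rfl, hmon l, ?_⟩
    intro j hj
    by_cases hlj : l = j
    · rw [hlj]
    · have := hred l j hlj _ (occ_lead (hG1 _ hm).1)
      by_contra hcon
      exact this ⟨hj, by simp only [lmon]; omega⟩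
  induction i with
  | zero => 
    have := key (Fin.last σ)
    rwa [h0] at this
  | succ i ih =>
    by_cases hex : ∃ l, (Γ l).natDegree = i + 1
    · obtain ⟨l, hl⟩ := hex
      have := key l
      rwa [hl] at this
    · push Not at hex
      obtain ⟨q1, q2, q3⟩ := hA3 (i+1) (by omega) hex
      rw [Nat.add_sub_cancel] at q1 q2
      obtain ⟨i1, i2, i3, i4⟩ := ih
      have hne : A i ≠ 0 := by
        rintro h; rw [h] at i3; simp at i3
      have hmem : A (i+1) ∈ J := by
        have := J.add_mem q1 (J.mul_mem_left X i1)
        simpa using this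
      have hdX : (X * A i).natDegree = i + 1 := by
        rw [natDegree_X_mul hne, i2]
      have hXne : X * A i ≠ 0 := mul_ne_zero X_ne_zero hne
      have hdeq : (X * A i).degree = ((i+1 : ℕ) : WithBot ℕ) := by
        rw [degree_eq_natDegree hXne, hdX]
      have hd : (A (i+1)).degree = ((i+1 : ℕ) : WithBot ℕ) := by
        have : A (i+1) = (A (i+1) - X * A i) + X * A i := by ring
        rw [this, degree_add_eq_right_of_degree_lt (by rw [hdeq]; exact q2), hdeq]
      have hnd : (A (i+1)).natDegree = i + 1 := natDegree_eq_of_degree_eq_some hd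
      have hlc : (A (i+1)).leadingCoeff = (A i).leadingCoeff := by
        have h1 := coeff_eq_zero_of_degree_lt q2
        rw [coeff_sub, coeff_X_mul, sub_eq_zero] at h1
        rw [leadingCoeff, leadingCoeff, hnd, i2, h1]
      refine ⟨hmem, hnd, by rwa [hlc], ?_⟩
      intro j hj
      rw [hlc]
      exact i4 j (by have := hex j; omega)

theorem det_min {K : Type*} [Field K] {σ : ℕ} {J : Ideal (Biv K)} {Γ : Fin (σ + 1) → Biv K}
    (hΓ : IsReducedGB Γ J) {A : ℕ → Biv K} (hA : IsDetachingSeq Γ J A)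
    (h0 : (Γ (Fin.last σ)).natDegree = 0) {i : ℕ} {f : Biv K} (hf : f ∈ J)
    (hd : f.natDegree ≤ i) (hc : f.coeff i ≠ 0) :
    (A i).leadingCoeff.natDegree ≤ (f.coeff i).natDegree := by
  have hi := lex_coeff_of hd hc
  obtain ⟨g, hg, h1, h2⟩ := hΓ.1.2 f hf (by rintro rfl; simp at hc)
  rw [List.mem_ofFn] at hg
  obtain ⟨j, rfl⟩ := hg
  simp only [lmon] at h1 h2
  rw [← coeff_natDegree (p := f), hi] at h2
  exact ((det_facts hΓ hA h0 i).2.2.2 j (by omega)).trans h2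

theorem det_red {K : Type*} [Field K] {σ : ℕ} {J : Ideal (Biv K)} {Γ : Fin (σ + 1) → Biv K}
    (hΓ : IsReducedGB Γ J) {A : ℕ → Biv K} (hA : IsDetachingSeq Γ J A)
    (h0 : (Γ (Fin.last σ)).natDegree = 0) {i l : ℕ} (hl : l < i) :
    ((A i).coeff l).degree < ((A l).leadingCoeff.natDegree : WithBot ℕ) := by
  rw [degree_lt_iff_coeff_zero]
  intro q hq
  by_contra hne
  obtain ⟨f1, f2, f3, f4⟩ := det_facts hΓ hA h0 l
  have hAl : A l ≠ 0 := by rintro h; rw [h] at f3; simp at f3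
  obtain ⟨g, hg, h1, h2⟩ := hΓ.1.2 (A l) f1 hAl
  rw [List.mem_ofFn] at hg
  obtain ⟨j, rfl⟩ := hg
  simp only [lmon] at h1 h2
  rw [f2] at h1
  have hred : ∀ j, ¬ monDvd (lmon (Γ j)) (l, q) := by
    by_cases hex : ∃ m, (Γ m).natDegree = i
    · obtain ⟨m, hm⟩ := hex
      have hAm := hA.2.1 m
      rw [hm] at hAm
      rw [hAm] at hne
      intro j hj
      by_cases hmj : m = j
      · subst hmj
        have := hj.1
        simp only [lmon] at this
        omega
      · exact hΓ.2.2.1 m j hmj (l, q) hne hj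
    · push Not at hex
      exact (hA.2.2 i (by omega) hex).2.2 (l, q) hl hne
  exact hred j ⟨h1, h2.trans hq⟩

theorem det_uniq {K : Type*} [Field K] {σ : ℕ} {J : Ideal (Biv K)} {Γ : Fin (σ + 1) → Biv K}
    (hΓ : IsReducedGB Γ J) {A : ℕ → Biv K} (hA : IsDetachingSeq Γ J A)
    (h0 : (Γ (Fin.last σ)).natDegree = 0) {i : ℕ} {f : Biv K} (hf : f ∈ J)
    (hd : f.natDegree ≤ i) (hc : f.coeff i = (A i).leadingCoeff)
    (hr : ∀ l < i, (f.coeff l).degree < ((A l).leadingCoeff.natDegree : WithBot ℕ)) :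
    f = A i := by
  by_contra hne
  obtain ⟨f1, f2, f3, f4⟩ := det_facts hΓ hA h0 i
  have hg : f - A i ≠ 0 := sub_ne_zero.mpr hne
  have hgd : (f - A i).natDegree ≤ i :=
    (natDegree_sub_le _ _).trans (max_le hd f2.le)
  have hlt : (f - A i).natDegree < i := by
    refine lt_of_le_of_ne hgd ?_
    intro h
    apply hg
    rw [← leadingCoeff_eq_zero, leadingCoeff, h, coeff_sub, hc, leadingCoeff, f2, sub_self]
  have hm := det_min hΓ hA h0 (J.sub_mem hf f1) le_rfl
    (by rw [coeff_natDegree]; exact leadingCoeff_ne_zero.mpr hg)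
  set l := (f - A i).natDegree with hl
  have h1 : ((f - A i).coeff l).degree < ((A l).leadingCoeff.natDegree : WithBot ℕ) := by
    rw [coeff_sub]
    exact lt_of_le_of_lt (degree_sub_le _ _) (max_lt (hr l hlt) (det_red hΓ hA h0 hlt))
  rw [degree_eq_natDegree (by rw [hl, coeff_natDegree]; exact leadingCoeff_ne_zero.mpr hg)] at h1
  have := Nat.cast_lt.mp h1
  omega

theorem det_lead {K : Type*} [Field K] {σ : ℕ} {J : Ideal (Biv K)} {Γ : Fin (σ + 1) → Biv K}
    (hΓ : IsReducedGB Γ J) {A : ℕ → Biv K} (hA : IsDetachingSeq Γ J A)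
    (h0 : (Γ (Fin.last σ)).natDegree = 0) {k : ℕ}
    (hk : C ((X : Polynomial K) ^ k) ∈ J) (i : ℕ) :
    (A i).leadingCoeff = X ^ (A i).leadingCoeff.natDegree ∧
      (A i).leadingCoeff.natDegree ≤ k := by
  obtain ⟨f1, f2, f3, f4⟩ := det_facts hΓ hA h0 i
  set a := (A i).leadingCoeff with ha
  have hdvd : a ∣ (X : Polynomial K) ^ k := by
    rw [← modByMonic_eq_zero_iff_dvd f3]
    by_contra hne
    set q := (X : Polynomial K) ^ k /ₘ a
    have hmd := modByMonic_add_div ((X : Polynomial K) ^ k) a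
    set f : Biv K := X ^ i * C ((X : Polynomial K) ^ k) - C q * A i with hf
    have hfJ : f ∈ J := J.sub_mem (J.mul_mem_left _ hk) (J.mul_mem_left _ f1)
    have hfc : f.coeff i = (X : Polynomial K) ^ k %ₘ a := by
      have : (A i).coeff i = a := by rw [ha, leadingCoeff, f2]
      rw [hf, coeff_sub, coeff_mul_C, coeff_C_mul, this, coeff_X_pow, if_pos rfl]
      rw [one_mul, sub_eq_iff_eq_add, mul_comm q a]
      exact hmd.symm
    have hfd : f.natDegree ≤ i := by
      refine (natDegree_sub_le _ _).trans (max_le ?_ ?_)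
      · refine (natDegree_mul_C_le _ _).trans (natDegree_X_pow_le _)
      · exact (natDegree_C_mul_le _ _).trans f2.le
    have h1 := det_min hΓ hA h0 hfJ hfd (by rw [hfc]; exact hne)
    rw [hfc, ← ha] at h1
    have h2 := degree_modByMonic_lt ((X : Polynomial K) ^ k) f3
    rw [degree_eq_natDegree hne, degree_eq_natDegree f3.ne_zero] at h2
    have := Nat.cast_lt.mp h2
    omega
  obtain ⟨m, hm, has⟩ := (dvd_prime_pow prime_X k).mp hdvd
  have := eq_of_monic_of_associated f3 (monic_X_pow m) has
  rw [this]
  simpa using hm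

theorem invPi_coeff {K : Type*} [Field K] {n : ℕ} (v : Fin n → Polynomial K) (m : ℕ) :
    (invPi v).coeff m = if h : m < n then v ⟨n - 1 - m, by omega⟩ else 0 := by
  unfold invPi
  rw [finsetSum_coeff]
  simp only [coeff_C_mul, coeff_X_pow]
  split_ifs with h
  · rw [Finset.sum_eq_single (⟨n - 1 - m, by omega⟩ : Fin n)]
    · have : m = n - 1 - (n - 1 - m) := by omega
      simp [← this]
    · intro b _ hb
      have hb' : (b : ℕ) ≠ n - 1 - m := fun h => hb (Fin.ext h)
      rw [if_neg (by have := b.2; omega), mul_zero]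
    · simp
  · apply Finset.sum_eq_zero
    intro b _
    rw [if_neg (by have := b.2; omega), mul_zero]

theorem invPi_coeff_row {K : Type*} [Field K] {n : ℕ} (v : Fin n → Polynomial K) (r : Fin n) :
    (invPi v).coeff (n - 1 - r) = v r := by
  have := r.2
  rw [invPi_coeff, dif_pos (by omega)]
  congr 1
  ext
  simp only
  omega

theorem syl_col {K : Type*} [Field K] {t : ℕ} (f : Fin t → Biv K) (dy D : ℕ) (hD : 1 ≤ D)
    (hdy : ∀ i, (f i).natDegree ≤ dy) (c : Fin (t * D)) :
    invPi (fun r => _root_.sylvester f dy D r c) = X ^ (D - 1 - (c : ℕ) % D) * f c.divNat := by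
  have hlt : (c : ℕ) / D < t := c.divNat.2
  ext1 m
  rw [invPi_coeff]
  split_ifs with h
  · simp only [_root_.sylvester]
    rw [dif_pos hlt]
    congr 1
    omega
  · symm
    apply coeff_eq_zero_of_natDegree_lt
    refine lt_of_le_of_lt natDegree_mul_le ?_
    rw [natDegree_X_pow]
    have := hdy c.divNat
    omega

theorem syl_mul {K : Type*} [Field K] {t : ℕ} (f : Fin t → Biv K) (dy D : ℕ) (hD : 1 ≤ D)
    (w : Fin t → Biv K) (hw : ∀ j, (w j).degree < (D : WithBot ℕ)) (r : Fin (dy + D)) :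
    (∑ j, w j * f j).coeff (dy + D - 1 - r) =
      ∑ c, _root_.sylvester f dy D r c * (w c.divNat).coeff (D - 1 - (c : ℕ) % D) := by
  have hexp : ∀ j, w j = ∑ e : Fin D, C ((w j).coeff (D - 1 - e)) * X ^ (D - 1 - (e : ℕ)) := by
    intro j
    ext1 m
    have := invPi_coeff (fun e : Fin D => (w j).coeff (D - 1 - e)) m
    unfold invPi at this
    rw [this]
    split_ifs with h
    · simp only
      congr 1
      omega
    · apply coeff_eq_zero_of_degree_lt
      exact lt_of_lt_of_le (hw j) (by exact_mod_cast not_lt.mp h)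
  rw [← finProdFinEquiv.sum_comp, Fintype.sum_prod_type, finsetSum_coeff]
  apply Finset.sum_congr rfl
  intro j _
  conv_lhs => rw [hexp j]
  rw [Finset.sum_mul, finsetSum_coeff]
  apply Finset.sum_congr rfl
  intro e _
  have h1 : (finProdFinEquiv (j, e)).divNat = j := by
    have := finProdFinEquiv.symm_apply_apply (j, e)
    exact congrArg Prod.fst this
  have h2 : ((finProdFinEquiv (j, e) : Fin (t * D)) : ℕ) % D = e := by
    have := finProdFinEquiv.symm_apply_apply (j, e)
    exact congrArg (fun x => (x.2 : ℕ)) this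
  have h3 : ((finProdFinEquiv (j, e) : Fin (t * D)) : ℕ) / D = j := by
    exact congrArg (fun x : Fin t => (x : ℕ)) h1
  rw [h1, h2]
  unfold _root_.sylvester
  rw [dif_pos (by rw [h3]; exact j.2)]
  simp only [h2, h3, Fin.eta]
  rw [mul_assoc, coeff_C_mul, mul_comm]

theorem howell_pivot {R : Type*} [CommRing R] {n m : ℕ} (H : Matrix (Fin n) (Fin m) R)
    (piv : Fin m → Fin n)
    (h1 : ∀ c, colNZ H c → H (piv c) c ≠ 0 ∧ (∀ r, r < piv c → H r c = 0))
    (h2 : ∀ c c', c < c' → colNZ H c' → piv c < piv c')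
    (h4 : ∀ c0, colNZ H c0 → ∀ v : Fin m → R,
        (∀ r : Fin n, (r : ℕ) ≤ (piv c0 : ℕ) → H.mulVec v r = 0) →
        ∃ v', H.mulVec v' = H.mulVec v ∧ ∀ c : Fin m, (c : ℕ) ≤ (c0 : ℕ) → v' c = 0)
    (v : Fin m → R) (ρ : Fin n) (hz : ∀ r < ρ, H.mulVec v r = 0) (hnz : H.mulVec v ρ ≠ 0) :
    ∃ c, colNZ H c ∧ piv c = ρ ∧ H ρ c ∣ H.mulVec v ρ := by
  classical
  have hv : ∃ v', H.mulVec v' = H.mulVec v ∧ ∀ c, colNZ H c → piv c < ρ → v' c = 0 := by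
    set T := Finset.univ.filter (fun c => colNZ H c ∧ piv c < ρ) with hT
    by_cases hne : T.Nonempty
    · have hmem := T.max'_mem hne
      have hmem := (Finset.mem_filter.mp hmem)
      obtain ⟨v', e1, e2⟩ := h4 _ hmem.2.1 v (by
        intro r hr
        exact hz r (lt_of_le_of_lt (Fin.le_def.mpr hr) hmem.2.2))
      refine ⟨v', e1, fun c hc hp => e2 c ?_⟩
      exact Fin.le_def.mp (T.le_max' c (by rw [hT, Finset.mem_filter]; exact ⟨Finset.mem_univ _, hc, hp⟩))
    · refine ⟨v, rfl, fun c hc hp => ?_⟩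
      exact absurd ⟨c, by rw [hT, Finset.mem_filter]; exact ⟨Finset.mem_univ _, hc, hp⟩⟩ hne
  obtain ⟨v', e1, e2⟩ := hv
  rw [← e1] at hnz ⊢
  have hterm : ∀ c, H ρ c * v' c ≠ 0 → colNZ H c ∧ piv c = ρ := by
    intro c hc
    have hcn : colNZ H c := ⟨ρ, left_ne_zero_of_mul hc⟩
    refine ⟨hcn, ?_⟩
    rcases lt_trichotomy (piv c) ρ with h | h | h
    · exact absurd (e2 c hcn h) (right_ne_zero_of_mul hc)
    · exact h
    · exact absurd ((h1 c hcn).2 ρ h) (left_ne_zero_of_mul hc)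
  obtain ⟨c, -, hc⟩ := Finset.exists_ne_zero_of_sum_ne_zero (s := Finset.univ)
    (f := fun c => H ρ c * v' c) hnz
  obtain ⟨hcn, hp⟩ := hterm c hc
  refine ⟨c, hcn, hp, ?_⟩
  show H ρ c ∣ ∑ c', H ρ c' * v' c'
  apply Finset.dvd_sum
  intro c' _
  by_cases hz' : H ρ c' * v' c' = 0
  · rw [hz']; exact dvd_zero _
  · obtain ⟨hcn', hp'⟩ := hterm c' hz'
    have : c' = c := by
      rcases lt_trichotomy c' c with h | h | h
      · exact absurd (h2 _ _ h hcn) (by rw [hp, hp']; exact lt_irrefl _)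
      · exact h
      · exact absurd (h2 _ _ h hcn') (by rw [hp, hp']; exact lt_irrefl _)
    rw [this]
    exact dvd_mul_right _ _

theorem mk_eq_of_deg {K : Type*} [Field K] {k : ℕ} {p q : Polynomial K}
    (hp : p.degree < (k : WithBot ℕ)) (hq : q.degree < (k : WithBot ℕ))
    (h : Ideal.Quotient.mk (Ideal.span {(X : Polynomial K) ^ k}) p =
      Ideal.Quotient.mk (Ideal.span {(X : Polynomial K) ^ k}) q) : p = q := by
  rw [Ideal.Quotient.eq, Ideal.mem_span_singleton] at h
  rw [← sub_eq_zero]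
  apply eq_zero_of_dvd_of_degree_lt h
  rw [degree_X_pow]
  exact lt_of_le_of_lt (degree_sub_le _ _) (max_lt hp hq)

theorem mem_of_coeff {K : Type*} [Field K] {J : Ideal (Biv K)} {k : ℕ}
    (hk : C ((X : Polynomial K) ^ k) ∈ J) (p : Biv K)
    (h : ∀ i, (X : Polynomial K) ^ k ∣ p.coeff i) : p ∈ J := by
  obtain ⟨q, rfl⟩ := (C_dvd_iff_dvd_coeff _ _).mpr h
  exact J.mul_mem_right _ hk

theorem exists_monic_s9 {K : Type*} [Field K] {I : Ideal (Biv K)}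
    (hdim : FiniteDimensional K (Biv K ⧸ I)) : ∃ p ∈ I, p.Monic := by
  have : Module.Finite K (Biv K ⧸ I) := hdim
  obtain ⟨p, hp, h⟩ := IsIntegral.of_finite K (Ideal.Quotient.mk I (X : Biv K))
  refine ⟨p.map C, ?_, hp.map _⟩
  rw [← Ideal.Quotient.eq_zero_iff_mem, ← h]
  have h2 := aeval_algHom_apply (Ideal.Quotient.mkₐ K I) (X : Biv K) p
  rw [aeval_X_left_eq_map] at h2
  exact h2.symm

theorem howell_col_mem {K : Type*} [Field K] {t : ℕ} (f : Fin t → Biv K) (dy D k : ℕ) (hD : 1 ≤ D)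
    (hdy : ∀ i, (f i).natDegree ≤ dy) {J : Ideal (Biv K)} (hf : ∀ i, f i ∈ J)
    (hk : C ((X : Polynomial K) ^ k) ∈ J)
    (B : Matrix (Fin (dy + D)) (Fin (t * D)) (Polynomial K))
    (U : Matrix (Fin (t * D)) (Fin (t * D)) 
      (Polynomial K ⧸ Ideal.span {(Polynomial.X : Polynomial K) ^ k}))
    (hU : B.map (Ideal.Quotient.mk (Ideal.span {(Polynomial.X : Polynomial K) ^ k})) =
      (_root_.sylvester f dy D).map
        (Ideal.Quotient.mk (Ideal.span {(Polynomial.X : Polynomial K) ^ k})) * U)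
    (c : Fin (t * D)) : invPi (fun r => B r c) ∈ J := by
  choose u hu using fun c' => Ideal.Quotient.mk_surjective (U c' c)
  have h1 : invPi (fun r => B r c) - ∑ c', C (u c') * invPi (fun r => _root_.sylvester f dy D r c') ∈ J := by
    apply mem_of_coeff hk
    intro i
    rw [coeff_sub, finsetSum_coeff]
    simp only [coeff_C_mul, invPi_coeff]
    split_ifs with h
    · have := congrFun (congrFun hU ⟨dy + D - 1 - i, by omega⟩) c
      rw [Matrix.map_apply, Matrix.mul_apply] at this
      simp only [Matrix.map_apply, ← hu, ← map_mul, ← map_sum] at this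
      rw [Ideal.Quotient.eq, Ideal.mem_span_singleton] at this
      convert this using 3
      rw [mul_comm]
    · simp
  have h2 : ∑ c', C (u c') * invPi (fun r => _root_.sylvester f dy D r c') ∈ J := by
    apply J.sum_mem
    intro c' _
    rw [syl_col f dy D hD hdy]
    exact J.mul_mem_left _ (J.mul_mem_left _ (hf _))
  simpa using J.add_mem h1 h2

/-- let `f_1, …, f_t ∈ K[x,y]` (`t ≥ 2`), of `y`-degree at most `d_y`,
generate a zero-dimensional ideal, let `k ≥ 1`, `D ≥ max(1, Δ(f_1,…,f_t,x^k))`, let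
`B` be the Howell normal form of `S mod x^k` (with `S` the extended Sylvester matrix of
`(f_1,…,f_t)` in degree `D`), `B_lift` its canonical lift, `h_1, …, h_L` the nonzero
columns of `B_lift`, `r` the (1-based) pivot row index of `h_L`, `L'' = L + d_y + D - r`,
and `h_{L+1}, …, h_{L''}` the extra columns with entry `x^k` at index `r + i - L`. Then
there is a largest `L' ≤ L` with `π⁻¹(h_{L'})` monic in `y`, and
`π⁻¹(h_{L''}), …, π⁻¹(h_{L'})` is the detaching basis `(A_0, …, A_{ν_0})` of
`J = ⟨f_1, …, f_t, x^k⟩` in degree `ν_0` (the largest `y`-degree of its reduced minimal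
lexicographic Gröbner basis). -/
theorem howell_detaching {K : Type*} [Field K] {t σ : ℕ} (ht : 2 ≤ t)
    (f : Fin t → Biv K) (dy D k L r : ℕ)
    (hk : 1 ≤ k) (hD : 1 ≤ D)
    (hdy : ∀ i, (f i).natDegree ≤ dy)
    (hdim : FiniteDimensional K (Biv K ⧸ Ideal.span (Set.range f)))
    (J : Ideal (Biv K))
    (hJ : J = Ideal.span
      (Set.range f ∪ {Polynomial.C ((Polynomial.X : Polynomial K) ^ k)}))
    (Γ : Fin (σ + 1) → Biv K) (hΓ : IsReducedGB Γ J)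
    (A : ℕ → Biv K) (hA : IsDetachingSeq Γ J A)
    (hDelta : ∀ i, (Γ (Fin.last σ)).natDegree ≤ i → i ≤ (Γ 0).natDegree →
      ∃ (w : Fin t → Biv K) (w0 : Biv K),
        (∀ j, (w j).degree < (D : WithBot ℕ)) ∧ w0.degree < (D : WithBot ℕ) ∧
        A i = (∑ j, w j * f j) +
          w0 * Polynomial.C ((Polynomial.X : Polynomial K) ^ k))
    (Blift : Matrix (Fin (dy + D)) (Fin (t * D)) (Polynomial K))
    (hlift : ∀ rr c, (Blift rr c).degree < (k : WithBot ℕ))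
    (hHow : IsHowellForm k
      ((sylvester f dy D).map
        (Ideal.Quotient.mk (Ideal.span {(Polynomial.X : Polynomial K) ^ k})))
      (Blift.map
        (Ideal.Quotient.mk (Ideal.span {(Polynomial.X : Polynomial K) ^ k}))))
    (hL : L ≤ t * D ∧ ∀ c : Fin (t * D), colNZ Blift c ↔ (c : ℕ) < L)
    (hr : 1 ≤ r ∧ r ≤ dy + D ∧
      ∀ c : Fin (t * D), (c : ℕ) + 1 = L →
        (∀ rr : Fin (dy + D), (rr : ℕ) + 1 < r → Blift rr c = 0) ∧
        (∀ rr : Fin (dy + D), (rr : ℕ) + 1 = r → Blift rr c ≠ 0)) :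
    ∃ L', 1 ≤ L' ∧ L' ≤ L ∧
      (extSeq Blift L r k L').Monic ∧
      (∀ j, L' < j → j ≤ L → ¬ (extSeq Blift L r k j).Monic) ∧
      (L + (dy + D) - r) - L' = (Γ 0).natDegree ∧
      (∀ i ≤ (Γ 0).natDegree,
        extSeq Blift L r k ((L + (dy + D) - r) - i) = A i) := by
  obtain ⟨⟨U', hUdet', hU'⟩, -, piv, pexp, hp1, hp2, hp3, hp4⟩ := hHow
  set φ := Ideal.Quotient.mk (Ideal.span {(Polynomial.X : Polynomial K) ^ k}) with hφ
  obtain ⟨U, hUdet, hU⟩ : ∃ U : Matrix (Fin (t * D)) (Fin (t * D))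
      (Polynomial K ⧸ Ideal.span {(Polynomial.X : Polynomial K) ^ k}),
      IsUnit U.det ∧ Blift.map φ = (_root_.sylvester f dy D).map φ * U := ⟨U', hUdet', hU'⟩
  have hfJ : ∀ i, f i ∈ J := fun i => by
    rw [hJ]; exact Ideal.subset_span (Or.inl ⟨i, rfl⟩)
  have hkJ : C ((X : Polynomial K) ^ k) ∈ J := by
    rw [hJ]; exact Ideal.subset_span (Or.inr rfl)
  -- smallest degree is 0
  have h0 : (Γ (Fin.last σ)).natDegree = 0 := by
    obtain ⟨g, hg, h1, h2⟩ := hΓ.1.2 _ hkJ (by simp)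
    rw [List.mem_ofFn] at hg
    obtain ⟨j, rfl⟩ := hg
    simp only [lmon, natDegree_C] at h1
    rcases eq_or_lt_of_le (Fin.le_last j) with h | h
    · rw [← h]; omega
    · have := hΓ.2.2.2 _ _ h
      simp only [monLt, lmon] at this
      omega
  have hfacts := det_facts hΓ hA h0
  have hlead := det_lead hΓ hA h0 hkJ
  set e : ℕ → ℕ := fun i => (A i).leadingCoeff.natDegree with he
  have hcoefA : ∀ i, (A i).coeff i = X ^ e i := by
    intro i
    have := (hlead i).1
    rw [leadingCoeff, (hfacts i).2.1] at this
    rw [this, he]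
    simp only [leadingCoeff, (hfacts i).2.1]
  set N := (Γ 0).natDegree with hN
  have hAN : A N = Γ 0 := hA.2.1 0
  -- leading exponents
  have hepos : ∀ i, e i = 0 → N ≤ i := by
    intro i hi
    by_contra hlt
    obtain ⟨g, hg, h1, h2⟩ := hΓ.1.2 (A i) (hfacts i).1
      (by intro h; have := (hfacts i).2.2.1; rw [h] at this; simp at this)
    rw [List.mem_ofFn] at hg
    obtain ⟨j, rfl⟩ := hg
    simp only [lmon] at h1 h2
    rw [(hfacts i).2.1] at h1
    have h2' : (Γ j).leadingCoeff.natDegree = 0 := by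
      simp only [he] at hi; omega
    have hj : (0 : Fin (σ+1)) ≠ j := by
      rintro rfl; omega
    refine hΓ.2.2.1 0 j hj _ (occ_lead ?_) ⟨?_, ?_⟩
    · exact (hΓ.1.1 _ (List.mem_ofFn.mpr ⟨0, rfl⟩)).1
    · simp only [lmon]; omega
    · simp only [lmon]; omega
  have heN : e N = 0 := by
    obtain ⟨p, hpI, hpm⟩ := exists_monic_s9 hdim
    have hpJ : p ∈ J := by
      rw [hJ]; exact Ideal.span_mono Set.subset_union_left hpI
    have h1 := det_min hΓ hA h0 hpJ le_rfl (by rw [coeff_natDegree, hpm]; simp)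
    rw [coeff_natDegree, hpm, natDegree_one] at h1
    have h2 : e p.natDegree = 0 := by simp only [he]; omega
    have h3 := hepos _ h2
    obtain ⟨g, hg, h4, h5⟩ := hΓ.1.2 p hpJ hpm.ne_zero
    rw [List.mem_ofFn] at hg
    obtain ⟨j, rfl⟩ := hg
    simp only [lmon] at h4 h5
    rw [hpm, natDegree_one] at h5
    have hjN : (Γ j).natDegree ≤ N := by
      rcases eq_or_lt_of_le (Fin.zero_le j) with h | h
      · rw [hN, h]
      · have := hΓ.2.2.2 _ _ h
        simp only [monLt, lmon] at this
        omega
    have := (hfacts N).2.2.2 j hjN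
    simp only [he]; omega
  -- columns
  have hzero : ∀ rr c, φ (Blift rr c) = 0 → Blift rr c = 0 := by
    intro rr c h
    exact mk_eq_of_deg (hlift rr c) (by simp) (by rw [map_zero]; exact h)
  have hcolNZ : ∀ c, colNZ (Blift.map φ) c ↔ (c : ℕ) < L := by
    intro c
    rw [← hL.2 c]
    constructor
    · rintro ⟨rr, h⟩
      refine ⟨rr, fun h' => h ?_⟩
      rw [Matrix.map_apply, h', map_zero]
    · rintro ⟨rr, h⟩
      exact ⟨rr, fun h' => h (hzero rr c h')⟩
  have hpexp : ∀ c : Fin (t * D), (c : ℕ) < L → pexp c < k := by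
    intro c hc
    obtain ⟨q1, q2, q3⟩ := hp1 c ((hcolNZ c).mpr hc)
    by_contra hcon
    apply q1
    rw [q3, Ideal.Quotient.eq_zero_iff_mem, Ideal.mem_span_singleton]
    exact pow_dvd_pow _ (by omega)
  have hpivval : ∀ c : Fin (t * D), (c : ℕ) < L → Blift (piv c) c = X ^ pexp c := by
    intro c hc
    refine mk_eq_of_deg (hlift _ _) ?_ (hp1 c ((hcolNZ c).mpr hc)).2.2
    rw [degree_X_pow]
    exact_mod_cast hpexp c hc
  have hpivz : ∀ c : Fin (t * D), (c : ℕ) < L → ∀ rr, rr < piv c → Blift rr c = 0 := by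
    intro c hc rr hrr
    exact hzero _ _ ((hp1 c ((hcolNZ c).mpr hc)).2.1 rr hrr)
  have hpivlow : ∀ c c' : Fin (t * D), c' < c → (c : ℕ) < L →
      (Blift (piv c) c').degree < (pexp c : WithBot ℕ) := by
    intro c c' hcc hc
    obtain ⟨u, hu1, hu2⟩ := hp3 c c' hcc ((hcolNZ c).mpr hc)
    have : u = Blift (piv c) c' := by
      refine mk_eq_of_deg (hu2.trans ?_) (hlift _ _) hu1
      exact_mod_cast hpexp c hc
    rwa [← this]
  have hmono : ∀ c c' : Fin (t * D), c < c' → (c' : ℕ) < L → piv c < piv c' :=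
    fun c c' h h' => hp2 c c' h ((hcolNZ c').mpr h')
  set P : Fin (t * D) → Biv K := fun c => invPi (fun rr => Blift rr c) with hP
  have hPJ : ∀ c, P c ∈ J := fun c => howell_col_mem f dy D k hD hdy hfJ hkJ Blift U hU c
  have hPdeg : ∀ c : Fin (t * D), (c : ℕ) < L →
      (P c).natDegree ≤ dy + D - 1 - (piv c : ℕ) := by
    intro c hc
    rw [natDegree_le_iff_coeff_eq_zero]
    intro m hm
    simp only [hP]
    rw [invPi_coeff]
    split_ifs with h
    · apply hpivz c hc
      rw [Fin.lt_def]
      simp only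
      omega
    · rfl
  have hPco : ∀ c : Fin (t * D), (c : ℕ) < L →
      (P c).coeff (dy + D - 1 - (piv c : ℕ)) = X ^ pexp c := by
    intro c hc
    simp only [hP]
    rw [invPi_coeff_row]
    exact hpivval c hc
  -- e bounded by pivot exponents
  have hele : ∀ c : Fin (t * D), (c : ℕ) < L → ∀ i, dy + D - 1 - (piv c : ℕ) ≤ i →
      e i ≤ pexp c := by
    intro c hc i hi
    have hm : X ^ (i - (dy + D - 1 - (piv c : ℕ))) * P c ∈ J := J.mul_mem_left _ (hPJ c)
    have hco : (X ^ (i - (dy + D - 1 - (piv c : ℕ))) * P c).coeff i = X ^ pexp c := by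
      rw [coeff_X_pow_mul', if_pos (by omega), ← hPco c hc]
      congr 1
      omega
    have := det_min hΓ hA h0 hm (i := i) (by
      refine natDegree_mul_le.trans ?_
      rw [natDegree_X_pow]
      have := hPdeg c hc
      omega) (by rw [hco]; simp)
    rw [hco, natDegree_X_pow] at this
    exact this
  -- A i is in the column span
  have hNlt : N < dy + D := by
    obtain ⟨w, w0, hw, hw0, hAi⟩ := hDelta N (by omega) le_rfl
    have hd : (A N).degree < ((dy + D : ℕ) : WithBot ℕ) := by
      rw [hAi]
      have hz : (0 : ℕ) ≤ dy := Nat.zero_le _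
      refine lt_of_le_of_lt (degree_add_le _ _) (max_lt ?_ ?_)
      · refine lt_of_le_of_lt (degree_sum_le _ _) ?_
        rw [Finset.sup_lt_iff (by exact WithBot.bot_lt_coe _)]
        intro j _
        by_cases hwj : w j = 0
        · rw [hwj, zero_mul, degree_zero]; exact WithBot.bot_lt_coe _
        · refine lt_of_le_of_lt degree_le_natDegree ?_
          have h1 := (natDegree_lt_iff_degree_lt hwj).mpr (hw j)
          have h2 := hdy j
          have h3 : (w j * f j).natDegree ≤ _ := natDegree_mul_le
          have : (w j * f j).natDegree < dy + D := by omega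
          exact_mod_cast this
      · by_cases hwj : w0 = 0
        · rw [hwj, zero_mul, degree_zero]; exact WithBot.bot_lt_coe _
        · refine lt_of_le_of_lt degree_le_natDegree ?_
          have h1 := (natDegree_lt_iff_degree_lt hwj).mpr hw0
          have h3 := natDegree_mul_C_le w0 ((X : Polynomial K) ^ k)
          have : (w0 * C ((X : Polynomial K) ^ k)).natDegree < dy + D := by omega
          exact_mod_cast this
    have hne : A N ≠ 0 := by
      intro h; have := (hfacts N).2.2.1; rw [h] at this; simp at this
    have := (natDegree_lt_iff_degree_lt hne).mpr hd
    rwa [(hfacts N).2.1] at this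
  have hspan : ∀ i ≤ N, ∃ v, ∀ rr : Fin (dy + D),
      (Blift.map φ).mulVec v rr = φ ((A i).coeff (dy + D - 1 - (rr : ℕ))) := by
    intro i hi
    obtain ⟨w, w0, hw, hw0, hAi⟩ := hDelta i (by omega) hi
    set u : Fin (t * D) → Polynomial K ⧸ Ideal.span {(Polynomial.X : Polynomial K) ^ k} :=
      fun c => φ ((w c.divNat).coeff (D - 1 - (c : ℕ) % D)) with hu
    refine ⟨(U⁻¹).mulVec u, fun rr => ?_⟩
    rw [Matrix.mulVec_mulVec, hU, Matrix.mul_assoc, Matrix.mul_nonsing_inv _ hUdet, Matrix.mul_one]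
    rw [hAi, coeff_add, syl_mul f dy D hD w hw, map_add, coeff_mul_C]
    have : φ (w0.coeff (dy + D - 1 - ↑rr) * X ^ k) = 0 := by
      rw [Ideal.Quotient.eq_zero_iff_mem, Ideal.mem_span_singleton]
      exact dvd_mul_left _ _
    rw [this, add_zero, map_sum]
    simp only [Matrix.mulVec, dotProduct, Matrix.map_apply, hu, map_mul]
  have hpivex : ∀ i (hi : i ≤ N), e i < k → ∃ c : Fin (t * D), (c : ℕ) < L ∧
      (piv c : ℕ) = dy + D - 1 - i ∧ pexp c = e i := by
    intro i hi hek
    obtain ⟨v, hv⟩ := hspan i hi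
    set ρ : Fin (dy + D) := ⟨dy + D - 1 - i, by omega⟩ with hρ
    have hρi : dy + D - 1 - (ρ : ℕ) = i := by simp only [hρ]; omega
    have hvρ : (Blift.map φ).mulVec v ρ = φ (X ^ e i) := by
      rw [hv, hρi, hcoefA]
    obtain ⟨c, hc1, hc2, hc3⟩ := howell_pivot (Blift.map φ) piv
      (fun c hc => ⟨(hp1 c hc).1, (hp1 c hc).2.1⟩) hp2 hp4 v ρ (by
        intro rr hrr
        rw [hv, coeff_eq_zero_of_natDegree_lt, map_zero]
        rw [(hfacts i).2.1]
        have := Fin.lt_def.mp hrr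
        simp only [hρ] at this
        omega) (by
        rw [hvρ]
        intro h
        rw [Ideal.Quotient.eq_zero_iff_mem, Ideal.mem_span_singleton] at h
        have := (pow_dvd_pow_iff (X_ne_zero) (not_isUnit_X (R := K))).mp h
        omega)
    have hcL := (hcolNZ c).mp hc1
    refine ⟨c, hcL, by rw [hc2], ?_⟩
    apply le_antisymm
    · rw [hvρ] at hc3
      have hval : (Blift.map φ) ρ c = φ (X ^ pexp c) := by
        rw [← hc2]; exact (hp1 c hc1).2.2
      rw [hval] at hc3
      obtain ⟨q, hq⟩ := hc3
      obtain ⟨q, rfl⟩ := Ideal.Quotient.mk_surjective q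
      rw [← hφ, ← map_mul, Ideal.Quotient.eq, Ideal.mem_span_singleton] at hq
      by_contra hcon
      have h1 : (X : Polynomial K) ^ (e i + 1) ∣ X ^ e i - X ^ pexp c * q :=
        (pow_dvd_pow _ (by omega)).trans hq
      have h2 : (X : Polynomial K) ^ (e i + 1) ∣ X ^ pexp c * q :=
        Dvd.dvd.mul_right (pow_dvd_pow _ (by omega)) _
      have h3 := (dvd_sub_left h2).mp h1
      have := (pow_dvd_pow_iff (X_ne_zero) (not_isUnit_X (R := K))).mp h3
      omega
    · apply hele c hcL
      rw [hc2, hρi]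
  obtain ⟨cN, hcN, hcN1, hcN2⟩ := hpivex N le_rfl (by omega)
  have hL1 : 1 ≤ L := by omega
  set cL : Fin (t * D) := ⟨L - 1, by omega⟩ with hcL
  have hcLL : (cL : ℕ) < L := by simp only [hcL]; omega
  have hpivL : (piv cL : ℕ) + 1 = r := by
    obtain ⟨hr1, hr2, hr3⟩ := hr
    obtain ⟨g1, g2⟩ := hr3 cL (by simp only [hcL]; omega)
    have hpc := (piv cL).2
    rcases lt_trichotomy ((piv cL : ℕ) + 1) r with h | h | h
    · have := g1 (piv cL) h
      rw [hpivval cL hcLL] at this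
      simp at this
    · exact h
    · exact absurd (hpivz cL hcLL ⟨r - 1, by omega⟩ (by rw [Fin.lt_def]; simp only; omega))
        (g2 _ (by simp only; omega))
  obtain ⟨hr1, hr2, -⟩ := hr
  obtain ⟨i0, hi0⟩ : ∃ i0, i0 + r = dy + D := ⟨dy + D - r, by omega⟩
  have hidx : L + (dy + D) - r = L + i0 := by omega
  have hpmono : ∀ c c' : Fin (t * D), (c : ℕ) < L → (c' : ℕ) < L → (piv c : ℕ) < piv c' → c < c' := by
    intro c c' h h' hlt
    by_contra hcon
    rcases eq_or_lt_of_le (not_lt.mp hcon) with h1 | h1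
    · rw [h1] at hlt; omega
    · have := Fin.lt_def.mp (hmono _ _ h1 h); omega
  have hlow : ∀ i ≤ N, e i < k → i0 ≤ i := by
    intro i hi hek
    obtain ⟨c, c1, c2, c3⟩ := hpivex i hi hek
    by_contra hcon
    have := Fin.lt_def.mp (hpmono cL c hcLL c1 (by omega))
    simp only [hcL] at this
    omega
  have hi0N : i0 ≤ N := hlow N le_rfl (by omega)
  have hhigh : ∀ i, i0 ≤ i → e i < k := by
    intro i hi
    exact lt_of_le_of_lt (hele cL hcLL i (by omega)) (hpexp cL hcLL)
  have hcol : ∀ d, i0 + d ≤ N → ∃ c : Fin (t * D), (c : ℕ) + 1 + d = L ∧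
      (piv c : ℕ) = dy + D - 1 - (i0 + d) ∧ pexp c = e (i0 + d) := by
    intro d
    induction d with
    | zero =>
      intro hd
      obtain ⟨c, c1, c2, c3⟩ := hpivex i0 hi0N (hhigh i0 le_rfl)
      refine ⟨c, ?_, c2, c3⟩
      by_contra hcon
      have := Fin.lt_def.mp (hmono c cL (by rw [Fin.lt_def]; simp only [hcL]; omega) hcLL)
      omega
    | succ d ih =>
      intro hd
      obtain ⟨b, b1, b2, b3⟩ := ih (by omega)
      obtain ⟨c, c1, c2, c3⟩ := hpivex (i0 + (d + 1)) hd (hhigh _ (by omega))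
      refine ⟨c, ?_, c2, c3⟩
      have h1 := Fin.lt_def.mp (hpmono c b c1 (by omega) (by omega))
      by_contra hcon
      have hb := b.2
      set m : Fin (t * D) := ⟨c + 1, by omega⟩ with hm
      have h2 := Fin.lt_def.mp (hmono c m (by rw [Fin.lt_def]; simp only [hm]; omega)
        (by simp only [hm]; omega))
      have h3 := Fin.lt_def.mp (hmono m b (by rw [Fin.lt_def]; simp only [hm]; omega) (by omega))
      omega
  have hmain : ∀ i ≤ N, extSeq Blift L r k (L + i0 - i) = A i := by
    intro i hi
    by_cases hii : i0 ≤ i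
    · obtain ⟨c, c1, c2, c3⟩ := hcol (i - i0) (by omega)
      have hii' : i0 + (i - i0) = i := by omega
      rw [hii'] at c2 c3
      have hext : extSeq Blift L r k (L + i0 - i) = P c := by
        unfold extSeq
        rw [dif_pos ⟨by omega, by have := c.2; omega⟩]
        simp only [hP]
        congr 1
        funext rr
        congr 1
        ext
        simp only
        omega
      rw [hext]
      have hdi : dy + D - 1 - (piv c : ℕ) = i := by omega
      refine det_uniq hΓ hA h0 (hPJ c) (by have := hPdeg c (by omega); omega) ?_ ?_
      · have := hPco c (by omega)
        rw [hdi] at this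
        rw [this, c3, (hlead i).1]
      · intro l hl
        by_cases hl0 : i0 ≤ l
        · obtain ⟨b, b1, b2, b3⟩ := hcol (l - i0) (by omega)
          have hll' : i0 + (l - i0) = l := by omega
          rw [hll'] at b2 b3
          have := hpivlow b c (by rw [Fin.lt_def]; omega) (by omega)
          rw [b3] at this
          have h2 := invPi_coeff_row (fun rr => Blift rr c) (piv b)
          rw [show dy + D - 1 - (piv b : ℕ) = l by omega] at h2
          simp only [hP]
          rw [h2]
          exact this
        · have hek : e l = k := by
            have := (hlead l).2
            by_contra hne
            exact hl0 (hlow l (by omega) (lt_of_le_of_ne this hne))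
          have hek' : (A l).leadingCoeff.natDegree = k := hek
          rw [hek']
          simp only [hP]
          rw [invPi_coeff]
          split_ifs with h
          · exact hlift _ _
          · rw [degree_zero]; exact WithBot.bot_lt_coe _
    · have hek : e i = k := by
        have := (hlead i).2
        by_contra hne
        exact hii (hlow i (by omega) (lt_of_le_of_ne this hne))
      have hext : extSeq Blift L r k (L + i0 - i) = X ^ i * C ((X : Polynomial K) ^ k) := by
        unfold extSeq
        rw [dif_neg (by omega)]
        ext1 m
        rw [invPi_coeff, coeff_mul_C, coeff_X_pow]
        have hiff : m < dy + D → (dy + D - 1 - m + 1 = r + (L + i0 - i) - L ↔ m = i) := by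
          intro h; constructor <;> intro h' <;> omega
        by_cases hm : m < dy + D
        · rw [dif_pos hm]
          simp only [hiff hm]
          split_ifs <;> simp
        · rw [dif_neg hm, if_neg (by omega), zero_mul]
      rw [hext]
      refine det_uniq hΓ hA h0 (J.mul_mem_left _ hkJ)
        ((natDegree_mul_C_le _ _).trans (natDegree_X_pow_le _)) ?_ ?_
      · rw [coeff_mul_C, coeff_X_pow, if_pos rfl, one_mul, (hlead i).1]
        congr 1
        exact hek.symm
      · intro l hl
        rw [coeff_mul_C, coeff_X_pow, if_neg (by omega), zero_mul, degree_zero]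
        exact WithBot.bot_lt_coe _
  have hLi : N - i0 + 1 ≤ L := by
    obtain ⟨c, c1, -, -⟩ := hcol (N - i0) (by omega)
    omega
  rw [hidx]
  refine ⟨L + i0 - N, by omega, by omega, ?_, ?_, by omega, hmain⟩
  · rw [hmain N le_rfl, Monic, (hlead N).1]
    show X ^ e N = 1
    rw [heN, pow_zero]
  · intro j hj1 hj2 hmonic
    have hj : j = L + i0 - (L + i0 - j) := by omega
    rw [hj, hmain _ (by omega)] at hmonic
    have : e (L + i0 - j) = 0 := by
      simp only [he]
      rw [hmonic, natDegree_one]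
    have := hepos _ this
    omega
end
end
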